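/- Let η_{ν,m}(x) := 2^{νn}(1 + 2^ν|x|)^{−m}. Let p, q ∈ P^log(ℝ^n) and u a variable exponent with 1 < p^- ≤ p(x) ≤ u(x) ≤ sup u < ∞ for a.e. x, and 1 < q^- ≤ q^+ < ∞. Let c_∞(1/p) be the global log-Hölder decay constant of 1/p, i.e. a constant with |1/p(x) − 1/p_∞| ≤ c_∞(1/p)/log(e+|x|) for all x. Then for every m > n(1 + c_∞(1/p)) there exists c > 0 such that for all sequences (f_ν)_{ν∈ℕ_0} of measurable functions on ℝ^n one has ‖(∑_{ν=0}^∞ |(η_{ν,m} ∗ f_ν)(·)|^{q(·)})^{1/q(·)}‖_{M^{u(·)}_{p(·)}(ℝ^n)} ≤ c ‖(∑_{ν=0}^∞ |f_ν(·)|^{q(·)})^{1/q(·)}‖_{M^{u(·)}_{p(·)}(ℝ^n)}. -/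

import Mathlib

open MeasureTheory ENNReal Real
open scoped FourierTransform

noncomputable section

/-- Euclidean space `ℝ^n`. -/
abbrev Rn (n : ℕ) : Type := EuclideanSpace ℝ (Fin n)

variable {n : ℕ}

/-- The function `φ_t(s)` used in the semimodular of variable exponent Lebesgue spaces:
`φ_t(s) = s^t` for `t < ∞`, while `φ_∞(s) = 0` for `s ≤ 1` and `= ∞` for `s > 1`. -/
def phiVE (t : ℝ≥0∞) (s : ℝ≥0∞) : ℝ≥0∞ :=
  if t = ∞ then (if s ≤ 1 then 0 else ∞) else s ^ t.toReal

/-- The semimodular `ρ_p` of variable exponent Lebesgue spaces. -/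
def modularVE (p : Rn n → ℝ≥0∞) (g : Rn n → ℝ≥0∞) : ℝ≥0∞ :=
  ∫⁻ x, phiVE (p x) (g x)

/-- The variable exponent Lebesgue quasi-norm `‖·‖_{L^{p(·)}(ℝ^n)}`, applied to the
(pointwise) absolute value of a function, i.e. to `[0,∞]`-valued functions.
(For `p⁻ ≥ 1` this is the usual Luxemburg norm; for general `p` it agrees with the
definition via `‖f‖ = ‖|f|^t‖_{L^{p/t}}^{1/t}`.) -/
def vLpNorm (p : Rn n → ℝ≥0∞) (g : Rn n → ℝ≥0∞) : ℝ≥0∞ :=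
  sInf {lam : ℝ≥0∞ | modularVE p (fun x => g x / lam) ≤ 1}

/-- A variable exponent: a measurable function `p : ℝ^n → (0,∞]` with `p⁻ = ess inf p > 0`. -/
def IsVarExp (p : Rn n → ℝ≥0∞) : Prop :=
  Measurable p ∧ (∀ x, 0 < p x) ∧ 0 < essInf p (volume : Measure (Rn n))

/-- Local log-Hölder continuity of `g : ℝ^n → ℝ`. -/
def LocLogHolder (g : Rn n → ℝ) : Prop :=
  ∃ c > 0, ∀ x y : Rn n, |g x - g y| ≤ c / Real.log (Real.exp 1 + (dist x y)⁻¹)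

/-- Log-Hölder decay of `g` at infinity, with limit value `gInf` and constant `c`. -/
def LogDecay (g : Rn n → ℝ) (gInf c : ℝ) : Prop :=
  ∀ x : Rn n, |g x - gInf| ≤ c / Real.log (Real.exp 1 + ‖x‖)

/-- `p ∈ P^log(ℝ^n)`, with prescribed limit value `pinvInf = 1/p_∞` of `1/p` at infinity. -/
def IsPLogWith (p : Rn n → ℝ≥0∞) (pinvInf : ℝ) : Prop :=
  IsVarExp p ∧ LocLogHolder (fun x => (p x)⁻¹.toReal) ∧
    ∃ c > 0, LogDecay (fun x => (p x)⁻¹.toReal) pinvInf c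

/-- `p ∈ P^log(ℝ^n)`. -/
def IsPLog (p : Rn n → ℝ≥0∞) : Prop := ∃ pinvInf : ℝ, IsPLogWith p pinvInf

/-- The Morrey quasi-norm `‖·‖_{M^{u(·)}_{p(·)}(ℝ^n)}` of a `[0,∞]`-valued function:
`sup_{x, r>0} r^{n(1/u(x) - 1/p(x))} ‖f‖_{L^{p(·)}(B_r(x))}`. -/
def morreyNorm (p u : Rn n → ℝ≥0∞) (g : Rn n → ℝ≥0∞) : ℝ≥0∞ :=
  ⨆ (x : Rn n) (r : ℝ) (_ : 0 < r),
    ENNReal.ofReal (r ^ ((n : ℝ) * ((u x)⁻¹.toReal - (p x)⁻¹.toReal))) *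
      vLpNorm p ((Metric.ball x r).indicator g)

/-- The `ℓ^q` (quasi-)norm of a sequence in `[0,∞]`, with the usual modification for `q = ∞`. -/
def lqNorm (q : ℝ≥0∞) (a : ℕ → ℝ≥0∞) : ℝ≥0∞ :=
  if q = ∞ then ⨆ ν, a ν else (∑' ν, a ν ^ q.toReal) ^ (1 / q.toReal)

/-- The vector-valued Morrey quasi-norm `‖(f_ν)_ν‖_{M^{u(·)}_{p(·)}(ℓ^{q(·)})}`. -/
def morreySeqNorm (p u q : Rn n → ℝ≥0∞) (f : ℕ → Rn n → ℝ≥0∞) : ℝ≥0∞ :=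
  morreyNorm p u (fun x => lqNorm (q x) (fun ν => f ν x))

/-- The kernel `η_{ν,m}(x) = 2^{νn} (1 + 2^ν |x|)^{-m}`. -/
def etaK (ν : ℕ) (m : ℝ) (x : Rn n) : ℝ≥0∞ :=
  ENNReal.ofReal ((2 : ℝ) ^ (ν * n) * (1 + 2 ^ ν * ‖x‖) ^ (-m))

/-- Convolution of `[0,∞]`-valued functions. -/
def lconv (f g : Rn n → ℝ≥0∞) (x : Rn n) : ℝ≥0∞ := ∫⁻ y, f (x - y) * g y

/-- The constant `c_{p,u} = max(0, sup_x (1/p(x) - 1/u(x)) - 1/p_∞)`. -/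
def cpu (p u : Rn n → ℝ≥0∞) (pinvInf : ℝ) : ℝ :=
  max 0 ((⨆ x : Rn n, ((p x)⁻¹.toReal - (u x)⁻¹.toReal)) - pinvInf)

/-!
Write `A_ν f` for the average of `f` over the cells of side `2^{-ν}` of a dyadic grid. For `ℓ¹` the
`L^{p(·)}` estimate rests on the bound of `(∑ a_ν)^p` by `p ∑ a_ν (∑_{μ ≤ ν} a_μ)^{p-1}`, applied to
`a_ν = A_ν f_ν`. Since `A_ν` is self-adjoint, it can be moved onto the power `p - 1`. There the
exponent can be frozen on cells, because by log-Hölder continuity changing it costs only a bounded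
factor and an integrable error, and Jensen's inequality applies. Young's inequality then absorbs the
left-hand side. Duality turns this into the boundedness of the maximal average `sup_ν A_ν f`, that
is, into the case `ℓ^∞`. For `1 ≤ q(·) < ∞` one factors `f_ν = (f_ν / G) · G`, where `G(x)` is the
`ℓ^{q(x)}` norm of `(f_ν(x))_ν`, and Jensen's inequality on cells reduces the estimate to the two
extreme cases.

Convolution with `η_{ν,m}` is dominated by a geometrically weighted sum of averages at scales coarser
than `2^{-ν}`, taken over `2^n` grids shifted by thirds so that each ball lies in a comparable cell
of one of them, plus a convolution with `η_{0,m}`.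

For Morrey norms one splits, on a ball `B_r(x)`, each `f_ν` into its restriction to `B_{2r}(x)`, to
which the `L^{p(·)}` estimate applies, and a tail. The parts of the tail on the shells of radius
`2^k r` are estimated by Hölder's inequality and by the size of the norms of indicators of balls; the
condition on `m` is what makes their sum a convergent geometric series.
-/

/-! ### Inequalities for powers -/

lemma rpow_le_exp_mul_rpow {t e₁ e₂ K : ℝ} (ht : 0 < t) (hK : |e₁ - e₂| * |Real.log t| ≤ K) :
    t ^ e₁ ≤ Real.exp K * t ^ e₂ := by
  rw [Real.rpow_def_of_pos ht, Real.rpow_def_of_pos ht, ← Real.exp_add, Real.exp_le_exp]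
  have h := le_abs_self ((e₁ - e₂) * Real.log t)
  rw [abs_mul] at h
  linarith

lemma real_rpow_le_exp_mul_rpow_add_rpow_neg {t W A K e₀ e₁ e₂ : ℝ} (ht : 0 ≤ t) (hW : 1 ≤ W)
    (hA : 0 ≤ A) (h₀ : 0 ≤ e₀) (h₀₁ : e₀ ≤ e₁) (hK : |e₁ - e₂| * Real.log W ≤ K)
    (htW : t ≤ W ^ A) : t ^ e₁ ≤ Real.exp (A * K) * t ^ e₂ + W ^ (-(A * e₀)) := by
  have hW0 : 0 < W := by linarith
  rcases lt_or_ge t (W ^ (-A)) with h | h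
  · refine le_add_of_nonneg_of_le (by positivity) ?_
    calc t ^ e₁ ≤ (W ^ (-A)) ^ e₁ := Real.rpow_le_rpow ht h.le (h₀.trans h₀₁)
      _ = W ^ (-(A * e₁)) := by rw [← Real.rpow_mul hW0.le, neg_mul]
      _ ≤ W ^ (-(A * e₀)) := by gcongr
  · have ht0 : 0 < t := (Real.rpow_pos_of_pos hW0 _).trans_le h
    have hlog : |Real.log t| ≤ A * Real.log W := by
      rw [← Real.log_rpow hW0, abs_le, ← Real.log_inv, ← Real.rpow_neg hW0.le]
      exact ⟨Real.log_le_log (by positivity) h, Real.log_le_log ht0 htW⟩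
    refine le_add_of_le_of_nonneg (rpow_le_exp_mul_rpow ht0 ?_) (by positivity)
    calc |e₁ - e₂| * |Real.log t| ≤ |e₁ - e₂| * (A * Real.log W) := by gcongr
      _ = A * (|e₁ - e₂| * Real.log W) := by ring
      _ ≤ A * K := by gcongr

lemma rpow_le_exp_mul_rpow_add_rpow_neg {t : ℝ≥0∞} {W A K e₀ e₁ e₂ : ℝ} (hW : 1 ≤ W) (hA : 0 ≤ A)
    (h₀ : 0 ≤ e₀) (h₀₁ : e₀ ≤ e₁) (h₂ : 0 ≤ e₂) (hK : |e₁ - e₂| * Real.log W ≤ K)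
    (htW : t ≤ ENNReal.ofReal (W ^ A)) :
    t ^ e₁ ≤ ENNReal.ofReal (Real.exp (A * K)) * t ^ e₂ + ENNReal.ofReal (W ^ (-(A * e₀))) := by
  have : 0 < W := by linarith
  lift t to NNReal using (htW.trans_lt ENNReal.ofReal_lt_top).ne
  have h := real_rpow_le_exp_mul_rpow_add_rpow_neg t.coe_nonneg hW hA h₀ h₀₁ hK
    ((ENNReal.ofReal_le_ofReal_iff (by positivity)).1 (by rwa [ENNReal.ofReal_coe_nnreal]))
  have h' := ENNReal.ofReal_le_ofReal h
  rw [ENNReal.ofReal_add (by positivity) (by positivity), ENNReal.ofReal_mul (by positivity),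
    ← ENNReal.ofReal_rpow_of_nonneg t.coe_nonneg (h₀.trans h₀₁),
    ← ENNReal.ofReal_rpow_of_nonneg t.coe_nonneg h₂, ENNReal.ofReal_coe_nnreal] at h'
  exact h'

lemma real_rpow_le_rpow_add_mul_sub {s t r : ℝ} (hs : 0 ≤ s) (hst : s ≤ t) (hr : 1 ≤ r) :
    t ^ r ≤ s ^ r + r * ((t - s) * t ^ (r - 1)) := by
  have hr0 : 0 < r := by linarith
  rcases (hs.trans hst).eq_or_lt with rfl | ht
  · simp [hr0.ne', le_antisymm hst hs]
  have hbern : 1 + r * -((t - s) / t) ≤ s ^ r / t ^ r := by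
    have h := one_add_mul_self_le_rpow_one_add (s := -((t - s) / t))
      (neg_le_neg ((div_le_one ht).2 (by linarith))) hr
    rwa [show 1 + -((t - s) / t) = s / t by field_simp; ring, Real.div_rpow hs ht.le] at h
  have htr : t ^ r = t * t ^ (r - 1) := by rw [Real.rpow_sub_one ht.ne']; field_simp
  rw [le_div_iff₀ (by positivity)] at hbern
  have hexpand : (1 + r * -((t - s) / t)) * t ^ r = t ^ r - r * ((t - s) * t ^ (r - 1)) := by
    rw [htr]; field_simp; ring
  linarith

lemma add_rpow_le_rpow_add_mul (s a : ℝ≥0∞) {r : ℝ} (hr : 1 ≤ r) :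
    (s + a) ^ r ≤ s ^ r + ENNReal.ofReal r * (a * (s + a) ^ (r - 1)) := by
  have hr0 : 0 < r := by linarith
  have hr1 : 0 ≤ r - 1 := by linarith
  rcases eq_or_ne s ∞ with rfl | hs
  · simp [ENNReal.top_rpow_of_pos hr0]
  rcases eq_or_ne a ∞ with rfl | ha
  · have h : (∞ : ℝ≥0∞) ^ (r - 1) ≠ 0 := by simp [ENNReal.rpow_eq_zero_iff, hr1.not_gt]
    simp [ENNReal.top_mul h, ENNReal.mul_top, hr0]
  lift s to NNReal using hs
  lift a to NNReal using ha
  have h := real_rpow_le_rpow_add_mul_sub s.coe_nonneg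
    (le_add_of_nonneg_right a.coe_nonneg : (s : ℝ) ≤ s + a) hr
  rw [add_sub_cancel_left] at h
  have h' := ENNReal.ofReal_le_ofReal h
  rw [ENNReal.ofReal_add (by positivity) (by positivity), ENNReal.ofReal_mul hr0.le,
    ENNReal.ofReal_mul a.coe_nonneg, ← ENNReal.ofReal_rpow_of_nonneg (by positivity) hr0.le,
    ← ENNReal.ofReal_rpow_of_nonneg (by positivity) hr0.le,
    ← ENNReal.ofReal_rpow_of_nonneg (by positivity) hr1,
    ENNReal.ofReal_add (by positivity) (by positivity)] at h'
  simpa only [ENNReal.ofReal_coe_nnreal] using h'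

lemma sum_range_rpow_le (a : ℕ → ℝ≥0∞) {r : ℝ} (hr : 1 ≤ r) (N : ℕ) :
    (∑ ν ∈ Finset.range N, a ν) ^ r ≤ ENNReal.ofReal r *
      ∑ ν ∈ Finset.range N, a ν * (∑ μ ∈ Finset.range (ν + 1), a μ) ^ (r - 1) := by
  induction N with
  | zero => simp [show 0 < r by linarith]
  | succ N ih =>
    rw [Finset.sum_range_succ, Finset.sum_range_succ _ N, mul_add]
    refine (add_rpow_le_rpow_add_mul _ _ hr).trans ?_
    rw [← Finset.sum_range_succ]
    gcongr

lemma mul_rpow_sub_one (t : ℝ≥0∞) {r : ℝ} (hr : 1 ≤ r) : t * t ^ (r - 1) = t ^ r :=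
  calc t * t ^ (r - 1) = t ^ (1 : ℝ) * t ^ (r - 1) := by rw [ENNReal.rpow_one]
    _ = t ^ r := by rw [← ENNReal.rpow_add_of_nonneg _ _ zero_le_one (by linarith), add_sub_cancel]

/-- Young's inequality with a small factor on the `r`-th power of `F`, so that this term can be
absorbed. -/
lemma mul_rpow_sub_one_le_half_add {F G : ℝ≥0∞} {r b c : ℝ} (hr : 1 ≤ r) (hrb : r ≤ b)
    (hc : 1 ≤ c) :
    ENNReal.ofReal c * (G * F ^ (r - 1)) ≤
      2⁻¹ * F ^ r + ENNReal.ofReal ((2 * c) ^ b) * G ^ r := by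
  have hr1 : 0 ≤ r - 1 := by linarith
  rcases le_total F (ENNReal.ofReal (2 * c) * G) with h | h
  · refine le_add_of_nonneg_of_le zero_le ?_
    have hconst : c * (2 * c) ^ (r - 1) ≤ (2 * c) ^ b := calc
      c * (2 * c) ^ (r - 1) ≤ 2 * c * (2 * c) ^ (r - 1) := by gcongr; linarith
      _ = (2 * c) ^ r := by rw [Real.rpow_sub_one (by linarith)]; field_simp
      _ ≤ (2 * c) ^ b := by gcongr; linarith
    calc ENNReal.ofReal c * (G * F ^ (r - 1))
        ≤ ENNReal.ofReal c * (G * (ENNReal.ofReal (2 * c) * G) ^ (r - 1)) := by gcongr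
      _ = ENNReal.ofReal (c * (2 * c) ^ (r - 1)) * (G * G ^ (r - 1)) := by
          rw [ENNReal.mul_rpow_of_nonneg _ _ hr1, ENNReal.ofReal_rpow_of_nonneg (by linarith) hr1,
            ENNReal.ofReal_mul (p := c) (by linarith)]
          ring
      _ ≤ ENNReal.ofReal ((2 * c) ^ b) * G ^ r := by rw [mul_rpow_sub_one G hr]; gcongr
  · refine le_add_of_le_of_nonneg ?_ zero_le
    rw [← mul_rpow_sub_one F hr, ← mul_assoc, ← mul_assoc]
    refine mul_le_mul_left ?_ _
    rw [ENNReal.ofReal_mul (by norm_num), mul_assoc, ENNReal.ofReal_ofNat] at h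
    rwa [← ENNReal.mul_le_iff_le_inv two_ne_zero ENNReal.ofNat_ne_top]

lemma le_one_add_rpow (t : ℝ≥0∞) {r : ℝ} (hr : 1 ≤ r) : t ≤ 1 + t ^ r := by
  rcases le_total t 1 with h | h
  · exact h.trans le_self_add
  · exact (ENNReal.le_rpow_self_of_one_le h hr).trans le_add_self

lemma mul_le_rpow_add_rpow (s t : ℝ≥0∞) {p q : ℝ} (h : p.HolderConjugate q) :
    s * t ≤ s ^ p + t ^ q := by
  refine (ENNReal.young_inequality s t h).trans ?_
  gcongr
  · exact ENNReal.div_le_of_le_mul (le_mul_of_one_le_right' (by simpa using h.lt.le))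
  · exact ENNReal.div_le_of_le_mul (le_mul_of_one_le_right' (by simpa using h.symm.lt.le))

/-! ### Dyadic cells and averages -/

/-- The cell of side length `2 ^ (-ν)` containing `x`, in the dyadic grid with origin `α`. -/
def cell (α : Rn n) (ν : ℕ) (x : Rn n) : Set (Rn n) :=
  {y | ∀ i, ⌊(2 : ℝ) ^ ν * (y i - α i)⌋ = ⌊(2 : ℝ) ^ ν * (x i - α i)⌋}

lemma mem_cell_comm {α : Rn n} {ν : ℕ} {x y : Rn n} : y ∈ cell α ν x ↔ x ∈ cell α ν y := by
  simp only [cell, Set.mem_ofPred_eq, eq_comm]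

lemma mem_cell_self (α : Rn n) (ν : ℕ) (x : Rn n) : x ∈ cell α ν x := fun _ => rfl

lemma cell_eq_of_mem {α : Rn n} {ν : ℕ} {x y : Rn n} (h : y ∈ cell α ν x) :
    cell α ν y = cell α ν x := by
  ext z
  simp only [cell, Set.mem_ofPred_eq] at h ⊢
  simp only [h]

lemma cell_succ_subset (α : Rn n) (ν : ℕ) (x : Rn n) : cell α (ν + 1) x ⊆ cell α ν x := by
  intro y hy i
  have hfloor : ∀ t : ℝ, ⌊(2 : ℝ) ^ ν * t⌋ = ⌊(2 : ℝ) ^ (ν + 1) * t⌋ / 2 := fun t => by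
    rw [← Nat.cast_ofNat (n := 2) (R := ℤ), ← Int.floor_div_natCast]
    congr 1
    push_cast
    ring
  rw [hfloor, hfloor, hy i]

lemma cell_subset_of_le (α : Rn n) {μ ν : ℕ} (h : μ ≤ ν) (x : Rn n) :
    cell α ν x ⊆ cell α μ x := by
  induction ν, h using Nat.le_induction with
  | base => exact subset_rfl
  | succ ν _ ih => exact (cell_succ_subset α ν x).trans ih

lemma measurableSet_cell_prod (α : Rn n) (ν : ℕ) :
    MeasurableSet {z : Rn n × Rn n | z.2 ∈ cell α ν z.1} := by
  have h : ∀ i, Measurable fun x : Rn n => ⌊(2 : ℝ) ^ ν * (x i - α i)⌋ := fun i =>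
    Int.measurable_floor.comp (by fun_prop)
  have hinter : {z : Rn n × Rn n | z.2 ∈ cell α ν z.1} = ⋂ i, {z : Rn n × Rn n |
      ⌊(2 : ℝ) ^ ν * (z.2 i - α i)⌋ = ⌊(2 : ℝ) ^ ν * (z.1 i - α i)⌋} := by
    ext; simp [cell]
  rw [hinter]
  exact MeasurableSet.iInter fun i => measurableSet_eq_fun ((h i).comp measurable_snd)
    ((h i).comp measurable_fst)

lemma measurableSet_cell (α : Rn n) (ν : ℕ) (x : Rn n) : MeasurableSet (cell α ν x) :=
  measurable_prodMk_left (measurableSet_cell_prod α ν)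

lemma cell_eq_preimage (α : Rn n) (ν : ℕ) (x : Rn n) :
    cell α ν x = (MeasurableEquiv.toLp 2 (Fin n → ℝ)).symm ⁻¹' Set.univ.pi (fun i =>
      Set.Ico (α i + ⌊(2 : ℝ) ^ ν * (x i - α i)⌋ / 2 ^ ν)
        (α i + (⌊(2 : ℝ) ^ ν * (x i - α i)⌋ + 1) / 2 ^ ν)) := by
  ext y
  simp only [cell, Set.mem_ofPred_eq, Set.mem_preimage, Set.mem_univ_pi, Set.mem_Ico,
    MeasurableEquiv.toLp_symm_apply]
  refine forall_congr' fun i => ?_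
  have h2 : (0 : ℝ) < 2 ^ ν := by positivity
  rw [Int.floor_eq_iff, ← le_sub_iff_add_le', ← sub_lt_iff_lt_add' (b := α i), div_le_iff₀ h2,
    lt_div_iff₀ h2, mul_comm (y i - α i)]

lemma volume_cell (α : Rn n) (ν : ℕ) (x : Rn n) :
    volume (cell α ν x) = ((2 : ℝ≥0∞) ^ (ν * n))⁻¹ := by
  rw [cell_eq_preimage,
    (EuclideanSpace.volume_preserving_symm_measurableEquiv_toLp _).measure_preimage_equiv,
    Real.volume_pi_Ico]
  have hside : ∀ k : ℤ, ∀ a : ℝ, a + ((k : ℝ) + 1) / 2 ^ ν - (a + k / 2 ^ ν) = (2 ^ ν)⁻¹ := by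
    intro k a; ring
  simp only [hside, Finset.prod_const, Finset.card_univ, Fintype.card_fin]
  rw [ENNReal.ofReal_inv_of_pos (by positivity), ENNReal.ofReal_pow (by norm_num), pow_mul,
    ENNReal.ofReal_ofNat, ENNReal.inv_pow, ENNReal.inv_pow, ENNReal.inv_pow]

lemma dist_le_of_mem_cell {α : Rn n} {ν : ℕ} {x y : Rn n} (h : y ∈ cell α ν x) :
    dist x y ≤ √n * (2 ^ ν)⁻¹ := by
  have h2 : (0 : ℝ) < 2 ^ ν := by positivity
  have hcoord : ∀ i, dist (x i) (y i) ≤ (2 ^ ν)⁻¹ := fun i => by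
    have hi := Int.abs_sub_lt_one_of_floor_eq_floor (h i)
    rw [← mul_sub, sub_sub_sub_cancel_right, abs_mul, abs_of_pos h2, ← Real.dist_eq,
      dist_comm] at hi
    exact (le_inv_mul_iff₀ h2).2 hi.le |>.trans_eq (mul_one _)
  rw [EuclideanSpace.dist_eq]
  calc √(∑ i, dist (x i) (y i) ^ 2) ≤ √(∑ _i : Fin n, ((2 ^ ν)⁻¹ : ℝ) ^ 2) := by
        gcongr with i
        exact hcoord i
    _ = √n * (2 ^ ν)⁻¹ := by
        rw [Finset.sum_const, Finset.card_univ, Fintype.card_fin, nsmul_eq_mul,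
          Real.sqrt_mul (by positivity), Real.sqrt_sq (by positivity)]

/-- The average of `f` over the cell containing `x`, whose volume is `2 ^ (-ν n)`. -/
def dyadicAvg (α : Rn n) (ν : ℕ) (f : Rn n → ℝ≥0∞) (x : Rn n) : ℝ≥0∞ :=
  2 ^ (ν * n) * ∫⁻ y in cell α ν x, f y

lemma setLIntegral_cell_eq (α : Rn n) (ν : ℕ) (f : Rn n → ℝ≥0∞) (x : Rn n) :
    ∫⁻ y in cell α ν x, f y =
      ∫⁻ y, {z : Rn n × Rn n | z.2 ∈ cell α ν z.1}.indicator (fun z => f z.2) (x, y) := by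
  rw [← lintegral_indicator (measurableSet_cell α ν x)]
  rfl

lemma measurable_setLIntegral_cell (α : Rn n) (ν : ℕ) {f : Rn n → ℝ≥0∞} (hf : Measurable f) :
    Measurable fun x => ∫⁻ y in cell α ν x, f y := by
  simp only [setLIntegral_cell_eq]
  exact Measurable.lintegral_prod_right'
    ((hf.comp measurable_snd).indicator (measurableSet_cell_prod α ν))

lemma measurable_dyadicAvg (α : Rn n) (ν : ℕ) {f : Rn n → ℝ≥0∞} (hf : Measurable f) :
    Measurable (dyadicAvg α ν f) :=
  (measurable_setLIntegral_cell α ν hf).const_mul _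

lemma lintegral_setLIntegral_cell_mul (α : Rn n) (ν : ℕ) {f g : Rn n → ℝ≥0∞} (hf : Measurable f)
    (hg : Measurable g) :
    ∫⁻ x, (∫⁻ y in cell α ν x, f y) * g x = ∫⁻ y, f y * ∫⁻ x in cell α ν y, g x := by
  set S := {z : Rn n × Rn n | z.2 ∈ cell α ν z.1}
  have hS : MeasurableSet S := measurableSet_cell_prod α ν
  have hleft : ∀ x, (∫⁻ y in cell α ν x, f y) * g x =
      ∫⁻ y, S.indicator (fun z => f z.2 * g z.1) (x, y) := by
    intro x
    rw [setLIntegral_cell_eq, ← lintegral_mul_const]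
    · refine lintegral_congr fun y => ?_
      by_cases h : y ∈ cell α ν x <;> simp [S, Set.indicator, h]
    · exact ((hf.comp measurable_snd).indicator hS).comp measurable_prodMk_left
  have hright : ∀ y, f y * (∫⁻ x in cell α ν y, g x) =
      ∫⁻ x, S.indicator (fun z => f z.2 * g z.1) (x, y) := by
    intro y
    rw [setLIntegral_cell_eq, ← lintegral_const_mul]
    · refine lintegral_congr fun x => ?_
      by_cases h : y ∈ cell α ν x <;> simp [S, Set.indicator, h, mem_cell_comm (x := y)]
    · exact ((hg.comp measurable_snd).indicator hS).comp measurable_prodMk_left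
  simp only [hleft, hright]
  refine lintegral_lintegral_swap (Measurable.aemeasurable ?_)
  exact ((hf.comp measurable_snd).mul (hg.comp measurable_fst)).indicator hS

lemma lintegral_dyadicAvg_mul (α : Rn n) (ν : ℕ) {f g : Rn n → ℝ≥0∞} (hf : Measurable f)
    (hg : Measurable g) :
    ∫⁻ x, dyadicAvg α ν f x * g x = ∫⁻ y, f y * dyadicAvg α ν g y := by
  simp only [dyadicAvg, mul_assoc, mul_left_comm _ ((2 : ℝ≥0∞) ^ (ν * n))]
  rw [lintegral_const_mul' _ _ (by simp), lintegral_const_mul' _ _ (by simp),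
    lintegral_setLIntegral_cell_mul α ν hf hg]

lemma dyadicAvg_const (α : Rn n) (ν : ℕ) (c : ℝ≥0∞) (x : Rn n) :
    dyadicAvg α ν (fun _ => c) x = c := by
  rw [dyadicAvg, setLIntegral_const, volume_cell, mul_comm, mul_assoc,
    ENNReal.inv_mul_cancel (by simp) (by simp), mul_one]

lemma dyadicAvg_mono_on_cell {α : Rn n} {ν : ℕ} {f g : Rn n → ℝ≥0∞} {x : Rn n}
    (h : ∀ y ∈ cell α ν x, f y ≤ g y) : dyadicAvg α ν f x ≤ dyadicAvg α ν g x := by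
  unfold dyadicAvg
  gcongr 1
  exact setLIntegral_mono' (measurableSet_cell α ν x) h

lemma dyadicAvg_indicator_cell (α : Rn n) {μ ν : ℕ} (h : μ ≤ ν) (x₀ : Rn n) (f : Rn n → ℝ≥0∞) :
    dyadicAvg α ν ((cell α μ x₀).indicator f) = (cell α μ x₀).indicator (dyadicAvg α ν f) := by
  ext x
  rw [dyadicAvg, setLIntegral_indicator (measurableSet_cell α μ x₀)]
  by_cases hx : x ∈ cell α μ x₀
  · rw [Set.indicator_of_mem hx, dyadicAvg, Set.inter_eq_self_of_subset_right]
    exact (cell_subset_of_le α h x).trans_eq (cell_eq_of_mem hx)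
  · have hempty : cell α μ x₀ ∩ cell α ν x = ∅ := by
      refine Set.disjoint_iff_inter_eq_empty.1 (Set.disjoint_left.2 fun y hy₀ hy => hx ?_)
      rw [← cell_eq_of_mem hy₀, mem_cell_comm]
      exact cell_subset_of_le α h x hy
    rw [Set.indicator_of_notMem hx, hempty, setLIntegral_empty, mul_zero]

lemma setLIntegral_dyadicAvg_mul (α : Rn n) {μ ν : ℕ} (h : μ ≤ ν) (x₀ : Rn n)
    {f g : Rn n → ℝ≥0∞} (hf : Measurable f) (hg : Measurable g) :
    ∫⁻ x in cell α μ x₀, dyadicAvg α ν f x * g x =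
      ∫⁻ y in cell α μ x₀, f y * dyadicAvg α ν g y := by
  have hQ := measurableSet_cell α μ x₀
  rw [← lintegral_indicator hQ, ← lintegral_indicator hQ]
  simp only [Set.indicator_mul_right]
  rw [lintegral_dyadicAvg_mul α ν hf (hg.indicator hQ), dyadicAvg_indicator_cell α h]

lemma dyadicAvg_eq_of_mem {α : Rn n} {μ ν : ℕ} (h : μ ≤ ν) (f : Rn n → ℝ≥0∞) {x y : Rn n}
    (hy : y ∈ cell α ν x) : dyadicAvg α μ f y = dyadicAvg α μ f x := by
  rw [dyadicAvg, dyadicAvg, cell_eq_of_mem (cell_subset_of_le α h x hy)]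

/-! ### Discretised log-Hölder continuity -/

/-- Log-Hölder continuity as it is used on dyadic cells: the oscillation of `P` on a cell of side
length `2 ^ (-ν)` at distance `‖x‖` from the origin is `O(1 / (ν + log (e + ‖x‖)))`. -/
def CellOsc (α : Rn n) (P : Rn n → ℝ) (K : ℝ) : Prop :=
  ∀ ν x y, y ∈ cell α ν x → |P x - P y| * (ν + Real.log (Real.exp 1 + ‖x‖)) ≤ K

lemma one_le_log_exp_add {t : ℝ} (ht : 0 ≤ t) : 1 ≤ Real.log (Real.exp 1 + t) := by
  rw [Real.le_log_iff_exp_le (by positivity)]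
  linarith

lemma log_exp_add_le_mul {s t D : ℝ} (ht : 0 ≤ t) (hD : 0 ≤ D) (hs : 0 ≤ s) (hst : s ≤ t + D) :
    Real.log (Real.exp 1 + s) ≤ (1 + Real.log (1 + D)) * Real.log (Real.exp 1 + t) := by
  have hlt := one_le_log_exp_add ht
  have hlD : 0 ≤ Real.log (1 + D) := Real.log_nonneg (by linarith)
  have he : 1 ≤ Real.exp 1 := Real.one_le_exp zero_le_one
  calc Real.log (Real.exp 1 + s) ≤ Real.log ((1 + D) * (Real.exp 1 + t)) := by
        gcongr
        nlinarith
    _ = Real.log (1 + D) + Real.log (Real.exp 1 + t) := Real.log_mul (by positivity) (by positivity)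
    _ ≤ (1 + Real.log (1 + D)) * Real.log (Real.exp 1 + t) := by nlinarith

lemma LocLogHolder.exists_abs_sub_mul_natCast_le {P : Rn n → ℝ} (h : LocLogHolder P) :
    ∃ K, ∀ α ν x y, y ∈ cell α ν x → |P x - P y| * ν ≤ K := by
  obtain ⟨c, hc, h⟩ := h
  set D : ℝ := √n + 1
  have hD : 1 ≤ D := le_add_of_nonneg_left (Real.sqrt_nonneg _)
  have hlD : 0 ≤ Real.log D := Real.log_nonneg hD
  have hl2 : 0 < Real.log 2 := Real.log_pos one_lt_two
  refine ⟨(1 + Real.log D) * c / Real.log 2, fun α ν x y hy => ?_⟩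
  rcases eq_or_ne x y with rfl | hxy
  · rw [sub_self, abs_zero, zero_mul]
    positivity
  have hdist : 0 < dist x y := dist_pos.2 hxy
  set ℓ := Real.log (Real.exp 1 + (dist x y)⁻¹)
  have hℓ : 1 ≤ ℓ := one_le_log_exp_add (inv_nonneg.2 hdist.le)
  have hscale : (2 : ℝ) ^ ν / D ≤ (dist x y)⁻¹ := by
    rw [le_inv_comm₀ (by positivity) hdist, inv_div, div_eq_mul_inv]
    exact (dist_le_of_mem_cell hy).trans (by gcongr; linarith)
  have hνℓ : ν * Real.log 2 - Real.log D ≤ ℓ := by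
    rw [← Real.log_pow, ← Real.log_div (by positivity) (by positivity)]
    exact Real.log_le_log (by positivity) (by linarith [Real.exp_pos 1])
  have hosc : |P x - P y| * ℓ ≤ c := (le_div_iff₀ (by linarith)).1 (h x y)
  rw [le_div_iff₀ hl2]
  calc |P x - P y| * ν * Real.log 2 = |P x - P y| * (ν * Real.log 2) := by ring
    _ ≤ |P x - P y| * ((1 + Real.log D) * ℓ) :=
        mul_le_mul_of_nonneg_left (by nlinarith) (abs_nonneg _)
    _ = (1 + Real.log D) * (|P x - P y| * ℓ) := by ring
    _ ≤ (1 + Real.log D) * c := by gcongr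

lemma LogDecay.abs_sub_mul_log_le {P : Rn n → ℝ} {Pinf c D : ℝ} (h : LogDecay P Pinf c)
    {x y : Rn n} (hxy : dist x y ≤ D) :
    |P x - P y| * Real.log (Real.exp 1 + ‖x‖) ≤ c * (2 + Real.log (1 + D)) := by
  have hD : 0 ≤ D := dist_nonneg.trans hxy
  have hx := (le_div_iff₀ (by linarith [one_le_log_exp_add (norm_nonneg x)])).1 (h x)
  have hy := (le_div_iff₀ (by linarith [one_le_log_exp_add (norm_nonneg y)])).1 (h y)
  have hnorm : ‖x‖ ≤ ‖y‖ + D := by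
    rw [dist_eq_norm] at hxy
    linarith [norm_le_norm_add_norm_sub' x y]
  have hlog := log_exp_add_le_mul (norm_nonneg y) hD (norm_nonneg x) hnorm
  have hlx : 0 ≤ Real.log (Real.exp 1 + ‖x‖) :=
    zero_le_one.trans (one_le_log_exp_add (norm_nonneg x))
  have hlD : 0 ≤ Real.log (1 + D) := Real.log_nonneg (by linarith)
  calc |P x - P y| * Real.log (Real.exp 1 + ‖x‖)
      ≤ (|P x - Pinf| + |P y - Pinf|) * Real.log (Real.exp 1 + ‖x‖) := by
        gcongr
        rw [abs_sub_comm (P y)]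
        exact abs_sub_le _ _ _
    _ = |P x - Pinf| * Real.log (Real.exp 1 + ‖x‖) +
          |P y - Pinf| * Real.log (Real.exp 1 + ‖x‖) := add_mul _ _ _
    _ ≤ c + |P y - Pinf| * ((1 + Real.log (1 + D)) * Real.log (Real.exp 1 + ‖y‖)) := by gcongr
    _ = c + |P y - Pinf| * Real.log (Real.exp 1 + ‖y‖) * (1 + Real.log (1 + D)) := by ring
    _ ≤ c + c * (1 + Real.log (1 + D)) := by gcongr
    _ = c * (2 + Real.log (1 + D)) := by ring

lemma exists_cellOsc {P : Rn n → ℝ} {Pinf c : ℝ} (hloc : LocLogHolder P)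
    (hdec : LogDecay P Pinf c) : ∃ K, ∀ α, CellOsc α P K := by
  obtain ⟨K, hK⟩ := hloc.exists_abs_sub_mul_natCast_le
  refine ⟨K + c * (2 + Real.log (1 + √n)), fun α ν x y hy => ?_⟩
  have hdist : dist x y ≤ √n := (dist_le_of_mem_cell hy).trans
    (mul_le_of_le_one_right (Real.sqrt_nonneg _)
      (inv_le_one_of_one_le₀ (one_le_pow₀ one_le_two)))
  rw [mul_add]
  exact add_le_add (hK α ν x y hy) (hdec.abs_sub_mul_log_le hdist)

/-! ### Duality -/

lemma exists_measurable_le_lintegral_eq_one {β : Type*} [MeasurableSpace β] {μ : Measure β}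
    [SigmaFinite μ] {G : β → ℝ≥0∞} (hG : 1 < ∫⁻ x, G x ∂μ) :
    ∃ ψ : β → ℝ≥0∞, Measurable ψ ∧ (∀ x, ψ x ≤ G x) ∧ ∫⁻ x, ψ x ∂μ = 1 := by
  obtain ⟨φ, hφ, hφtop, hφ1⟩ : ∃ φ : SimpleFunc β NNReal,
      (∀ x, (φ x : ℝ≥0∞) ≤ G x) ∧ ∫⁻ x, φ x ∂μ < ∞ ∧ 1 < ∫⁻ x, φ x ∂μ := by
    rw [lintegral_eq_nnreal] at hG
    simp only [lt_iSup_iff] at hG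
    obtain ⟨g, hg, hg1⟩ := hG
    rw [← SimpleFunc.lintegral_eq_lintegral] at hg1
    obtain ⟨φ, hφ, hφ'⟩ := exists_lt_lintegral_simpleFunc_of_lt_lintegral (f := g) hg1
    exact ⟨φ, fun x => (ENNReal.coe_le_coe.2 (hφ x)).trans (hg x), hφ'⟩
  have hφm : Measurable fun x => ((φ x : NNReal) : ℝ≥0∞) :=
    measurable_coe_nnreal_ennreal.comp φ.measurable
  refine ⟨fun x => φ x / ∫⁻ y, φ y ∂μ, hφm.div_const _, fun x => ?_, ?_⟩
  · exact (ENNReal.div_le_of_le_mul (le_mul_of_one_le_right' hφ1.le)).trans (hφ x)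
  · simp only [div_eq_mul_inv]
    rw [lintegral_mul_const _ hφm]
    exact ENNReal.mul_inv_cancel (zero_lt_one.trans hφ1).ne' hφtop.ne

lemma lintegral_div_rpow_le_one_of_duality {β : Type*} [MeasurableSpace β] {μ : Measure β}
    [SigmaFinite μ] {P P' : β → ℝ} (hP' : Measurable P')
    (h : ∀ x, (P x).HolderConjugate (P' x)) {F : β → ℝ≥0∞} (hF : Measurable F) {c : ℝ≥0∞}
    (hc0 : c ≠ 0) (hc : c ≠ ∞)
    (H : ∀ g : β → ℝ≥0∞, Measurable g → ∫⁻ x, g x ^ P' x ∂μ ≤ 1 → ∫⁻ x, F x * g x ∂μ ≤ c) :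
    ∫⁻ x, (F x / (2 * c)) ^ P x ∂μ ≤ 1 := by
  by_contra! hlt
  obtain ⟨ψ, hψ, hψF, hψ1⟩ := exists_measurable_le_lintegral_eq_one hlt
  have hroot : ∀ x, ψ x ^ (P x)⁻¹ ≤ F x / (2 * c) := fun x => by
    rw [← ENNReal.le_rpow_inv_iff (inv_pos.2 (h x).pos), inv_inv]
    exact hψF x
  have htest : ∫⁻ x, F x * ψ x ^ (P' x)⁻¹ ∂μ ≤ c := by
    refine H _ (hψ.pow hP'.inv) (hψ1 ▸ le_of_eq (lintegral_congr fun x => ?_))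
    exact ENNReal.rpow_inv_rpow (h x).symm.pos.ne' _
  have hone : (1 : ℝ≥0∞) ≤ 2⁻¹ := by
    calc (1 : ℝ≥0∞) = ∫⁻ x, ψ x ^ (P x)⁻¹ * ψ x ^ (P' x)⁻¹ ∂μ := by
          rw [← hψ1]
          refine lintegral_congr fun x => ?_
          rw [← ENNReal.rpow_add_of_nonneg _ _ (inv_nonneg.2 (h x).pos.le)
            (inv_nonneg.2 (h x).symm.pos.le), (h x).inv_add_inv_eq_one, ENNReal.rpow_one]
      _ ≤ ∫⁻ x, (2 * c)⁻¹ * (F x * ψ x ^ (P' x)⁻¹) ∂μ := by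
          refine lintegral_mono fun x => ?_
          rw [← mul_assoc, mul_comm _ (F x), ← div_eq_mul_inv]
          gcongr
          exact hroot x
      _ = (2 * c)⁻¹ * ∫⁻ x, F x * ψ x ^ (P' x)⁻¹ ∂μ :=
          lintegral_const_mul _ (hF.mul (hψ.pow hP'.inv))
      _ ≤ (2 * c)⁻¹ * c := by gcongr
      _ = 2⁻¹ := by
          rw [ENNReal.mul_inv (by simp) (by simp), mul_assoc, ENNReal.inv_mul_cancel hc0 hc,
            mul_one]
  exact absurd hone (by simp)

/-! ### Weights decaying at infinity -/

/-- The weight `(e + ‖x‖) ^ (-r)`, integrable for `r > n`; it carries the error terms caused by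
changing a variable exponent. -/
def decayW (r : ℝ) (x : Rn n) : ℝ≥0∞ := ENNReal.ofReal ((Real.exp 1 + ‖x‖) ^ (-r))

lemma measurable_decayW (r : ℝ) : Measurable (decayW (n := n) r) := by
  unfold decayW
  fun_prop

lemma one_le_exp_add_norm (x : Rn n) : 1 ≤ Real.exp 1 + ‖x‖ :=
  le_add_of_le_of_nonneg (Real.one_le_exp zero_le_one) (norm_nonneg x)

lemma decayW_le_one {r : ℝ} (hr : 0 ≤ r) (x : Rn n) : decayW r x ≤ 1 := by
  rw [decayW, ENNReal.ofReal_le_one]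
  exact Real.rpow_le_one_of_one_le_of_nonpos (one_le_exp_add_norm x) (by linarith)

lemma lintegral_decayW_lt_top {r : ℝ} (hr : (n : ℝ) < r) :
    ∫⁻ x : Rn n, decayW r x < ∞ := by
  have h := finite_integral_one_add_norm (μ := (volume : Measure (Rn n))) (r := r)
    (by simpa using hr)
  refine lt_of_le_of_lt (lintegral_mono fun x => ENNReal.ofReal_le_ofReal ?_) h
  refine Real.rpow_le_rpow_of_nonpos (by positivity) ?_ (by linarith [n.cast_nonneg (α := ℝ)])
  gcongr
  exact Real.one_le_exp zero_le_one

lemma lintegral_le_of_forall_unit_cell (α : Rn n) {f g : Rn n → ℝ≥0∞}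
    (h : ∀ x, ∫⁻ y in cell α 0 x, f y ≤ ∫⁻ y in cell α 0 x, g y) : ∫⁻ x, f x ≤ ∫⁻ x, g x := by
  set c : (Fin n → ℤ) → Rn n := fun k => WithLp.toLp 2 fun i => (k i : ℝ) + α i
  have hcell : ∀ k y, y ∈ cell α 0 (c k) ↔ ∀ i, ⌊y i - α i⌋ = k i := by
    intro k y
    simp [cell, c]
  have hcover : ⋃ k, cell α 0 (c k) = Set.univ := by
    refine Set.eq_univ_of_forall fun y => Set.mem_iUnion.2 ⟨fun i => ⌊y i - α i⌋, ?_⟩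
    simp [hcell]
  have hdisj : Pairwise (Function.onFun Disjoint fun k => cell α 0 (c k)) := by
    intro k l hkl
    refine Set.disjoint_left.2 fun y hk hl => hkl ?_
    rw [hcell] at hk hl
    ext i
    rw [← hk, ← hl]
  have hsum : ∀ f : Rn n → ℝ≥0∞, ∫⁻ x, f x = ∑' k, ∫⁻ y in cell α 0 (c k), f y := by
    intro f
    rw [← lintegral_iUnion (fun k => measurableSet_cell α 0 _) hdisj, hcover, setLIntegral_univ]
  rw [hsum f, hsum g]
  exact ENNReal.tsum_le_tsum fun k => h _

/-! ### Sums of dyadic averages: the case `ℓ¹` -/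

/-- The partial sums of the sequence whose `μ`-th term is the average of `f μ` over the cells of
side length `2 ^ (-μ)`. -/
def avgSum (α : Rn n) (f : ℕ → Rn n → ℝ≥0∞) (k : ℕ) (x : Rn n) : ℝ≥0∞ :=
  ∑ μ ∈ Finset.range k, dyadicAvg α μ (f μ) x

lemma measurable_avgSum (α : Rn n) {f : ℕ → Rn n → ℝ≥0∞} (hf : ∀ ν, Measurable (f ν)) (k : ℕ) :
    Measurable (avgSum α f k) :=
  Finset.measurable_fun_sum _ fun μ _ => measurable_dyadicAvg α μ (hf μ)

lemma avgSum_mono (α : Rn n) (f : ℕ → Rn n → ℝ≥0∞) (x : Rn n) :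
    Monotone fun k => avgSum α f k x :=
  fun _ _ h => Finset.sum_le_sum_of_subset (Finset.range_mono h)

lemma avgSum_eq_of_mem {α : Rn n} (f : ℕ → Rn n → ℝ≥0∞) {ν : ℕ} {x y : Rn n}
    (hy : y ∈ cell α ν x) : avgSum α f (ν + 1) y = avgSum α f (ν + 1) x :=
  Finset.sum_congr rfl fun _ hμ =>
    dyadicAvg_eq_of_mem (Nat.lt_succ_iff.1 (Finset.mem_range.1 hμ)) _ hy

lemma avgSum_succ_le {α : Rn n} {f : ℕ → Rn n → ℝ≥0∞} {x₀ : Rn n} {M : ℝ≥0∞}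
    (hM : ∫⁻ x in cell α 0 x₀, ∑' ν, f ν x ≤ M) (ν : ℕ) {x : Rn n} (hx : x ∈ cell α 0 x₀) :
    avgSum α f (ν + 1) x ≤ (ν + 1 : ℕ) * (2 ^ (ν * n) * M) := by
  calc avgSum α f (ν + 1) x ≤ ∑ _μ ∈ Finset.range (ν + 1), 2 ^ (ν * n) * M := by
        refine Finset.sum_le_sum fun μ hμ => ?_
        have hμν : μ ≤ ν := Nat.lt_succ_iff.1 (Finset.mem_range.1 hμ)
        refine mul_le_mul' (pow_le_pow_right₀ one_le_two (by gcongr)) (le_trans ?_ hM)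
        refine (lintegral_mono fun y => ENNReal.le_tsum μ).trans (lintegral_mono_set ?_)
        rw [← cell_eq_of_mem hx]
        exact cell_subset_of_le α (Nat.zero_le μ) x
    _ = (ν + 1 : ℕ) * (2 ^ (ν * n) * M) := by simp

lemma natCast_succ_mul_two_pow_le (n ν : ℕ) {w A : ℝ} (hw : 2 ≤ w) (hA : n + 2 ≤ A) :
    ((ν + 1 : ℕ) : ℝ≥0∞) * (2 ^ (ν * n) * 2) ≤ ENNReal.ofReal ((2 ^ ν * w) ^ A) := by
  have h2 : (1 : ℝ) ≤ 2 ^ ν := one_le_pow₀ one_le_two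
  have hν : ((ν + 1 : ℕ) : ℝ) ≤ 2 ^ ν := by exact_mod_cast Nat.lt_two_pow_self
  set W := 2 ^ ν * w
  have hW2 : 2 ≤ W := by nlinarith
  have hpow : (2 : ℝ) ^ ν ≤ W := by nlinarith
  have hreal : ((ν + 1 : ℕ) : ℝ) * (2 ^ (ν * n) * 2) ≤ W ^ A := calc
    ((ν + 1 : ℕ) : ℝ) * (2 ^ (ν * n) * 2) ≤ W * (W ^ n * W) := by
        rw [pow_mul]
        gcongr
        exact hν.trans hpow
    _ = W ^ ((n : ℝ) + 2) := by
        rw [Real.rpow_add (by linarith), Real.rpow_natCast, Real.rpow_two]; ring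
    _ ≤ W ^ A := Real.rpow_le_rpow_of_exponent_le (by linarith) hA
  refine le_of_eq_of_le ?_ (ENNReal.ofReal_le_ofReal hreal)
  rw [ENNReal.ofReal_mul (by positivity), ENNReal.ofReal_natCast,
    ENNReal.ofReal_mul (by positivity), ENNReal.ofReal_pow (by positivity), ENNReal.ofReal_ofNat]

lemma two_le_exp_add_norm (x : Rn n) : 2 ≤ Real.exp 1 + ‖x‖ := by
  linarith [Real.add_one_le_exp 1, norm_nonneg x]

section

variable {α : Rn n} {P : Rn n → ℝ} {K a b A : ℝ}

lemma CellOsc.nonneg (hosc : CellOsc α P K) : 0 ≤ K := by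
  simpa using hosc 0 0 0 (mem_cell_self _ _ _)

lemma CellOsc.abs_sub_mul_log_le (hosc : CellOsc α P K) {ν : ℕ} {x y : Rn n}
    (hy : y ∈ cell α ν x) :
    |P x - P y| * Real.log (2 ^ ν * (Real.exp 1 + ‖x‖)) ≤ K := by
  refine le_trans ?_ (hosc ν x y hy)
  rw [Real.log_mul (by positivity) (by positivity), Real.log_pow]
  gcongr
  exact mul_le_of_le_one_right (by positivity) (Real.log_two_lt_d9.le.trans (by norm_num))

lemma dyadicAvg_rpow_sub_one_le (hosc : CellOsc α P K) (ha : 1 ≤ a) (haP : ∀ x, a ≤ P x)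
    (hA : 0 ≤ A) {ν : ℕ} {S : Rn n → ℝ≥0∞} {y : Rn n} (hS : ∀ x ∈ cell α ν y, S x = S y)
    (hSy : S y ≤ ENNReal.ofReal ((2 ^ ν * (Real.exp 1 + ‖y‖)) ^ A)) :
    dyadicAvg α ν (fun x => S x ^ (P x - 1)) y ≤
      ENNReal.ofReal (Real.exp (A * K)) * S y ^ (P y - 1) + decayW (A * (a - 1)) y := by
  have hw := one_le_exp_add_norm y
  have h2 : (1 : ℝ) ≤ 2 ^ ν := one_le_pow₀ one_le_two
  refine le_of_le_of_eq (dyadicAvg_mono_on_cell fun x hx => ?_) (dyadicAvg_const α ν _ y)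
  rw [hS x hx]
  have hexp : |P x - 1 - (P y - 1)| * Real.log (2 ^ ν * (Real.exp 1 + ‖y‖)) ≤ K := by
    rw [sub_sub_sub_cancel_right, abs_sub_comm]
    exact hosc.abs_sub_mul_log_le hx
  refine (rpow_le_exp_mul_rpow_add_rpow_neg (e₀ := a - 1) (by nlinarith) hA (by linarith)
    (by linarith [haP x]) (by linarith [haP y]) hexp hSy).trans ?_
  gcongr
  refine ENNReal.ofReal_le_ofReal
    (Real.rpow_le_rpow_of_nonpos (by linarith) (by nlinarith) (neg_nonpos.2 ?_))
  exact mul_nonneg hA (sub_nonneg.2 ha)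

lemma setLIntegral_cell_zero_le_two (hP : ∀ x, 1 ≤ P x) {G : Rn n → ℝ≥0∞}
    (hG : ∫⁻ x, G x ^ P x ≤ 1) (x₀ : Rn n) : ∫⁻ x in cell α 0 x₀, G x ≤ 2 := by
  calc ∫⁻ x in cell α 0 x₀, G x ≤ ∫⁻ x in cell α 0 x₀, (1 + G x ^ P x) :=
        lintegral_mono fun x => le_one_add_rpow _ (hP x)
    _ = 1 + ∫⁻ x in cell α 0 x₀, G x ^ P x := by
        rw [lintegral_add_left measurable_const]
        simp [volume_cell]
    _ ≤ 1 + 1 := by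
        gcongr
        exact (setLIntegral_le_lintegral _ _).trans hG
    _ = 2 := one_add_one_eq_two

/-- The average is moved onto the power of the partial sum, where the exponent can be frozen. -/
lemma setLIntegral_dyadicAvg_mul_avgSum_le (hPm : Measurable P) (hosc : CellOsc α P K)
    (ha : 1 ≤ a) (haP : ∀ x, a ≤ P x) (hA : n + 2 ≤ A) {f : ℕ → Rn n → ℝ≥0∞}
    (hf : ∀ ν, Measurable (f ν)) {x₀ : Rn n} (hf2 : ∫⁻ x in cell α 0 x₀, ∑' ν, f ν x ≤ 2)
    {ν N : ℕ} (hν : ν < N) :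
    ∫⁻ x in cell α 0 x₀, dyadicAvg α ν (f ν) x * avgSum α f (ν + 1) x ^ (P x - 1) ≤
      ∫⁻ y in cell α 0 x₀, f ν y * (ENNReal.ofReal (Real.exp (A * K)) *
        avgSum α f N y ^ (P y - 1) + decayW (A * (a - 1)) y) := by
  have hA0 : 0 ≤ A := le_trans (by positivity) hA
  have hpow : Measurable fun x => avgSum α f (ν + 1) x ^ (P x - 1) :=
    (measurable_avgSum α hf (ν + 1)).pow (hPm.sub_const 1)
  rw [setLIntegral_dyadicAvg_mul α (Nat.zero_le ν) x₀ (hf ν) hpow]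
  refine setLIntegral_mono' (measurableSet_cell α 0 x₀) fun y hy => ?_
  gcongr
  have hbound : avgSum α f (ν + 1) y ≤ ENNReal.ofReal ((2 ^ ν * (Real.exp 1 + ‖y‖)) ^ A) :=
    (avgSum_succ_le hf2 ν hy).trans (natCast_succ_mul_two_pow_le n ν (two_le_exp_add_norm y) hA)
  refine (dyadicAvg_rpow_sub_one_le hosc ha haP hA0 (fun x hx => avgSum_eq_of_mem f hx)
    hbound).trans ?_
  gcongr 2
  exact ENNReal.rpow_le_rpow (avgSum_mono α f y hν) (by linarith [haP y])

lemma lintegral_avgSum_rpow_ne_top (hP : ∀ x, 1 ≤ P x) (hPb : ∀ x, P x ≤ b)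
    {f : ℕ → Rn n → ℝ≥0∞} {x₀ : Rn n} (hf2 : ∫⁻ x in cell α 0 x₀, ∑' ν, f ν x ≤ 2) (N : ℕ) :
    ∫⁻ x in cell α 0 x₀, avgSum α f N x ^ P x ≠ ∞ := by
  have hb : 0 ≤ b := by linarith [hP 0, hPb 0]
  have hbound : ∀ x ∈ cell α 0 x₀, avgSum α f N x ^ P x ≤
      (1 + (N + 1 : ℕ) * (2 ^ (N * n) * 2)) ^ b := fun x hx => by
    calc avgSum α f N x ^ P x ≤ (1 + (N + 1 : ℕ) * (2 ^ (N * n) * 2)) ^ P x := by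
          refine ENNReal.rpow_le_rpow ?_ (by linarith [hP x])
          exact ((avgSum_mono α f x N.le_succ).trans (avgSum_succ_le hf2 N hx)).trans le_add_self
      _ ≤ (1 + (N + 1 : ℕ) * (2 ^ (N * n) * 2)) ^ b :=
          ENNReal.rpow_le_rpow_of_exponent_le le_self_add (hPb x)
  refine ne_top_of_le_ne_top ?_ (setLIntegral_mono' (measurableSet_cell α 0 x₀) hbound)
  rw [setLIntegral_const, volume_cell, zero_mul, pow_zero, inv_one, mul_one]
  refine ENNReal.rpow_ne_top_of_nonneg hb ?_
  exact ENNReal.add_ne_top.2 ⟨by simp, ENNReal.mul_ne_top (by simp)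
    (ENNReal.mul_ne_top (by simp) (by simp))⟩

lemma ofReal_mul_mul_rpow_sub_one_add_le {F G e : ℝ≥0∞} {r c : ℝ} (hr : 1 ≤ r) (hrb : r ≤ b)
    (hc : 1 ≤ c) (he : e ≤ 1) :
    ENNReal.ofReal b * (G * (ENNReal.ofReal c * F ^ (r - 1) + e)) ≤ 2⁻¹ * F ^ r +
      (ENNReal.ofReal ((2 * (b * c)) ^ b) + ENNReal.ofReal b) * (G ^ r + e) := by
  have hb : 1 ≤ b := hr.trans hrb
  have hGe : G * e ≤ G ^ r + e := calc
    G * e ≤ (1 + G ^ r) * e := by gcongr; exact le_one_add_rpow _ hr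
    _ = e + G ^ r * e := by ring
    _ ≤ e + G ^ r * 1 := by gcongr
    _ = G ^ r + e := by rw [mul_one, add_comm]
  calc ENNReal.ofReal b * (G * (ENNReal.ofReal c * F ^ (r - 1) + e))
      = ENNReal.ofReal (b * c) * (G * F ^ (r - 1)) + ENNReal.ofReal b * (G * e) := by
        rw [ENNReal.ofReal_mul (by linarith)]; ring
    _ ≤ 2⁻¹ * F ^ r + ENNReal.ofReal ((2 * (b * c)) ^ b) * (G ^ r + e) +
          ENNReal.ofReal b * (G ^ r + e) := by
        gcongr
        refine (mul_rpow_sub_one_le_half_add hr hrb (one_le_mul_of_one_le_of_one_le hb hc)).trans ?_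
        gcongr
        exact le_self_add
    _ = _ := by ring

lemma setLIntegral_avgSum_rpow_le_half_add (hPm : Measurable P) (hosc : CellOsc α P K)
    (ha : 1 ≤ a) (haP : ∀ x, a ≤ P x) (hPb : ∀ x, P x ≤ b) (hA : n + 2 ≤ A)
    {f : ℕ → Rn n → ℝ≥0∞} (hf : ∀ ν, Measurable (f ν)) {x₀ : Rn n}
    (hf2 : ∫⁻ x in cell α 0 x₀, ∑' ν, f ν x ≤ 2) (N : ℕ) :
    ∫⁻ x in cell α 0 x₀, avgSum α f N x ^ P x ≤
      ∫⁻ x in cell α 0 x₀, (2⁻¹ * avgSum α f N x ^ P x +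
        (ENNReal.ofReal ((2 * (b * Real.exp (A * K))) ^ b) + ENNReal.ofReal b) *
          ((∑' ν, f ν x) ^ P x + decayW (A * (a - 1)) x)) := by
  have hA0 : 0 ≤ A := le_trans (by positivity) hA
  have hP : ∀ x, 1 ≤ P x := fun x => ha.trans (haP x)
  set E : Rn n → ℝ≥0∞ := fun x => ENNReal.ofReal (Real.exp (A * K)) * avgSum α f N x ^ (P x - 1) +
    decayW (A * (a - 1)) x
  have hE : Measurable E :=
    (((measurable_avgSum α hf N).pow (hPm.sub_const 1)).const_mul _).add (measurable_decayW _)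
  have hterm : ∀ ν, Measurable fun x =>
      dyadicAvg α ν (f ν) x * avgSum α f (ν + 1) x ^ (P x - 1) := fun ν =>
    (measurable_dyadicAvg α ν (hf ν)).mul
      ((measurable_avgSum α hf (ν + 1)).pow (hPm.sub_const 1))
  have hfE : ∀ ν, Measurable fun x => f ν x * E x := fun ν => (hf ν).mul hE
  calc ∫⁻ x in cell α 0 x₀, avgSum α f N x ^ P x
      ≤ ∫⁻ x in cell α 0 x₀, ENNReal.ofReal b * ∑ ν ∈ Finset.range N,
          dyadicAvg α ν (f ν) x * avgSum α f (ν + 1) x ^ (P x - 1) := by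
        refine lintegral_mono fun x => (sum_range_rpow_le _ (hP x) N).trans ?_
        refine mul_le_mul_left (ENNReal.ofReal_le_ofReal (hPb x)) _
    _ = ENNReal.ofReal b * ∑ ν ∈ Finset.range N, ∫⁻ x in cell α 0 x₀,
          dyadicAvg α ν (f ν) x * avgSum α f (ν + 1) x ^ (P x - 1) := by
        rw [lintegral_const_mul' _ _ (by simp), lintegral_finsetSum _ fun ν _ => hterm ν]
    _ ≤ ENNReal.ofReal b * ∑ ν ∈ Finset.range N, ∫⁻ x in cell α 0 x₀, f ν x * E x := by
        gcongr 2 with ν hν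
        exact setLIntegral_dyadicAvg_mul_avgSum_le hPm hosc ha haP hA hf hf2
          (Finset.mem_range.1 hν)
    _ = ∫⁻ x in cell α 0 x₀, ENNReal.ofReal b * ((∑ ν ∈ Finset.range N, f ν x) * E x) := by
        rw [← lintegral_finsetSum _ fun ν _ => hfE ν, ← lintegral_const_mul' _ _ (by simp)]
        simp only [Finset.sum_mul]
    _ ≤ _ := by
        refine lintegral_mono fun x => le_trans ?_ (ofReal_mul_mul_rpow_sub_one_add_le (hP x)
          (hPb x) (Real.one_le_exp (mul_nonneg hA0 hosc.nonneg))
          (decayW_le_one (mul_nonneg hA0 (sub_nonneg.2 ha)) x))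
        gcongr
        exact ENNReal.sum_le_tsum _

lemma le_two_mul_of_le_half_add {s t : ℝ≥0∞} (hs : s ≠ ∞) (h : s ≤ 2⁻¹ * s + t) :
    s ≤ 2 * t := by
  have hhalf : 2⁻¹ * s + 2⁻¹ * s ≤ 2⁻¹ * s + t := by
    rwa [← add_mul, ENNReal.inv_two_add_inv_two, one_mul]
  rw [← ENNReal.inv_mul_le_iff two_ne_zero ENNReal.ofNat_ne_top]
  exact (ENNReal.add_le_add_iff_left (ENNReal.mul_ne_top (by simp) hs)).1 hhalf

lemma setLIntegral_avgSum_rpow_le (hPm : Measurable P) (hosc : CellOsc α P K)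
    (ha : 1 ≤ a) (haP : ∀ x, a ≤ P x) (hPb : ∀ x, P x ≤ b) (hA : n + 2 ≤ A)
    {f : ℕ → Rn n → ℝ≥0∞} (hf : ∀ ν, Measurable (f ν)) (hf1 : ∫⁻ x, (∑' ν, f ν x) ^ P x ≤ 1)
    (N : ℕ) (x₀ : Rn n) :
    ∫⁻ x in cell α 0 x₀, avgSum α f N x ^ P x ≤ ∫⁻ x in cell α 0 x₀,
      2 * ((ENNReal.ofReal ((2 * (b * Real.exp (A * K))) ^ b) + ENNReal.ofReal b) *
        ((∑' ν, f ν x) ^ P x + decayW (A * (a - 1)) x)) := by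
  have hP : ∀ x, 1 ≤ P x := fun x => ha.trans (haP x)
  have hf2 := setLIntegral_cell_zero_le_two (α := α) hP hf1 x₀
  have hFP : Measurable fun x => avgSum α f N x ^ P x := (measurable_avgSum α hf N).pow hPm
  have h := setLIntegral_avgSum_rpow_le_half_add hPm hosc ha haP hPb hA hf hf2 N
  rw [lintegral_add_left (hFP.const_mul _), lintegral_const_mul _ hFP] at h
  rw [lintegral_const_mul' _ _ (by simp)]
  exact le_two_mul_of_le_half_add (lintegral_avgSum_rpow_ne_top hP hPb hf2 N) h

lemma lintegral_tsum_dyadicAvg_rpow_le_of_avgSum (hPm : Measurable P) (hP : ∀ x, 0 ≤ P x)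
    {f : ℕ → Rn n → ℝ≥0∞} (hf : ∀ ν, Measurable (f ν)) {C : ℝ≥0∞}
    (hC : ∀ N, ∫⁻ x, avgSum α f N x ^ P x ≤ C) :
    ∫⁻ x, (∑' ν, dyadicAvg α ν (f ν) x) ^ P x ≤ C := by
  refine le_of_tendsto' (lintegral_tendsto_of_tendsto_of_monotone
    (f := fun N x => avgSum α f N x ^ P x) ?_ ?_ ?_) hC
  · exact fun N => ((measurable_avgSum α hf N).pow hPm).aemeasurable
  · exact Filter.Eventually.of_forall fun x N M h =>
      ENNReal.rpow_le_rpow (avgSum_mono α f x h) (hP x)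
  · exact Filter.Eventually.of_forall fun x =>
      (ENNReal.continuous_rpow_const.tendsto _).comp (ENNReal.tendsto_nat_tsum _)

theorem exists_lintegral_tsum_dyadicAvg_rpow_le (hPm : Measurable P) (hosc : CellOsc α P K)
    (ha : 1 < a) (haP : ∀ x, a ≤ P x) (hPb : ∀ x, P x ≤ b) :
    ∃ C : ℝ≥0∞, C ≠ ∞ ∧ ∀ f : ℕ → Rn n → ℝ≥0∞, (∀ ν, Measurable (f ν)) →
      ∫⁻ x, (∑' ν, f ν x) ^ P x ≤ 1 → ∫⁻ x, (∑' ν, dyadicAvg α ν (f ν) x) ^ P x ≤ C := by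
  set A : ℝ := max (n + 2) ((n + 1) / (a - 1))
  have hAa : (n : ℝ) < A * (a - 1) := by
    have hdiv : (n + 1) / (a - 1) ≤ A := le_max_right _ _
    rw [div_le_iff₀ (by linarith)] at hdiv
    linarith
  set c := ENNReal.ofReal ((2 * (b * Real.exp (A * K))) ^ b) + ENNReal.ofReal b
  have hc : c ≠ ∞ := ENNReal.add_ne_top.2 ⟨by simp, by simp⟩
  refine ⟨2 * (c * (1 + ∫⁻ x : Rn n, decayW (A * (a - 1)) x)), ?_, fun f hf hf1 => ?_⟩
  · exact ENNReal.mul_ne_top (by simp) (ENNReal.mul_ne_top hc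
      (ENNReal.add_ne_top.2 ⟨by simp, (lintegral_decayW_lt_top hAa).ne⟩))
  refine lintegral_tsum_dyadicAvg_rpow_le_of_avgSum hPm (fun x => by linarith [haP x]) hf
    fun N => ?_
  refine (lintegral_le_of_forall_unit_cell α fun x₀ => setLIntegral_avgSum_rpow_le hPm hosc
    ha.le haP hPb (A := A) (le_max_left _ _) hf hf1 N x₀).trans ?_
  rw [lintegral_const_mul' _ _ (by simp), lintegral_const_mul' _ _ hc,
    lintegral_add_right _ (measurable_decayW _)]
  gcongr

end

/-! ### The dyadic maximal function: the case `ℓ^∞` -/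

lemma measurable_eval_measurable_index {β : Type*} [MeasurableSpace β] {u : ℕ → β → ℝ≥0∞}
    (hu : ∀ ν, Measurable (u ν)) {j : β → ℕ} (hj : Measurable j) :
    Measurable fun x => u (j x) x :=
  (measurable_from_prod_countable_right (f := fun z : ℕ × β => u z.1 z.2) hu).comp
    (hj.prodMk measurable_id)

lemma exists_measurable_argmax {β : Type*} [MeasurableSpace β] {u : ℕ → β → ℝ≥0∞}
    (hu : ∀ ν, Measurable (u ν)) (N : ℕ) :
    ∃ j : β → ℕ, Measurable j ∧ ∀ x, ∀ ν ≤ N, u ν x ≤ u (j x) x := by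
  classical
  induction N with
  | zero => exact ⟨fun _ => 0, measurable_const, by simp⟩
  | succ N ih =>
    obtain ⟨j, hj, hle⟩ := ih
    have hs : MeasurableSet {x | u (j x) x < u (N + 1) x} :=
      measurableSet_lt (measurable_eval_measurable_index hu hj) (hu _)
    refine ⟨fun x => if u (j x) x < u (N + 1) x then N + 1 else j x,
      Measurable.ite hs measurable_const hj, fun x ν hν => ?_⟩
    beta_reduce
    rcases Nat.le_succ_iff.1 hν with hνN | rfl <;> split_ifs with hlt
    · exact (hle x ν hνN).trans hlt.le
    · exact hle x ν hνN
    · exact le_rfl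
    · exact not_lt.1 hlt

lemma lintegral_iSup_rpow_le {β : Type*} [MeasurableSpace β] {μ : Measure β} {P : β → ℝ}
    (hPm : Measurable P) (hP : ∀ x, 0 < P x) {u : ℕ → β → ℝ≥0∞} (hu : ∀ ν, Measurable (u ν))
    {C : ℝ≥0∞} (H : ∀ j : β → ℕ, Measurable j → ∫⁻ x, u (j x) x ^ P x ∂μ ≤ C) :
    ∫⁻ x, (⨆ ν, u ν x) ^ P x ∂μ ≤ C := by
  set v : ℕ → β → ℝ≥0∞ := fun N x => ⨆ ν, ⨆ (_ : ν ≤ N), u ν x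
  have hv : ∀ N, Measurable (v N) := fun N =>
    Measurable.iSup fun ν => Measurable.iSup_Prop _ (hu ν)
  have hvmono : ∀ x, Monotone fun N => v N x := fun x N M h =>
    iSup_mono fun ν => iSup_const_mono fun hν => hν.trans h
  have hsup : ∀ x, ⨆ ν, u ν x = ⨆ N, v N x := fun x =>
    le_antisymm (iSup_le fun ν => le_iSup_of_le ν (le_iSup₂_of_le ν le_rfl le_rfl))
      (iSup_le fun N => iSup₂_le fun ν _ => le_iSup (fun ν => u ν x) ν)
  calc ∫⁻ x, (⨆ ν, u ν x) ^ P x ∂μ = ∫⁻ x, ⨆ N, v N x ^ P x ∂μ :=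
        lintegral_congr fun x => by
          rw [hsup]
          exact (ENNReal.orderIsoRpow (P x) (hP x)).map_iSup _
    _ = ⨆ N, ∫⁻ x, v N x ^ P x ∂μ := lintegral_iSup (fun N => (hv N).pow hPm)
        fun N M h x => ENNReal.rpow_le_rpow (hvmono x h) (hP x).le
    _ ≤ C := iSup_le fun N => by
      obtain ⟨j, hj, hle⟩ := exists_measurable_argmax hu N
      exact (lintegral_mono fun x => ENNReal.rpow_le_rpow (iSup₂_le (hle x)) (hP x).le).trans
        (H j hj)

lemma abs_conjExponent_sub_le {s t a : ℝ} (ha : 1 < a) (hs : a ≤ s) (ht : a ≤ t) :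
    |s.conjExponent - t.conjExponent| ≤ |s - t| / (a - 1) ^ 2 := by
  have hs1 : a - 1 ≤ s - 1 := by linarith
  have ht1 : a - 1 ≤ t - 1 := by linarith
  have ha1 : 0 < a - 1 := by linarith
  have hdiff : s.conjExponent - t.conjExponent = (t - s) / ((s - 1) * (t - 1)) := by
    unfold Real.conjExponent
    rw [div_sub_div _ _ (by linarith) (by linarith)]
    congr 1
    ring
  rw [hdiff, abs_div, abs_sub_comm, abs_of_pos (mul_pos (ha1.trans_le hs1) (ha1.trans_le ht1)), sq]
  have hs0 : 0 ≤ s - 1 := by linarith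
  gcongr

lemma conjExponent_le_conjExponent {s t : ℝ} (hs : 1 < s) (hst : s ≤ t) :
    t.conjExponent ≤ s.conjExponent := by
  unfold Real.conjExponent
  rw [div_le_div_iff₀ (by linarith) (by linarith)]
  linarith

lemma one_lt_conjExponent {b : ℝ} (hb : 1 < b) : 1 < b.conjExponent :=
  (Real.HolderConjugate.conjExponent hb).symm.lt

lemma CellOsc.conjExponent {α : Rn n} {P : Rn n → ℝ} {K a : ℝ} (h : CellOsc α P K) (ha : 1 < a)
    (haP : ∀ x, a ≤ P x) : CellOsc α (fun x => (P x).conjExponent) (K / (a - 1) ^ 2) := by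
  intro ν x y hy
  have hlog := one_le_log_exp_add (norm_nonneg x)
  calc _ ≤ |P x - P y| / (a - 1) ^ 2 * (ν + Real.log (Real.exp 1 + ‖x‖)) := by
        gcongr
        exact abs_conjExponent_sub_le ha (haP x) (haP y)
    _ = |P x - P y| * (ν + Real.log (Real.exp 1 + ‖x‖)) / (a - 1) ^ 2 := by ring
    _ ≤ _ := by
      gcongr
      exact h ν x y hy

lemma measurable_conjExponent_comp {β : Type*} [MeasurableSpace β] {P : β → ℝ}
    (hPm : Measurable P) : Measurable fun x => (P x).conjExponent := by
  unfold Real.conjExponent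
  fun_prop

lemma lintegral_mul_le_add_conjExponent {β : Type*} [MeasurableSpace β] {μ : Measure β}
    {P : β → ℝ} (hPm : Measurable P) (hP : ∀ x, 1 < P x) {F : β → ℝ≥0∞} (hF : Measurable F)
    (G : β → ℝ≥0∞) :
    ∫⁻ x, F x * G x ∂μ ≤ (∫⁻ x, F x ^ P x ∂μ) + ∫⁻ x, G x ^ (P x).conjExponent ∂μ := by
  rw [← lintegral_add_left (hF.pow hPm)]
  exact lintegral_mono fun x =>
    mul_le_rpow_add_rpow _ _ (Real.HolderConjugate.conjExponent (hP x))

lemma lintegral_rpow_le_of_div {β : Type*} [MeasurableSpace β] {μ : Measure β} {P : β → ℝ} {b : ℝ}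
    (hP0 : ∀ x, 0 ≤ P x) (hPb : ∀ x, P x ≤ b) (hb : 0 ≤ b) {F : β → ℝ≥0∞} {c D : ℝ≥0∞}
    (hc : 1 ≤ c) (hct : c ≠ ∞) (h : ∫⁻ x, (F x / c) ^ P x ∂μ ≤ D) :
    ∫⁻ x, F x ^ P x ∂μ ≤ c ^ b * D := by
  have hc0 : c ≠ 0 := (zero_lt_one.trans_le hc).ne'
  calc ∫⁻ x, F x ^ P x ∂μ ≤ ∫⁻ x, c ^ b * (F x / c) ^ P x ∂μ := by
        refine lintegral_mono fun x => ?_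
        calc F x ^ P x = (c * (F x / c)) ^ P x := by rw [ENNReal.mul_div_cancel hc0 hct]
          _ = c ^ P x * (F x / c) ^ P x := ENNReal.mul_rpow_of_nonneg _ _ (hP0 x)
          _ ≤ _ := by
            gcongr
            exact hPb x
    _ = c ^ b * ∫⁻ x, (F x / c) ^ P x ∂μ :=
        lintegral_const_mul' _ _ (ENNReal.rpow_ne_top_of_nonneg hb hct)
    _ ≤ _ := by gcongr

section MaximalFunction

variable {α : Rn n} {P : Rn n → ℝ} {K a b : ℝ}

/-- The average being self-adjoint, the linearised maximal function `x ↦ dyadicAvg α (j x) G x` is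
dual to the sum of the averages of the restrictions of `g` to the level sets of `j`. -/
lemma lintegral_dyadicAvg_index_mul {G g : Rn n → ℝ≥0∞} (hG : Measurable G) (hg : Measurable g)
    {j : Rn n → ℕ} (hj : Measurable j) :
    ∫⁻ x, dyadicAvg α (j x) G x * g x =
      ∫⁻ x, G x * ∑' ν, dyadicAvg α ν ((j ⁻¹' {ν}).indicator g) x := by
  set gs : ℕ → Rn n → ℝ≥0∞ := fun ν => (j ⁻¹' {ν}).indicator g
  have hgsm : ∀ ν, Measurable (gs ν) := fun ν => hg.indicator (hj (measurableSet_singleton ν))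
  have hsplit : ∀ x, dyadicAvg α (j x) G x * g x = ∑' ν, dyadicAvg α ν G x * gs ν x := fun x => by
    rw [tsum_eq_single (j x) fun ν hν => by simp [gs, hν.symm]]
    simp [gs]
  have hGm : ∀ ν, Measurable fun x => G x * dyadicAvg α ν (gs ν) x := fun ν =>
    hG.mul (measurable_dyadicAvg α ν (hgsm ν))
  calc ∫⁻ x, dyadicAvg α (j x) G x * g x = ∫⁻ x, ∑' ν, dyadicAvg α ν G x * gs ν x :=
        lintegral_congr hsplit
    _ = ∑' ν, ∫⁻ x, dyadicAvg α ν G x * gs ν x :=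
        lintegral_tsum fun ν => ((measurable_dyadicAvg α ν hG).mul (hgsm ν)).aemeasurable
    _ = ∑' ν, ∫⁻ x, G x * dyadicAvg α ν (gs ν) x :=
        tsum_congr fun ν => lintegral_dyadicAvg_mul α ν hG (hgsm ν)
    _ = ∫⁻ x, G x * ∑' ν, dyadicAvg α ν (gs ν) x := by
        rw [← lintegral_tsum fun ν => (hGm ν).aemeasurable]
        simp only [ENNReal.tsum_mul_left]

lemma tsum_indicator_preimage_singleton {β : Type*} (j : β → ℕ) (g : β → ℝ≥0∞) (x : β) :
    ∑' ν, (j ⁻¹' {ν}).indicator g x = g x := by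
  rw [tsum_eq_single (j x) fun ν hν => by simp [hν.symm]]
  simp

theorem exists_lintegral_iSup_dyadicAvg_rpow_le (hPm : Measurable P) (hosc : CellOsc α P K)
    (ha : 1 < a) (haP : ∀ x, a ≤ P x) (hPb : ∀ x, P x ≤ b) :
    ∃ C : ℝ≥0∞, C ≠ ∞ ∧ ∀ G : Rn n → ℝ≥0∞, Measurable G → ∫⁻ x, G x ^ P x ≤ 1 →
      ∫⁻ x, (⨆ ν, dyadicAvg α ν G x) ^ P x ≤ C := by
  have hP1 : ∀ x, 1 < P x := fun x => ha.trans_le (haP x)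
  have hb : 1 < b := (hP1 0).trans_le (hPb 0)
  have hP'm := measurable_conjExponent_comp hPm
  obtain ⟨C, hC, hCf⟩ := exists_lintegral_tsum_dyadicAvg_rpow_le hP'm (hosc.conjExponent ha haP)
    (one_lt_conjExponent hb) (fun x => conjExponent_le_conjExponent (hP1 x) (hPb x))
    (fun x => conjExponent_le_conjExponent ha (haP x))
  have hD : 1 ≤ 2 * (1 + C) := one_le_mul one_le_two le_self_add
  have hDt : 2 * (1 + C) ≠ ∞ := ENNReal.mul_ne_top (by simp) (by simp [hC])
  refine ⟨(2 * (1 + C)) ^ b * 1, ENNReal.mul_ne_top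
    (ENNReal.rpow_ne_top_of_nonneg (by linarith) hDt) (by simp), fun G hG hGP => ?_⟩
  have hum : ∀ ν, Measurable (dyadicAvg α ν G) := fun ν => measurable_dyadicAvg α ν hG
  refine lintegral_iSup_rpow_le hPm (fun x => one_pos.trans (hP1 x)) hum fun j hj => ?_
  refine lintegral_rpow_le_of_div (fun x => by linarith [hP1 x]) hPb (by linarith) hD hDt ?_
  refine lintegral_div_rpow_le_one_of_duality hP'm
    (fun x => Real.HolderConjugate.conjExponent (hP1 x))
    (measurable_eval_measurable_index hum hj) (by simp) (by simp [hC]) fun g hg hg1 => ?_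
  have hdual := hCf (fun ν => (j ⁻¹' {ν}).indicator g)
    (fun ν => hg.indicator (hj (measurableSet_singleton ν)))
    (by simpa only [tsum_indicator_preimage_singleton] using hg1)
  rw [lintegral_dyadicAvg_index_mul hG hg hj]
  exact (lintegral_mul_le_add_conjExponent hPm hP1 hG _).trans (add_le_add hGP hdual)

end MaximalFunction

/-! ### Jensen's inequality for dyadic averages with a variable exponent -/

lemma lintegral_mul_rpow_le_of_lintegral_le_one {β : Type*} [MeasurableSpace β] {μ : Measure β}
    {w φ : β → ℝ≥0∞} (hw : AEMeasurable w μ) (hφ : AEMeasurable φ μ) (hw1 : ∫⁻ x, w x ∂μ ≤ 1)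
    {κ : ℝ} (hκ : 1 ≤ κ) : (∫⁻ x, w x * φ x ∂μ) ^ κ ≤ ∫⁻ x, w x * φ x ^ κ ∂μ := by
  have hκ0 : 0 < κ := by linarith
  have hκinv : 0 ≤ 1 - κ⁻¹ := sub_nonneg.2 (inv_le_one_of_one_le₀ hκ)
  have hsplit : ∀ x, (w x * φ x ^ κ) ^ κ⁻¹ * w x ^ (1 - κ⁻¹) = w x * φ x := fun x => by
    rw [ENNReal.mul_rpow_of_nonneg _ _ (inv_nonneg.2 hκ0.le), ENNReal.rpow_rpow_inv hκ0.ne',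
      mul_right_comm, ← ENNReal.rpow_add_of_nonneg _ _ (inv_nonneg.2 hκ0.le) hκinv,
      add_sub_cancel, ENNReal.rpow_one]
  have hholder := ENNReal.lintegral_mul_norm_pow_le (hw.mul (hφ.pow_const κ)) hw
    (inv_nonneg.2 hκ0.le) hκinv (by ring)
  simp only [Pi.mul_apply, hsplit] at hholder
  calc (∫⁻ x, w x * φ x ∂μ) ^ κ
      ≤ ((∫⁻ x, w x * φ x ^ κ ∂μ) ^ κ⁻¹ * (∫⁻ x, w x ∂μ) ^ (1 - κ⁻¹)) ^ κ := by gcongr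
    _ ≤ ((∫⁻ x, w x * φ x ^ κ ∂μ) ^ κ⁻¹ * 1) ^ κ := by
        gcongr
        exact ENNReal.rpow_le_one hw1 hκinv
    _ = _ := by rw [mul_one, ENNReal.rpow_inv_rpow hκ0.ne']

lemma rpow_le_exp_mul_rpow_add_two_inv_pow {ρ : ℝ≥0∞} (hρ : ρ ≤ 1) {e K : ℝ} (he : 1 ≤ e)
    (hK : 0 ≤ K) (j : ℕ) :
    ρ ^ e ≤ ENNReal.ofReal (Real.exp K) * ρ ^ (e + K / (j + 1)) + 2⁻¹ ^ (j + 1) := by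
  have hj : (0 : ℝ) < j + 1 := by positivity
  have h2 : (1 : ℝ) ≤ 2 ^ (j + 1) := one_le_pow₀ one_le_two
  have hlog : |e - (e + K / (j + 1))| * Real.log (2 ^ (j + 1)) ≤ K := by
    rw [sub_add_cancel_left, abs_neg, abs_of_nonneg (by positivity), Real.log_pow,
      Nat.cast_add, Nat.cast_one, div_mul_eq_mul_div, mul_left_comm, mul_div_cancel_left₀ _ hj.ne']
    nlinarith [Real.log_two_lt_d9]
  have h := rpow_le_exp_mul_rpow_add_rpow_neg (t := ρ) (W := 2 ^ (j + 1)) (A := 1) (K := K)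
    (e₀ := 1) (e₁ := e) (e₂ := e + K / (j + 1)) h2 zero_le_one zero_le_one he
    (by linarith [div_nonneg hK hj.le]) hlog
    (by rw [Real.rpow_one]; exact hρ.trans (by simpa using ENNReal.ofReal_le_ofReal h2))
  rwa [one_mul, one_mul, Real.rpow_neg_one, ENNReal.ofReal_inv_of_pos (by positivity),
    ENNReal.ofReal_pow zero_le_two, ENNReal.ofReal_ofNat, ENNReal.inv_pow] at h

section Jensen

variable {α : Rn n} {q : Rn n → ℝ} {K : ℝ}

lemma CellOsc.le_add_div (hosc : CellOsc α q K) {j : ℕ} {x y : Rn n} (hy : y ∈ cell α j x) :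
    q y ≤ q x + (K + 1) / (j + 1) := by
  have hj : (0 : ℝ) < j + 1 := by positivity
  have hlog := one_le_log_exp_add (norm_nonneg x)
  have habs : |q x - q y| ≤ (K + 1) / (j + 1) := by
    rw [le_div_iff₀ hj]
    calc |q x - q y| * (j + 1) ≤ |q x - q y| * (j + Real.log (Real.exp 1 + ‖x‖)) := by gcongr
      _ ≤ K := hosc j x y hy
      _ ≤ K + 1 := by linarith
  linarith [neg_le_of_abs_le habs]

/-- Jensen's inequality for the probability measure on the cell whose density is a multiple of
`G`. -/
lemma dyadicAvg_div_rpow_le {f G : Rn n → ℝ≥0∞} (hqm : Measurable q) (hf : Measurable f)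
    (hG : Measurable G) (hfG : ∀ x, f x ≤ G x) {j : ℕ} {x : Rn n} {κ : ℝ} (hκ : 1 ≤ κ)
    (hqκ : ∀ y ∈ cell α j x, q y ≤ κ) (hGt : dyadicAvg α j G x ≠ ∞) :
    (dyadicAvg α j f x / dyadicAvg α j G x) ^ κ ≤
      dyadicAvg α j (fun y => G y * (f y / G y) ^ q y) x / dyadicAvg α j G x := by
  set γ := dyadicAvg α j G x with hγ
  set w : Rn n → ℝ≥0∞ := fun y => 2 ^ (j * n) / γ * G y
  have hwm : Measurable w := hG.const_mul _
  have hφm : Measurable fun y => f y / G y := hf.div hG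
  have hHm : Measurable fun y => G y * (f y / G y) ^ q y := hG.mul (hφm.pow hqm)
  have hscale : ∀ h : Rn n → ℝ≥0∞, Measurable h →
      ∫⁻ y in cell α j x, 2 ^ (j * n) / γ * h y = dyadicAvg α j h x / γ := fun h hh => by
    rw [lintegral_const_mul _ hh, dyadicAvg, ENNReal.mul_div_right_comm]
  have hw1 : ∫⁻ y in cell α j x, w y ≤ 1 := (hscale G hG).trans_le ENNReal.div_self_le_one
  have hGfin : ∀ᵐ y ∂volume.restrict (cell α j x), G y < ∞ := ae_lt_top hG fun h =>
    hGt (by rw [hγ, dyadicAvg, h, ENNReal.mul_top (by simp)])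
  have hwφ : ∫⁻ y in cell α j x, w y * (f y / G y) = dyadicAvg α j f x / γ := by
    rw [← hscale f hf]
    refine lintegral_congr_ae (hGfin.mono fun y hy => ?_)
    rcases eq_or_ne (G y) 0 with h0 | h0
    · simp [w, h0, nonpos_iff_eq_zero.1 (h0 ▸ hfG y)]
    · simp only [w, mul_assoc, ENNReal.mul_div_cancel h0 hy.ne]
  rw [← hwφ, ← hscale _ hHm]
  refine (lintegral_mul_rpow_le_of_lintegral_le_one hwm.aemeasurable hφm.aemeasurable
    hw1 hκ).trans (setLIntegral_mono' (measurableSet_cell α j x) fun y hy => ?_)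
  simp only [w, mul_assoc]
  gcongr 2
  exact ENNReal.rpow_le_rpow_of_exponent_ge
    (ENNReal.div_le_of_le_mul (by simpa using hfG y)) (hqκ y hy)

lemma dyadicAvg_rpow_le (hqm : Measurable q) (hosc : CellOsc α q K) (hq : ∀ x, 1 ≤ q x)
    {f G : Rn n → ℝ≥0∞} (hf : Measurable f) (hG : Measurable G) (hfG : ∀ x, f x ≤ G x) (j : ℕ)
    (x : Rn n) :
    dyadicAvg α j f x ^ q x ≤ ENNReal.ofReal (Real.exp (K + 1)) * (dyadicAvg α j G x ^ (q x - 1) *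
      dyadicAvg α j (fun y => G y * (f y / G y) ^ q y) x) +
      2⁻¹ ^ (j + 1) * dyadicAvg α j G x ^ q x := by
  have hq0 : 0 < q x := zero_lt_one.trans_le (hq x)
  have hK : 0 ≤ K + 1 := by linarith [hosc.nonneg]
  set γ := dyadicAvg α j G x
  have hle : dyadicAvg α j f x ≤ γ := dyadicAvg_mono_on_cell fun y _ => hfG y
  rcases eq_or_ne γ ∞ with hγt | hγt
  · rw [hγt, ENNReal.top_rpow_of_pos hq0, ENNReal.mul_top (by simp)]
    simp
  rcases eq_or_ne γ 0 with hγ0 | hγ0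
  · rw [nonpos_iff_eq_zero.1 (hle.trans_eq hγ0), ENNReal.zero_rpow_of_pos hq0]
    exact zero_le
  set H := dyadicAvg α j (fun y => G y * (f y / G y) ^ q y) x
  set κ := q x + (K + 1) / (j + 1)
  have hκ : 1 ≤ κ := (hq x).trans (le_add_of_nonneg_right (by positivity))
  have hjensen : (dyadicAvg α j f x / γ) ^ κ ≤ H / γ :=
    dyadicAvg_div_rpow_le hqm hf hG hfG hκ (fun y hy => hosc.le_add_div hy) hγt
  calc dyadicAvg α j f x ^ q x = γ ^ q x * (dyadicAvg α j f x / γ) ^ q x := by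
        rw [← ENNReal.mul_rpow_of_nonneg _ _ hq0.le, ENNReal.mul_div_cancel hγ0 hγt]
    _ ≤ γ ^ q x * (ENNReal.ofReal (Real.exp (K + 1)) * (H / γ) + 2⁻¹ ^ (j + 1)) := by
        gcongr
        refine (rpow_le_exp_mul_rpow_add_two_inv_pow
          (ENNReal.div_le_of_le_mul (by simpa using hle)) (hq x) hK j).trans ?_
        gcongr
    _ = ENNReal.ofReal (Real.exp (K + 1)) * (γ ^ (q x - 1) * (γ * (H / γ))) +
        2⁻¹ ^ (j + 1) * γ ^ q x := by
        rw [mul_add, mul_comm (γ ^ q x) (2⁻¹ ^ (j + 1)), ← mul_rpow_sub_one γ (hq x)]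
        ring
    _ = _ := by rw [ENNReal.mul_div_cancel hγ0 hγt]

end Jensen

/-! ### Domination of `η_{ν,m}` by dyadic averages -/

/-- A dyadic point between `s` and `t` and a dyadic point shifted by `1 / 3` between `s` and `t`
would be closer than `2 ^ (-j) / 3` to each other, which is impossible since `3 ∤ 2 ^ j`. -/
lemma floor_eq_or_floor_sub_third_eq {s t : ℝ} {j : ℕ} (h : |s - t| ≤ (2 ^ j)⁻¹ / 4) :
    ⌊(2 : ℝ) ^ j * s⌋ = ⌊(2 : ℝ) ^ j * t⌋ ∨
      ⌊(2 : ℝ) ^ j * (s - 1 / 3)⌋ = ⌊(2 : ℝ) ^ j * (t - 1 / 3)⌋ := by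
  wlog hst : s ≤ t generalizing s t
  · have := this (s := t) (t := s) (by rwa [abs_sub_comm]) (le_of_not_ge hst)
    simpa only [eq_comm] using this
  by_contra! hne
  have hp : (0 : ℝ) < 2 ^ j := by positivity
  have hgap : (2 : ℝ) ^ j * t - 2 ^ j * s ≤ 1 / 4 := by
    calc (2 : ℝ) ^ j * t - 2 ^ j * s = 2 ^ j * (t - s) := by ring
      _ ≤ 2 ^ j * ((2 ^ j)⁻¹ / 4) := by
        gcongr
        exact (le_abs_self _).trans (abs_sub_comm s t ▸ h)
      _ = 1 / 4 := by field_simp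
  have hlt : ∀ {σ τ : ℝ}, σ ≤ τ → ⌊σ⌋ ≠ ⌊τ⌋ → σ < ⌊τ⌋ := fun hle hne =>
    Int.floor_lt.1 (lt_of_le_of_ne (Int.floor_le_floor hle) hne)
  have hk := hlt (mul_le_mul_of_nonneg_left hst hp.le) hne.1
  have hl := hlt (mul_le_mul_of_nonneg_left (sub_le_sub_right hst (1 / 3)) hp.le) hne.2
  have hk' := Int.floor_le ((2 : ℝ) ^ j * t)
  have hl' := Int.floor_le ((2 : ℝ) ^ j * (t - 1 / 3))
  set k := ⌊(2 : ℝ) ^ j * t⌋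
  set l := ⌊(2 : ℝ) ^ j * (t - 1 / 3)⌋
  have habs : |((3 * (k - l) - 2 ^ j : ℤ) : ℝ)| < 1 := by
    push_cast
    rw [abs_lt]
    constructor <;> linarith
  have hzero : 3 * (k - l) - 2 ^ j = 0 := by
    rw [← Int.cast_abs] at habs
    exact Int.abs_lt_one_iff.1 (by exact_mod_cast habs)
  have hdvd : (3 : ℤ) ∣ 2 := Int.prime_three.dvd_of_dvd_pow (n := j) ⟨k - l, by linarith⟩
  norm_num at hdvd

/-- The offsets of `2 ^ n` dyadic grids, shifted by a third in some of the coordinates: any two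
points at distance at most `2 ^ (-j) / 4` share a cell of generation `j` of one of these grids. -/
def thirdShift (b : Fin n → Bool) : Rn n := WithLp.toLp 2 fun i => if b i then 1 / 3 else 0

lemma exists_mem_cell_thirdShift {x y : Rn n} {j : ℕ} (h : ‖x - y‖ ≤ (2 ^ j)⁻¹ / 4) :
    ∃ b : Fin n → Bool, y ∈ cell (thirdShift b) j x := by
  classical
  refine ⟨fun i => decide (⌊(2 : ℝ) ^ j * y i⌋ ≠ ⌊(2 : ℝ) ^ j * x i⌋), fun i => ?_⟩
  have hi : |y i - x i| ≤ (2 ^ j)⁻¹ / 4 := by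
    rw [abs_sub_comm]
    exact (PiLp.norm_apply_le (x - y) i).trans h
  by_cases heq : ⌊(2 : ℝ) ^ j * y i⌋ = ⌊(2 : ℝ) ^ j * x i⌋
  · simp [thirdShift, heq]
  · simpa [thirdShift, heq] using floor_eq_or_floor_sub_third_eq hi

lemma exists_dyadic_scale {t : ℝ} (ht : t ≤ 1 / 4) (ν : ℕ) :
    ∃ j ≤ ν, t ≤ (2 ^ j)⁻¹ / 4 ∧ (j = ν ∨ (2 ^ (j + 1))⁻¹ / 4 < t) := by
  induction ν with
  | zero => exact ⟨0, le_rfl, by simpa using ht, Or.inl rfl⟩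
  | succ ν ih =>
    obtain ⟨j, hj, htj, rfl | hlt⟩ := ih
    · rcases le_or_gt t ((2 ^ (j + 1))⁻¹ / 4) with hle | hlt
      · exact ⟨j + 1, le_rfl, hle, Or.inl rfl⟩
      · exact ⟨j, by omega, htj, Or.inr hlt⟩
    · exact ⟨j, by omega, htj, Or.inr hlt⟩

lemma etaK_le_of_pow_div_le {m : ℝ} (hm : 0 ≤ m) {j k : ℕ} {z : Rn n}
    (h : (2 : ℝ) ^ k / 8 ≤ 1 + 2 ^ (j + k) * ‖z‖) :
    etaK (j + k) m z ≤
      ENNReal.ofReal (8 ^ m) * (ENNReal.ofReal (2 ^ (-(m - n))) ^ k * 2 ^ (j * n)) := by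
  rw [← ENNReal.ofReal_pow (by positivity), ← ENNReal.ofReal_ofNat,
    ← ENNReal.ofReal_pow zero_le_two, ← ENNReal.ofReal_mul (by positivity),
    ← ENNReal.ofReal_mul (by positivity)]
  refine ENNReal.ofReal_le_ofReal ?_
  have hdecay : (1 + 2 ^ (j + k) * ‖z‖) ^ (-m) ≤ ((2 : ℝ) ^ k / 8) ^ (-m) :=
    Real.rpow_le_rpow_of_nonpos (by positivity) h (by linarith)
  calc (2 : ℝ) ^ ((j + k) * n) * (1 + 2 ^ (j + k) * ‖z‖) ^ (-m)
      ≤ (2 : ℝ) ^ ((j + k) * n) * ((2 : ℝ) ^ k / 8) ^ (-m) := by gcongr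
    _ = _ := by
      rw [Real.div_rpow (by positivity) (by positivity), Real.rpow_neg (by norm_num : (0 : ℝ) ≤ 8),
        div_inv_eq_mul, ← Real.rpow_natCast 2 k, ← Real.rpow_mul zero_le_two,
        ← Real.rpow_natCast 2 ((j + k) * n), ← Real.rpow_natCast 2 (j * n),
        ← Real.rpow_natCast _ k, ← Real.rpow_mul zero_le_two, ← mul_assoc,
        ← Real.rpow_add zero_lt_two, mul_comm, ← Real.rpow_add zero_lt_two]
      congr 2
      push_cast
      ring

lemma exists_etaK_le_of_norm_sub_le {m : ℝ} (hm : 0 ≤ m) (ν : ℕ) {x y : Rn n}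
    (h : ‖x - y‖ ≤ 1 / 4) :
    ∃ j k, j + k = ν ∧ (∃ b : Fin n → Bool, y ∈ cell (thirdShift b) j x) ∧
      etaK ν m (x - y) ≤
        ENNReal.ofReal (8 ^ m) * (ENNReal.ofReal (2 ^ (-(m - n))) ^ k * 2 ^ (j * n)) := by
  obtain ⟨j, hj, htj, hscale⟩ := exists_dyadic_scale h ν
  obtain ⟨k, rfl⟩ := Nat.exists_eq_add_of_le hj
  refine ⟨j, k, rfl, exists_mem_cell_thirdShift htj, etaK_le_of_pow_div_le hm ?_⟩
  rcases hscale with hk | hlt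
  · obtain rfl : k = 0 := by omega
    have : 0 ≤ (2 : ℝ) ^ (j + 0) * ‖x - y‖ := by positivity
    rw [pow_zero]
    linarith
  · calc (2 : ℝ) ^ k / 8 = 2 ^ (j + k) * ((2 ^ (j + 1))⁻¹ / 4) := by
          rw [pow_add, pow_add]
          field_simp
          norm_num
      _ ≤ 2 ^ (j + k) * ‖x - y‖ := by gcongr
      _ ≤ 1 + 2 ^ (j + k) * ‖x - y‖ := by linarith

lemma etaK_le_of_lt_norm {m : ℝ} (hm : 0 ≤ m) (ν : ℕ) {z : Rn n} (hz : 1 / 4 < ‖z‖) :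
    etaK ν m z ≤ ENNReal.ofReal (8 ^ m) * (ENNReal.ofReal (2 ^ (-(m - n))) ^ ν * etaK 0 m z) := by
  rw [etaK, etaK, ← ENNReal.ofReal_pow (by positivity), ← ENNReal.ofReal_mul (by positivity),
    ← ENNReal.ofReal_mul (by positivity)]
  refine ENNReal.ofReal_le_ofReal ?_
  rw [zero_mul, pow_zero, one_mul, one_mul]
  have hscale : (2 : ℝ) ^ ν * ((1 + ‖z‖) / 8) ≤ 1 + 2 ^ ν * ‖z‖ := by
    have : (2 : ℝ) ^ ν * ((1 + ‖z‖) / 8) ≤ 2 ^ ν * ‖z‖ := by gcongr; linarith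
    linarith
  have hpow : ((2 : ℝ) ^ (-(m - n))) ^ ν = 2 ^ (ν * n) * ((2 : ℝ) ^ ν) ^ (-m) := by
    rw [← Real.rpow_natCast 2 ν, ← Real.rpow_mul zero_le_two, ← Real.rpow_natCast 2 (ν * n),
      ← Real.rpow_natCast _ ν, ← Real.rpow_mul zero_le_two, ← Real.rpow_add zero_lt_two]
    congr 1
    push_cast
    ring
  calc (2 : ℝ) ^ (ν * n) * (1 + 2 ^ ν * ‖z‖) ^ (-m)
      ≤ (2 : ℝ) ^ (ν * n) * ((2 : ℝ) ^ ν * ((1 + ‖z‖) / 8)) ^ (-m) :=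
        mul_le_mul_of_nonneg_left
          (Real.rpow_le_rpow_of_nonpos (by positivity) hscale (by linarith)) (by positivity)
    _ = _ := by
      rw [Real.mul_rpow (by positivity) (by positivity), Real.div_rpow (by positivity)
        (by positivity), Real.rpow_neg (by norm_num : (0 : ℝ) ≤ 8), div_inv_eq_mul, hpow]
      ring

lemma etaK_sub_le {m : ℝ} (hm : 0 ≤ m) (ν : ℕ) (x y : Rn n) :
    etaK ν m (x - y) ≤ ENNReal.ofReal (8 ^ m) *
      (∑ jk ∈ Finset.HasAntidiagonal.antidiagonal ν, ENNReal.ofReal (2 ^ (-(m - n))) ^ jk.2 *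
        ∑ b : Fin n → Bool, 2 ^ (jk.1 * n) * (cell (thirdShift b) jk.1 x).indicator 1 y +
      ENNReal.ofReal (2 ^ (-(m - n))) ^ ν * etaK 0 m (x - y)) := by
  rcases le_or_gt ‖x - y‖ (1 / 4) with hnear | hfar
  · obtain ⟨j, k, hjk, ⟨b, hb⟩, hle⟩ := exists_etaK_le_of_norm_sub_le hm ν hnear
    refine hle.trans ?_
    gcongr 1
    refine le_trans ?_ le_self_add
    calc ENNReal.ofReal (2 ^ (-(m - n))) ^ k * 2 ^ (j * n)
        = ENNReal.ofReal (2 ^ (-(m - n))) ^ k *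
            (2 ^ (j * n) * (cell (thirdShift b) j x).indicator 1 y) := by
          rw [Set.indicator_of_mem hb, Pi.one_apply, mul_one]
      _ ≤ ENNReal.ofReal (2 ^ (-(m - n))) ^ k *
            ∑ b : Fin n → Bool, 2 ^ (j * n) * (cell (thirdShift b) j x).indicator 1 y := by
          gcongr
          exact Finset.single_le_sum (f := fun b : Fin n → Bool => (2 : ℝ≥0∞) ^ (j * n) *
            (cell (thirdShift b) j x).indicator 1 y) (fun _ _ => zero_le) (Finset.mem_univ b)
      _ ≤ _ := Finset.single_le_sum (f := fun jk : ℕ × ℕ =>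
          ENNReal.ofReal (2 ^ (-(m - n))) ^ jk.2 * ∑ b : Fin n → Bool,
            2 ^ (jk.1 * n) * (cell (thirdShift b) jk.1 x).indicator 1 y) (fun _ _ => zero_le)
          (Finset.HasAntidiagonal.mem_antidiagonal.2 hjk :
            (j, k) ∈ Finset.HasAntidiagonal.antidiagonal ν)
  · refine (etaK_le_of_lt_norm hm ν hfar).trans ?_
    gcongr
    exact le_add_self

lemma measurable_etaK (ν : ℕ) (m : ℝ) : Measurable (etaK (n := n) ν m) := by
  unfold etaK
  fun_prop

lemma lconv_etaK_le {m : ℝ} (hm : 0 ≤ m) (ν : ℕ) {f : Rn n → ℝ≥0∞} (hf : Measurable f)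
    (x : Rn n) :
    lconv (etaK ν m) f x ≤ ENNReal.ofReal (8 ^ m) *
      (∑ jk ∈ Finset.HasAntidiagonal.antidiagonal ν, ENNReal.ofReal (2 ^ (-(m - n))) ^ jk.2 *
        ∑ b : Fin n → Bool, dyadicAvg (thirdShift b) jk.1 f x +
      ENNReal.ofReal (2 ^ (-(m - n))) ^ ν * lconv (etaK 0 m) f x) := by
  set μ : Measure (Rn n) := volume.withDensity f
  have hη : ∀ ν, Measurable fun y => etaK ν m (x - y) := fun ν =>
    (measurable_etaK ν m).comp (measurable_const.sub measurable_id)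
  have hconv : ∀ ν, lconv (etaK ν m) f x = ∫⁻ y, etaK ν m (x - y) ∂μ := fun ν => by
    rw [lintegral_withDensity_eq_lintegral_mul _ hf (hη ν)]
    exact lintegral_congr fun y => mul_comm _ _
  have havg : ∀ (b : Fin n → Bool) (j : ℕ), dyadicAvg (thirdShift b) j f x =
      ∫⁻ y, 2 ^ (j * n) * (cell (thirdShift b) j x).indicator 1 y ∂μ := fun b j => by
    have hcell := measurableSet_cell (thirdShift b) j x
    rw [lintegral_const_mul' _ _ (by simp), lintegral_indicator_one hcell,
      withDensity_apply _ hcell, dyadicAvg]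
  have hcellm : ∀ (b : Fin n → Bool) (j : ℕ), Measurable fun y =>
      (2 : ℝ≥0∞) ^ (j * n) * (cell (thirdShift b) j x).indicator 1 y := fun b j =>
    (measurable_one.indicator (measurableSet_cell _ j x)).const_mul _
  have hsum : ∀ j, Measurable fun y => ∑ b : Fin n → Bool,
      (2 : ℝ≥0∞) ^ (j * n) * (cell (thirdShift b) j x).indicator 1 y := fun j =>
    Finset.measurable_fun_sum _ fun b _ => hcellm b j
  simp only [hconv, havg]
  refine (lintegral_mono fun y => etaK_sub_le hm ν x y).trans_eq ?_
  rw [lintegral_const_mul' _ _ (by simp), lintegral_add_right _ ((hη 0).const_mul _),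
    lintegral_const_mul' _ _ (by simp),
    lintegral_finsetSum _ fun jk _ => (hsum jk.1).const_mul _]
  refine congrArg (fun t => _ * (t + _)) (Finset.sum_congr rfl fun jk _ => ?_)
  rw [lintegral_const_mul' _ _ (by simp), lintegral_finsetSum _ fun b _ => hcellm b jk.1]

/-! ### Log-Hölder continuous exponents -/

lemma LocLogHolder.continuous {P : Rn n → ℝ} (h : LocLogHolder P) : Continuous P := by
  obtain ⟨c, hc, h⟩ := h
  refine Metric.continuous_iff.2 fun x ε hε => ⟨Real.exp (-(c / ε)), Real.exp_pos _, fun y hy => ?_⟩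
  rcases eq_or_ne y x with rfl | hne
  · simpa using hε
  have hdist : 0 < dist y x := dist_pos.2 hne
  have hlog : c / ε < Real.log (Real.exp 1 + (dist y x)⁻¹) := by
    rw [Real.lt_log_iff_exp_lt (by positivity)]
    have : Real.exp (c / ε) < (dist y x)⁻¹ := by
      rwa [lt_inv_comm₀ (Real.exp_pos _) hdist, ← Real.exp_neg]
    linarith [Real.exp_pos 1]
  have hlog0 : 0 < Real.log (Real.exp 1 + (dist y x)⁻¹) := (by positivity : 0 < c / ε).trans hlog
  calc dist (P y) (P x) ≤ c / Real.log (Real.exp 1 + (dist y x)⁻¹) := h y x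
    _ < ε := (div_lt_comm₀ hε hlog0).1 hlog

/-- Log-Hölder continuous exponents with values in a compact subset of `(1, ∞)`. For such exponents
log-Hölder continuity of `P` and of `1 / P` are equivalent, and it is `P` that is used here. -/
structure LogExponent (P : Rn n → ℝ) (Pinf : ℝ) : Prop where
  exists_one_lt_le : ∃ a > 1, ∀ x, a ≤ P x
  bddAbove : ∃ b, ∀ x, P x ≤ b
  one_lt_inf : 1 < Pinf
  locLogHolder : LocLogHolder P
  exists_logDecay : ∃ c, LogDecay P Pinf c

section LogExponent

variable {P : Rn n → ℝ} {Pinf : ℝ}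

lemma LogExponent.measurable (hP : LogExponent P Pinf) : Measurable P :=
  hP.locLogHolder.continuous.measurable

lemma LogExponent.one_lt (hP : LogExponent P Pinf) (x : Rn n) : 1 < P x :=
  let ⟨_, ha, haP⟩ := hP.exists_one_lt_le
  ha.trans_le (haP x)

lemma LogExponent.exists_cellOsc (hP : LogExponent P Pinf) : ∃ K, ∀ α, CellOsc α P K :=
  let ⟨_, hc⟩ := hP.exists_logDecay
  _root_.exists_cellOsc hP.locLogHolder hc

lemma LogDecay.abs_sub_mul_log_self_le {c : ℝ} (h : LogDecay P Pinf c) (x : Rn n) :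
    |P x - Pinf| * Real.log (Real.exp 1 + ‖x‖) ≤ c :=
  (le_div_iff₀ (zero_lt_one.trans_le (one_le_log_exp_add (norm_nonneg x)))).1 (h x)

lemma LogExponent.exists_lintegral_tsum_dyadicAvg_rpow_le (hP : LogExponent P Pinf) (α : Rn n) :
    ∃ C : ℝ≥0∞, C ≠ ∞ ∧ ∀ f : ℕ → Rn n → ℝ≥0∞, (∀ ν, Measurable (f ν)) →
      ∫⁻ x, (∑' ν, f ν x) ^ P x ≤ 1 → ∫⁻ x, (∑' ν, dyadicAvg α ν (f ν) x) ^ P x ≤ C := by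
  obtain ⟨a, ha, haP⟩ := hP.exists_one_lt_le
  obtain ⟨b, hPb⟩ := hP.bddAbove
  obtain ⟨K, hK⟩ := hP.exists_cellOsc
  exact _root_.exists_lintegral_tsum_dyadicAvg_rpow_le hP.measurable (hK α) ha haP hPb

lemma LogExponent.exists_lintegral_iSup_dyadicAvg_rpow_le (hP : LogExponent P Pinf) (α : Rn n) :
    ∃ C : ℝ≥0∞, C ≠ ∞ ∧ ∀ G : Rn n → ℝ≥0∞, Measurable G → ∫⁻ x, G x ^ P x ≤ 1 →
      ∫⁻ x, (⨆ ν, dyadicAvg α ν G x) ^ P x ≤ C := by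
  obtain ⟨a, ha, haP⟩ := hP.exists_one_lt_le
  obtain ⟨b, hPb⟩ := hP.bddAbove
  obtain ⟨K, hK⟩ := hP.exists_cellOsc
  exact _root_.exists_lintegral_iSup_dyadicAvg_rpow_le hP.measurable (hK α) ha haP hPb

end LogExponent

/-! ### Convolution with `η_{0,m}` -/

lemma rpow_le_mul_rpow_add_decayW {t : ℝ≥0∞} (ht : t ≤ 1) {x : Rn n} {A K e₁ e₂ : ℝ} (hA : 0 ≤ A)
    (h₁ : 1 ≤ e₁) (h₂ : 0 ≤ e₂) (h : |e₁ - e₂| * Real.log (Real.exp 1 + ‖x‖) ≤ K) :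
    t ^ e₁ ≤ ENNReal.ofReal (Real.exp (A * K)) * t ^ e₂ + decayW A x := by
  have := rpow_le_exp_mul_rpow_add_rpow_neg (t := t) (one_le_exp_add_norm x) hA zero_le_one h₁ h₂ h
    (ht.trans (ENNReal.one_le_ofReal.2 (Real.one_le_rpow (one_le_exp_add_norm x) hA)))
  rwa [mul_one] at this

lemma etaK_zero_le_of_mem_cell {m : ℝ} (hm : 0 ≤ m) {α : Rn n} (x : Rn n) {y z : Rn n}
    (h : z ∈ cell α 0 y) :
    etaK 0 m (x - y) ≤ ENNReal.ofReal ((√n + 1) ^ m) * etaK 0 m (x - z) := by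
  rw [etaK, etaK, ← ENNReal.ofReal_mul (by positivity)]
  refine ENNReal.ofReal_le_ofReal ?_
  simp only [zero_mul, pow_zero, one_mul]
  have hyz := dist_le_of_mem_cell h
  rw [pow_zero, inv_one, mul_one, dist_eq_norm] at hyz
  have htriangle : ‖x - z‖ ≤ ‖x - y‖ + ‖y - z‖ := by
    simpa using norm_add_le (x - y) (y - z)
  have hxz : 1 + ‖x - z‖ ≤ (√n + 1) * (1 + ‖x - y‖) := by
    nlinarith [mul_nonneg (Real.sqrt_nonneg n) (norm_nonneg (x - y))]
  calc (1 + ‖x - y‖) ^ (-m) = (√n + 1) ^ m * ((√n + 1) * (1 + ‖x - y‖)) ^ (-m) := by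
        rw [Real.mul_rpow (by positivity) (by positivity), ← mul_assoc,
          ← Real.rpow_add (by positivity), add_neg_cancel, Real.rpow_zero, one_mul]
    _ ≤ (√n + 1) ^ m * (1 + ‖x - z‖) ^ (-m) := mul_le_mul_of_nonneg_left
        (Real.rpow_le_rpow_of_nonpos (by positivity) hxz (by linarith)) (by positivity)

lemma lconv_etaK_zero_le {m : ℝ} (hm : 0 ≤ m) (α : Rn n) {G : Rn n → ℝ≥0∞} (hG : Measurable G)
    (x : Rn n) : lconv (etaK 0 m) G x ≤
      ENNReal.ofReal ((√n + 1) ^ m) * lconv (etaK 0 m) (dyadicAvg α 0 G) x := by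
  have hη : Measurable fun y => etaK 0 m (x - y) :=
    (measurable_etaK 0 m).comp (measurable_const.sub measurable_id)
  have hkernel : ∀ y, etaK 0 m (x - y) ≤
      ENNReal.ofReal ((√n + 1) ^ m) * dyadicAvg α 0 (fun z => etaK 0 m (x - z)) y := fun y => by
    calc etaK 0 m (x - y) = ∫⁻ _ in cell α 0 y, etaK 0 m (x - y) := by
          rw [setLIntegral_const, volume_cell, zero_mul, pow_zero, inv_one, mul_one]
      _ ≤ ∫⁻ z in cell α 0 y, ENNReal.ofReal ((√n + 1) ^ m) * etaK 0 m (x - z) :=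
          setLIntegral_mono' (measurableSet_cell α 0 y) fun z hz => etaK_zero_le_of_mem_cell hm x hz
      _ = _ := by
          rw [lintegral_const_mul _ hη, dyadicAvg, zero_mul, pow_zero, one_mul]
  calc lconv (etaK 0 m) G x ≤ ∫⁻ y, ENNReal.ofReal ((√n + 1) ^ m) *
        (dyadicAvg α 0 (fun z => etaK 0 m (x - z)) y * G y) := by
        refine lintegral_mono fun y => ?_
        rw [← mul_assoc]
        exact mul_le_mul_left (hkernel y) _
    _ = _ := by
        rw [lintegral_const_mul' _ _ (by simp), lintegral_dyadicAvg_mul α 0 hη hG, lconv]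

lemma lintegral_etaK_zero_lt_top {m : ℝ} (hm : (n : ℝ) < m) : ∫⁻ x : Rn n, etaK 0 m x < ∞ := by
  have hint := finite_integral_one_add_norm (E := Rn n) (μ := volume) (r := m) (by simpa using hm)
  exact lt_of_le_of_lt (lintegral_mono fun x => by simp [etaK]) hint

lemma measurable_lconv {w G : Rn n → ℝ≥0∞} (hw : Measurable w) (hG : Measurable G) :
    Measurable (lconv w G) :=
  Measurable.lintegral_prod_right' (f := fun z : Rn n × Rn n => w (z.1 - z.2) * G z.2)
    ((hw.comp (measurable_fst.sub measurable_snd)).mul (hG.comp measurable_snd))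

lemma lintegral_lconv {w G : Rn n → ℝ≥0∞} (hw : Measurable w) (hG : Measurable G) :
    ∫⁻ x, lconv w G x = (∫⁻ x, w x) * ∫⁻ y, G y := by
  unfold lconv
  rw [lintegral_lintegral_swap ((hw.comp (measurable_fst.sub measurable_snd)).mul
    (hG.comp measurable_snd)).aemeasurable, ← lintegral_const_mul _ hG]
  refine lintegral_congr fun y => ?_
  have hwy : Measurable fun x => w (x - y) := hw.comp (measurable_id.sub measurable_const)
  rw [lintegral_mul_const _ hwy, lintegral_sub_right_eq_self w y]

section ConvolutionWithEtaZero

variable {P : Rn n → ℝ} {Pinf : ℝ}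

lemma LogDecay.lconv_rpow_le {c A : ℝ} (hdec : LogDecay P Pinf c) (hP : ∀ x, 1 ≤ P x)
    (hPinf : 1 ≤ Pinf) (hA : 0 ≤ A) {w h : Rn n → ℝ≥0∞} (hw : Measurable w)
    (hw1 : ∫⁻ x, w x ≤ 1) (hh : Measurable h) (hh1 : ∀ x, h x ≤ 1) (x : Rn n) :
    lconv w h x ^ P x ≤
      ENNReal.ofReal (Real.exp (A * c)) * lconv w (fun y => h y ^ Pinf) x + decayW A x := by
  have hwx : Measurable fun y => w (x - y) := hw.comp (measurable_const.sub measurable_id)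
  have hwx1 : ∫⁻ y, w (x - y) ≤ 1 := by rwa [lintegral_sub_left_eq_self]
  have hle : lconv w h x ≤ 1 :=
    (lintegral_mono fun y => mul_le_of_le_one_right' (hh1 y)).trans hwx1
  refine (rpow_le_mul_rpow_add_decayW hle hA (hP x) (by linarith)
    (hdec.abs_sub_mul_log_self_le x)).trans ?_
  gcongr
  exact lintegral_mul_rpow_le_of_lintegral_le_one hwx.aemeasurable hh.aemeasurable hwx1 hPinf

/-- The exponent is replaced by its limit at infinity, at which Jensen's inequality applies, and
then changed back. -/
lemma LogDecay.lintegral_lconv_rpow_le {c A : ℝ} (hdec : LogDecay P Pinf c) (hPm : Measurable P)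
    (hP : ∀ x, 1 ≤ P x) (hPinf : 1 ≤ Pinf) (hA : 0 ≤ A) {w h : Rn n → ℝ≥0∞} (hw : Measurable w)
    (hw1 : ∫⁻ x, w x ≤ 1) (hh : Measurable h) (hh1 : ∀ x, h x ≤ 1) :
    ∫⁻ x, lconv w h x ^ P x ≤ ENNReal.ofReal (Real.exp (A * c)) *
      (ENNReal.ofReal (Real.exp (A * c)) * (∫⁻ x, h x ^ P x) + ∫⁻ x : Rn n, decayW A x) +
      ∫⁻ x : Rn n, decayW A x := by
  set E := ENNReal.ofReal (Real.exp (A * c))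
  have hpow : Measurable fun y => h y ^ P y := hh.pow hPm
  have hEpow : Measurable fun y => E * h y ^ P y := hpow.const_mul _
  have hinf : ∫⁻ y, h y ^ Pinf ≤ E * (∫⁻ x, h x ^ P x) + ∫⁻ x : Rn n, decayW A x := by
    rw [← lintegral_const_mul _ hpow, ← lintegral_add_left hEpow]
    refine lintegral_mono fun y => rpow_le_mul_rpow_add_decayW (hh1 y) hA hPinf
      (by linarith [hP y]) ?_
    rw [abs_sub_comm]
    exact hdec.abs_sub_mul_log_self_le y
  calc ∫⁻ x, lconv w h x ^ P x
      ≤ ∫⁻ x, E * lconv w (fun y => h y ^ Pinf) x + decayW A x :=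
        lintegral_mono fun x => hdec.lconv_rpow_le hP hPinf hA hw hw1 hh hh1 x
    _ = E * ((∫⁻ x, w x) * ∫⁻ y, h y ^ Pinf) + ∫⁻ x : Rn n, decayW A x := by
        rw [lintegral_add_right _ (measurable_decayW A), lintegral_const_mul' _ _ (by simp [E]),
          lintegral_lconv hw (hh.pow_const _)]
    _ ≤ E * (1 * ∫⁻ y, h y ^ Pinf) + ∫⁻ x : Rn n, decayW A x := by gcongr
    _ ≤ _ := by
        rw [one_mul]
        gcongr

lemma LogExponent.exists_lintegral_dyadicAvg_zero_rpow_le (hP : LogExponent P Pinf) (α : Rn n) :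
    ∃ C : ℝ≥0∞, C ≠ ∞ ∧ ∀ G : Rn n → ℝ≥0∞, Measurable G → ∫⁻ x, G x ^ P x ≤ 1 →
      (∀ x, dyadicAvg α 0 G x ≤ 2) ∧ ∫⁻ x, dyadicAvg α 0 G x ^ P x ≤ C := by
  obtain ⟨C, hC, hCG⟩ := hP.exists_lintegral_iSup_dyadicAvg_rpow_le α
  refine ⟨C, hC, fun G hG hG1 => ⟨fun x => ?_, (lintegral_mono fun x => ?_).trans (hCG G hG hG1)⟩⟩
  · rw [dyadicAvg, zero_mul, pow_zero, one_mul]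
    exact setLIntegral_cell_zero_le_two (fun x => (hP.one_lt x).le) hG1 x
  · exact ENNReal.rpow_le_rpow (le_iSup (fun ν => dyadicAvg α ν G x) 0)
      (zero_le_one.trans (hP.one_lt x).le)

lemma LogExponent.exists_lintegral_lconv_rpow_le (hP : LogExponent P Pinf) {w : Rn n → ℝ≥0∞}
    (hw : Measurable w) (hwt : ∫⁻ x, w x ≠ ∞) {a C₀ : ℝ≥0∞} (ha : 1 ≤ a) (hat : a ≠ ∞)
    (hC₀ : C₀ ≠ ∞) :
    ∃ C : ℝ≥0∞, C ≠ ∞ ∧ ∀ h : Rn n → ℝ≥0∞, Measurable h → (∀ x, h x ≤ a) →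
      ∫⁻ x, h x ^ P x ≤ C₀ → ∫⁻ x, lconv w h x ^ P x ≤ C := by
  have hP1 : ∀ x, 1 ≤ P x := fun x => (hP.one_lt x).le
  have hP0 : ∀ x, 0 ≤ P x := fun x => zero_le_one.trans (hP1 x)
  obtain ⟨b, hPb⟩ := hP.bddAbove
  obtain ⟨d, hdec⟩ := hP.exists_logDecay
  set I := max (∫⁻ x, w x) 1
  have hIt : I ≠ ∞ := (max_lt hwt.lt_top one_lt_top).ne
  have hI1 : 1 ≤ I := le_max_right _ _
  have ha0 : a ≠ 0 := (zero_lt_one.trans_le ha).ne'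
  set E := ENNReal.ofReal (Real.exp ((n + 1) * d))
  set W := ∫⁻ x : Rn n, decayW (n + 1) x
  have hWt : W ≠ ∞ := (lintegral_decayW_lt_top (by linarith)).ne
  have hb : 0 ≤ b := (hP0 0).trans (hPb 0)
  refine ⟨(I * a) ^ b * (E * (E * C₀ + W) + W), by finiteness, fun h hh hha hhC => ?_⟩
  have hw1 : ∫⁻ x, w x / I ≤ 1 := by
    simp only [div_eq_mul_inv]
    rw [lintegral_mul_const _ hw, ← div_eq_mul_inv]
    exact ENNReal.div_le_of_le_mul (by simp [I])
  have hscale : ∀ x, lconv w h x / (I * a) = lconv (fun y => w y / I) (fun y => h y / a) x :=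
    fun x => by
      simp only [lconv, div_eq_mul_inv]
      rw [← lintegral_mul_const' _ _ (by simp [ha0, (zero_lt_one.trans_le hI1).ne']),
        ENNReal.mul_inv (Or.inr hat) (Or.inl hIt)]
      exact lintegral_congr fun y => mul_mul_mul_comm _ _ _ _
  refine lintegral_rpow_le_of_div hP0 hPb hb (one_le_mul hI1 ha) (ENNReal.mul_ne_top hIt hat) ?_
  simp only [hscale]
  refine (hdec.lintegral_lconv_rpow_le (A := n + 1) hP.measurable hP1 hP.one_lt_inf.le
    (by positivity) (hw.div_const I) hw1 (hh.div_const a)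
    fun x => ENNReal.div_le_of_le_mul (by simpa using hha x)).trans ?_
  gcongr
  refine (lintegral_mono fun x => ENNReal.rpow_le_rpow ?_ (hP0 x)).trans hhC
  exact ENNReal.div_le_of_le_mul (le_mul_of_one_le_right' ha)

theorem LogExponent.exists_lintegral_lconv_etaK_zero_rpow_le {m : ℝ} (hP : LogExponent P Pinf)
    (hm : (n : ℝ) < m) :
    ∃ C : ℝ≥0∞, C ≠ ∞ ∧ ∀ G : Rn n → ℝ≥0∞, Measurable G →
      ∫⁻ x, G x ^ P x ≤ 1 → ∫⁻ x, lconv (etaK 0 m) G x ^ P x ≤ C := by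
  have hm0 : 0 ≤ m := (Nat.cast_nonneg n).trans hm.le
  have hP0 : ∀ x, 0 ≤ P x := fun x => zero_le_one.trans (hP.one_lt x).le
  obtain ⟨b, hPb⟩ := hP.bddAbove
  obtain ⟨C₀, hC₀, havg⟩ := hP.exists_lintegral_dyadicAvg_zero_rpow_le 0
  obtain ⟨C₁, hC₁, hconv⟩ := hP.exists_lintegral_lconv_rpow_le (measurable_etaK 0 m)
    (lintegral_etaK_zero_lt_top hm).ne one_le_two ofNat_ne_top hC₀
  set c := ENNReal.ofReal ((√n + 1) ^ m)
  have hc1 : 1 ≤ c := ENNReal.one_le_ofReal.2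
    (Real.one_le_rpow (by linarith [Real.sqrt_nonneg n]) hm0)
  have hb : 0 ≤ b := (hP0 0).trans (hPb 0)
  refine ⟨c ^ b * C₁, by finiteness, fun G hG hG1 =>
    lintegral_rpow_le_of_div hP0 hPb hb hc1 (by simp [c]) ?_⟩
  obtain ⟨hle2, hle⟩ := havg G hG hG1
  refine (lintegral_mono fun x => ENNReal.rpow_le_rpow ?_ (hP0 x)).trans
    (hconv _ (measurable_dyadicAvg 0 0 hG) hle2 hle)
  exact ENNReal.div_le_of_le_mul' (lconv_etaK_zero_le hm0 0 hG x)

end ConvolutionWithEtaZero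

/-! ### The pointwise `ℓ^q` norm -/

/-- The `ℓ^r` norm of a sequence in `[0,∞]`, for a finite real exponent `r`. -/
def lqSum (r : ℝ) (a : ℕ → ℝ≥0∞) : ℝ≥0∞ := (∑' ν, a ν ^ r) ^ (1 / r)

section lqSum

variable {r : ℝ} {a b : ℕ → ℝ≥0∞}

lemma lqSum_rpow (hr : 0 < r) (a : ℕ → ℝ≥0∞) : lqSum r a ^ r = ∑' ν, a ν ^ r := by
  rw [lqSum, ← ENNReal.rpow_mul, one_div_mul_cancel hr.ne', ENNReal.rpow_one]

lemma lqSum_le_iff (hr : 0 < r) {t : ℝ≥0∞} : lqSum r a ≤ t ↔ ∑' ν, a ν ^ r ≤ t ^ r := by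
  rw [← lqSum_rpow hr, ENNReal.rpow_le_rpow_iff hr]

lemma le_lqSum (hr : 0 < r) (a : ℕ → ℝ≥0∞) (ν : ℕ) : a ν ≤ lqSum r a := by
  rw [← ENNReal.rpow_le_rpow_iff hr, lqSum_rpow hr]
  exact ENNReal.le_tsum ν

lemma lqSum_mono (hr : 0 < r) (h : ∀ ν, a ν ≤ b ν) : lqSum r a ≤ lqSum r b := by
  rw [lqSum_le_iff hr, lqSum_rpow hr]
  exact ENNReal.tsum_le_tsum fun ν => ENNReal.rpow_le_rpow (h ν) hr.le

lemma lqSum_const_mul (hr : 0 < r) (c : ℝ≥0∞) (a : ℕ → ℝ≥0∞) :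
    lqSum r (fun ν => c * a ν) = c * lqSum r a := by
  simp only [lqSum, ENNReal.mul_rpow_of_nonneg _ _ hr.le]
  rw [ENNReal.tsum_mul_left, ENNReal.mul_rpow_of_nonneg _ _ (one_div_pos.2 hr).le,
    ← ENNReal.rpow_mul, mul_one_div_cancel hr.ne', ENNReal.rpow_one]

lemma lqSum_add_le (hr : 1 ≤ r) (a b : ℕ → ℝ≥0∞) :
    lqSum r (fun ν => a ν + b ν) ≤ lqSum r a + lqSum r b := by
  simp only [lqSum, ← lintegral_count]
  exact ENNReal.lintegral_Lp_add_le (measurable_of_countable a).aemeasurable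
    (measurable_of_countable b).aemeasurable hr

lemma lqSum_sum_le {ι : Type*} (s : Finset ι) (hr : 1 ≤ r) (a : ι → ℕ → ℝ≥0∞) :
    lqSum r (fun ν => ∑ i ∈ s, a i ν) ≤ ∑ i ∈ s, lqSum r (a i) := by
  have hr0 : 0 < r := zero_lt_one.trans_le hr
  simpa only [Finset.sum_fn] using Finset.le_sum_of_subadditive (lqSum r)
    (by simp [lqSum, ENNReal.zero_rpow_of_pos, hr0]) (lqSum_add_le hr) s a

lemma lqSum_le_tsum (hr : 1 ≤ r) (a : ℕ → ℝ≥0∞) : lqSum r a ≤ ∑' ν, a ν := by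
  rw [lqSum_le_iff (zero_lt_one.trans_le hr), ← mul_rpow_sub_one _ hr, ← ENNReal.tsum_mul_right]
  refine ENNReal.tsum_le_tsum fun ν => ?_
  rw [← mul_rpow_sub_one _ hr]
  gcongr
  exact ENNReal.le_tsum ν

lemma tsum_lqSum_mul_div_rpow_le (hr : 0 < r) (a : ℕ → ℝ≥0∞) :
    ∑' ν, lqSum r a * (a ν / lqSum r a) ^ r ≤ lqSum r a := by
  rw [ENNReal.tsum_mul_left]
  rcases eq_or_ne (lqSum r a) ∞ with h | -
  · simp [h]
  refine mul_le_of_le_one_right' ?_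
  simp only [div_eq_mul_inv, ENNReal.mul_rpow_of_nonneg _ _ hr.le]
  rw [ENNReal.tsum_mul_right, ← lqSum_rpow hr, ENNReal.inv_rpow, ← div_eq_mul_inv]
  exact ENNReal.div_self_le_one

lemma measurable_lqSum {q : Rn n → ℝ} (hq : Measurable q) {f : ℕ → Rn n → ℝ≥0∞}
    (hf : ∀ ν, Measurable (f ν)) : Measurable fun x => lqSum (q x) fun ν => f ν x :=
  (Measurable.tsum fun ν => (hf ν).pow hq).pow (measurable_const.div hq)

end lqSum

section Antidiagonal

variable {κ : ℝ≥0∞} {r : ℝ}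

lemma tsum_sum_antidiagonal (φ : ℕ × ℕ → ℝ≥0∞) :
    ∑' ν, ∑ jk ∈ Finset.HasAntidiagonal.antidiagonal ν, φ jk = ∑' j, ∑' k, φ (j, k) := by
  rw [← ENNReal.tsum_prod, ← Finset.HasAntidiagonal.sigmaAntidiagonalEquivProd.tsum_eq,
    ENNReal.tsum_sigma']
  refine tsum_congr fun ν => ?_
  rw [← Finset.tsum_subtype]
  rfl

lemma sum_antidiagonal_pow_le_tsum (κ : ℝ≥0∞) (ν : ℕ) :
    ∑ jk ∈ Finset.HasAntidiagonal.antidiagonal ν, κ ^ jk.2 ≤ ∑' k : ℕ, κ ^ k := by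
  rw [← Finset.Nat.sum_antidiagonal_swap, Finset.Nat.sum_antidiagonal_eq_sum_range_succ_mk]
  exact ENNReal.sum_le_tsum _

lemma tsum_tsum_mul_add_le (c H : ℕ → ℝ≥0∞) :
    ∑' j, ∑' k, c k * H (j + k) ≤ (∑' k, c k) * ∑' ν, H ν := by
  rw [ENNReal.tsum_comm, ← ENNReal.tsum_mul_right]
  refine ENNReal.tsum_le_tsum fun k => ?_
  rw [ENNReal.tsum_mul_left]
  gcongr c k * ?_
  exact ENNReal.tsum_comp_le_tsum_of_injective (add_left_injective k) H

lemma tsum_tsum_div_mul_add_le (c H : ℕ → ℝ≥0∞) :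
    ∑' j, ∑' k, c k / (∑' i, c i) * H (j + k) ≤ ∑' ν, H ν := by
  refine (tsum_tsum_mul_add_le _ H).trans (mul_le_of_le_one_left' ?_)
  simp only [div_eq_mul_inv]
  rw [ENNReal.tsum_mul_right, ← div_eq_mul_inv]
  exact ENNReal.div_self_le_one

lemma one_le_tsum_pow (κ : ℝ≥0∞) : 1 ≤ ∑' k : ℕ, κ ^ k :=
  (pow_zero κ).symm.trans_le (ENNReal.le_tsum 0)

lemma tsum_pow_ne_top (hκ : κ < 1) : ∑' k : ℕ, κ ^ k ≠ ∞ := by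
  rw [ENNReal.tsum_geometric]
  exact ENNReal.inv_ne_top.2 (tsub_pos_of_lt hκ).ne'

lemma ofReal_two_rpow_neg_lt_one {ε : ℝ} (hε : 0 < ε) : ENNReal.ofReal (2 ^ (-ε)) < 1 := by
  rw [ENNReal.ofReal_lt_one]
  exact Real.rpow_lt_one_of_one_lt_of_neg one_lt_two (neg_lt_zero.2 hε)

lemma sum_weight_mul_rpow_le {ι : Type*} (s : Finset ι) (w φ : ι → ℝ≥0∞) (hr : 1 ≤ r)
    {S : ℝ≥0∞} (hS : ∑ i ∈ s, w i ≤ S) (hS1 : 1 ≤ S) :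
    (∑ i ∈ s, w i * φ i) ^ r ≤ S ^ r * ∑ i ∈ s, w i * φ i ^ r := by
  have hr0 : 0 < r := zero_lt_one.trans_le hr
  have hle : (∑ i ∈ s, w i) ^ (1 - r⁻¹) ≤ S :=
    calc (∑ i ∈ s, w i) ^ (1 - r⁻¹) ≤ S ^ (1 - r⁻¹) := by
          gcongr
          exact sub_nonneg.2 (inv_le_one_of_one_le₀ hr)
      _ ≤ S ^ (1 : ℝ) :=
          ENNReal.rpow_le_rpow_of_exponent_le hS1 (by linarith [inv_nonneg.2 hr0.le])
      _ = S := ENNReal.rpow_one S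
  calc (∑ i ∈ s, w i * φ i) ^ r
      ≤ ((∑ i ∈ s, w i) ^ (1 - r⁻¹) * (∑ i ∈ s, w i * φ i ^ r) ^ r⁻¹) ^ r := by
        gcongr
        exact ENNReal.inner_le_weight_mul_Lp_of_nonneg s hr w φ
    _ ≤ (S * (∑ i ∈ s, w i * φ i ^ r) ^ r⁻¹) ^ r := by gcongr
    _ = _ := by
        rw [ENNReal.mul_rpow_of_nonneg _ _ hr0.le, ← ENNReal.rpow_mul, inv_mul_cancel₀ hr0.ne',
          ENNReal.rpow_one]

lemma tsum_tsum_pow_mul_add (κ E M : ℝ≥0∞) (r : ℝ) (h : ℕ → ℕ → ℝ≥0∞) :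
    ∑' j, ∑' k, κ ^ k * (E * (M ^ (r - 1) * h j k) + 2⁻¹ ^ (j + 1) * M ^ r) =
      E * M ^ (r - 1) * (∑' j, ∑' k, κ ^ k * h j k) + (∑' k : ℕ, κ ^ k) * M ^ r := by
  have hinner : ∀ j, ∑' k, κ ^ k * (E * (M ^ (r - 1) * h j k) + 2⁻¹ ^ (j + 1) * M ^ r) =
      E * M ^ (r - 1) * (∑' k, κ ^ k * h j k) +
        2⁻¹ ^ (j + 1) * ((∑' k : ℕ, κ ^ k) * M ^ r) := fun j => by
    rw [← ENNReal.tsum_mul_left, ← ENNReal.tsum_mul_right, ← ENNReal.tsum_mul_left,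
      ← ENNReal.tsum_add]
    exact tsum_congr fun k => by ring
  simp only [hinner]
  rw [ENNReal.tsum_add, ENNReal.tsum_mul_left, ENNReal.tsum_mul_right,
    ENNReal.tsum_geometric_add_one, ENNReal.one_sub_inv_two, inv_inv,
    ENNReal.inv_mul_cancel two_ne_zero ofNat_ne_top, one_mul]

lemma mul_rpow_sub_one_mul_add_mul_rpow_le (hr : 1 ≤ r) {E S : ℝ≥0∞} (hE : 1 ≤ E) (hS : 1 ≤ S)
    (M X : ℝ≥0∞) : E * M ^ (r - 1) * X + S * M ^ r ≤ (E * S * (M + X)) ^ r := by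
  have hr1 : 0 ≤ r - 1 := by linarith
  calc E * M ^ (r - 1) * X + S * M ^ r
      = E * M ^ (r - 1) * X + S * (M * M ^ (r - 1)) := by rw [mul_rpow_sub_one M hr]
    _ ≤ E * S * (M + X) ^ (r - 1) * X + E * S * (M * (M + X) ^ (r - 1)) := by
        gcongr ?_ * ?_ * X + ?_ * (M * ?_)
        · exact le_mul_of_one_le_right' hS
        · exact ENNReal.rpow_le_rpow le_self_add hr1
        · exact le_mul_of_one_le_left' hE
        · exact ENNReal.rpow_le_rpow le_self_add hr1
    _ = E * S * ((M + X) * (M + X) ^ (r - 1)) := by ring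
    _ ≤ (E * S) ^ r * (M + X) ^ r := by
        rw [mul_rpow_sub_one _ hr]
        gcongr
        exact ENNReal.le_rpow_self_of_one_le (one_le_mul hE hS) hr
    _ = _ := (ENNReal.mul_rpow_of_nonneg _ _ (by linarith)).symm

lemma lqSum_sum_antidiagonal_le (hr : 1 ≤ r) {E M : ℝ≥0∞} (hE : 1 ≤ E) {d h : ℕ → ℕ → ℝ≥0∞}
    (hd : ∀ j ν, d j ν ^ r ≤ E * (M ^ (r - 1) * h j ν) + 2⁻¹ ^ (j + 1) * M ^ r) :
    lqSum r (fun ν => ∑ jk ∈ Finset.HasAntidiagonal.antidiagonal ν, κ ^ jk.2 * d jk.1 ν) ≤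
      (∑' k : ℕ, κ ^ k) * (E * (∑' k : ℕ, κ ^ k) * (M + ∑' j, ∑' k, κ ^ k * h j (j + k))) := by
  have hr0 : 0 ≤ r := by linarith
  set S := ∑' k : ℕ, κ ^ k with hS
  rw [lqSum_le_iff (zero_lt_one.trans_le hr), ENNReal.mul_rpow_of_nonneg _ _ hr0]
  calc ∑' ν, (∑ jk ∈ Finset.HasAntidiagonal.antidiagonal ν, κ ^ jk.2 * d jk.1 ν) ^ r
      ≤ ∑' ν, S ^ r * ∑ jk ∈ Finset.HasAntidiagonal.antidiagonal ν, κ ^ jk.2 *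
          (E * (M ^ (r - 1) * h jk.1 (jk.1 + jk.2)) + 2⁻¹ ^ (jk.1 + 1) * M ^ r) := by
        refine ENNReal.tsum_le_tsum fun ν => (sum_weight_mul_rpow_le _ _ _ hr
          (sum_antidiagonal_pow_le_tsum κ ν) (one_le_tsum_pow κ)).trans ?_
        gcongr with jk hjk
        rw [Finset.HasAntidiagonal.mem_antidiagonal.1 hjk]
        exact hd jk.1 ν
    _ = S ^ r * (E * M ^ (r - 1) * (∑' j, ∑' k, κ ^ k * h j (j + k)) + S * M ^ r) := by
        rw [ENNReal.tsum_mul_left, tsum_sum_antidiagonal fun jk : ℕ × ℕ => κ ^ jk.2 *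
          (E * (M ^ (r - 1) * h jk.1 (jk.1 + jk.2)) + 2⁻¹ ^ (jk.1 + 1) * M ^ r), hS,
          ← tsum_tsum_pow_mul_add κ E M r fun j k => h j (j + k)]
    _ ≤ S ^ r * (E * S * (M + ∑' j, ∑' k, κ ^ k * h j (j + k))) ^ r := by
        gcongr
        exact mul_rpow_sub_one_mul_add_mul_rpow_le hr hE (one_le_tsum_pow κ) _ _

end Antidiagonal

/-! ### The convolution inequality in `L^{p(·)}(ℓ^{q(·)})` -/

section ModularSums

variable {β : Type*} [MeasurableSpace β] {μ : Measure β} {P : β → ℝ} {b : ℝ}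

lemma lintegral_sum_rpow_le {ι : Type*} (s : Finset ι) (hs : s.Nonempty) (hPm : Measurable P)
    (h1 : ∀ x, 1 ≤ P x) (hb : ∀ x, P x ≤ b) {F : ι → β → ℝ≥0∞} (hF : ∀ i, Measurable (F i)) :
    ∫⁻ x, (∑ i ∈ s, F i x) ^ P x ∂μ ≤ (s.card : ℝ≥0∞) ^ b * ∑ i ∈ s, ∫⁻ x, F i x ^ P x ∂μ := by
  have hFP : ∀ i, Measurable fun x => F i x ^ P x := fun i => (hF i).pow hPm
  rw [← lintegral_finsetSum _ fun i _ => hFP i,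
    ← lintegral_const_mul _ (Finset.measurable_fun_sum _ fun i _ => hFP i)]
  refine lintegral_mono fun x => (ENNReal.rpow_sum_le_const_mul_sum_rpow s _ (h1 x)).trans ?_
  gcongr
  · exact_mod_cast hs.card_pos
  · linarith [hb x]

lemma lintegral_add_rpow_le (hPm : Measurable P) (h1 : ∀ x, 1 ≤ P x) (hb : ∀ x, P x ≤ b)
    {F G : β → ℝ≥0∞} (hF : Measurable F) (hG : Measurable G) :
    ∫⁻ x, (F x + G x) ^ P x ∂μ ≤ 2 ^ b * ((∫⁻ x, F x ^ P x ∂μ) + ∫⁻ x, G x ^ P x ∂μ) := by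
  have := lintegral_sum_rpow_le (μ := μ) (F := ![F, G]) Finset.univ ⟨0, Finset.mem_univ 0⟩ hPm h1
    hb (by simp [Fin.forall_fin_two, hF, hG])
  simpa using this

lemma lintegral_sum_add_add_rpow_le {ι : Type*} [Fintype ι] [Nonempty ι] (hPm : Measurable P)
    (h1 : ∀ x, 1 ≤ P x) (hb : ∀ x, P x ≤ b) {F G : ι → β → ℝ≥0∞} (hF : ∀ i, Measurable (F i))
    (hG : ∀ i, Measurable (G i)) {H : β → ℝ≥0∞} (hH : Measurable H) :
    ∫⁻ x, (∑ i, (F i x + G i x) + H x) ^ P x ∂μ ≤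
      2 ^ b * ((Fintype.card ι : ℝ≥0∞) ^ b *
        (∑ i, 2 ^ b * ((∫⁻ x, F i x ^ P x ∂μ) + ∫⁻ x, G i x ^ P x ∂μ)) +
          ∫⁻ x, H x ^ P x ∂μ) := by
  have hFG : ∀ i, Measurable fun x => F i x + G i x := fun i => (hF i).add (hG i)
  refine (lintegral_add_rpow_le hPm h1 hb
    (Finset.measurable_fun_sum _ fun i _ => hFG i) hH).trans ?_
  gcongr
  refine (lintegral_sum_rpow_le _ Finset.univ_nonempty hPm h1 hb hFG).trans ?_
  rw [Finset.card_univ]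
  gcongr with i
  exact lintegral_add_rpow_le hPm h1 hb (hF i) (hG i)

end ModularSums

lemma dyadicAvg_tsum_mul (α : Rn n) (j : ℕ) (c : ℕ → ℝ≥0∞) {f : ℕ → Rn n → ℝ≥0∞}
    (hf : ∀ k, Measurable (f k)) (x : Rn n) :
    dyadicAvg α j (fun y => ∑' k, c k * f k y) x = ∑' k, c k * dyadicAvg α j (f k) x := by
  rw [dyadicAvg, lintegral_tsum fun k => ((hf k).const_mul _).aemeasurable,
    ← ENNReal.tsum_mul_left]
  refine tsum_congr fun k => ?_
  rw [lintegral_const_mul _ (hf k), dyadicAvg]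
  ring

lemma CellOsc.exists_lqSum_sum_antidiagonal_le {α : Rn n} {q : Rn n → ℝ} {K : ℝ}
    (hosc : CellOsc α q K) (hqm : Measurable q) (hq : ∀ x, 1 ≤ q x) {κ : ℝ≥0∞} (hκ : κ < 1)
    {f : ℕ → Rn n → ℝ≥0∞} (hf : ∀ ν, Measurable (f ν)) :
    ∃ J : ℕ → Rn n → ℝ≥0∞, (∀ j, Measurable (J j)) ∧
      (∀ y, ∑' j, J j y ≤ lqSum (q y) fun ν => f ν y) ∧
      ∀ x, lqSum (q x) (fun ν => ∑ jk ∈ Finset.HasAntidiagonal.antidiagonal ν,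
          κ ^ jk.2 * dyadicAvg α jk.1 (f ν) x) ≤
        ENNReal.ofReal (Real.exp (K + 1)) * (∑' k : ℕ, κ ^ k) ^ 3 *
          ((⨆ j, dyadicAvg α j (fun y => lqSum (q y) fun ν => f ν y) x) +
            ∑' j, dyadicAvg α j (J j) x) := by
  have hq0 : ∀ x, 0 < q x := fun x => zero_lt_one.trans_le (hq x)
  set E := ENNReal.ofReal (Real.exp (K + 1))
  have hE : 1 ≤ E := ENNReal.one_le_ofReal.2 (Real.one_le_exp (by linarith [hosc.nonneg]))
  set S := ∑' k : ℕ, κ ^ k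
  have hS1 : 1 ≤ S := one_le_tsum_pow κ
  have hSt : S ≠ ∞ := tsum_pow_ne_top hκ
  set G : Rn n → ℝ≥0∞ := fun y => lqSum (q y) fun ν => f ν y
  have hG : Measurable G := measurable_lqSum hqm hf
  set H : ℕ → Rn n → ℝ≥0∞ := fun ν y => G y * (f ν y / G y) ^ q y
  have hH : ∀ ν, Measurable (H ν) := fun ν => hG.mul (((hf ν).div hG).pow hqm)
  refine ⟨fun j y => ∑' k, κ ^ k / S * H (j + k) y,
    fun j => Measurable.tsum fun k => (hH (j + k)).const_mul _,
    fun y => (tsum_tsum_div_mul_add_le _ fun ν => H ν y).trans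
      (tsum_lqSum_mul_div_rpow_le (hq0 y) fun ν => f ν y), fun x => ?_⟩
  set A := ⨆ j, dyadicAvg α j G x
  have hd : ∀ j ν, dyadicAvg α j (f ν) x ^ q x ≤
      E * (A ^ (q x - 1) * dyadicAvg α j (H ν) x) + 2⁻¹ ^ (j + 1) * A ^ q x := fun j ν => by
    have hA : dyadicAvg α j G x ≤ A := le_iSup (fun j => dyadicAvg α j G x) j
    refine (dyadicAvg_rpow_le hqm hosc hq (hf ν) hG
      (fun y => le_lqSum (hq0 y) (fun ν => f ν y) ν) j x).trans ?_
    gcongr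
    · linarith [hq x]
    · exact (hq0 x).le
  have hT : ∑' j, ∑' k, κ ^ k * dyadicAvg α j (H (j + k)) x =
      S * ∑' j, dyadicAvg α j (fun y => ∑' k, κ ^ k / S * H (j + k) y) x := by
    simp only [dyadicAvg_tsum_mul α _ _ (fun k => hH (_ + k)), ← ENNReal.tsum_mul_left]
    refine tsum_congr fun j => tsum_congr fun k => ?_
    rw [← mul_assoc, ENNReal.mul_div_cancel (zero_lt_one.trans_le hS1).ne' hSt]
  refine (lqSum_sum_antidiagonal_le (hq x) hE hd).trans ?_
  rw [hT]
  calc S * (E * S * (A + S * _)) ≤ S * (E * S * (S * A + S * _)) := by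
        gcongr
        exact le_mul_of_one_le_left' hS1
    _ = _ := by ring

lemma exists_lqSum_lconv_etaK_le {q : Rn n → ℝ} {K m : ℝ} (hqm : Measurable q)
    (hosc : ∀ α, CellOsc α q K) (hq : ∀ x, 1 ≤ q x) (hm : (n : ℝ) < m) :
    ∃ D : ℝ≥0∞, 1 ≤ D ∧ D ≠ ∞ ∧ ∀ f : ℕ → Rn n → ℝ≥0∞, (∀ ν, Measurable (f ν)) →
      ∃ J : (Fin n → Bool) → ℕ → Rn n → ℝ≥0∞, (∀ b j, Measurable (J b j)) ∧
        (∀ b y, ∑' j, J b j y ≤ lqSum (q y) fun ν => f ν y) ∧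
        ∀ x, lqSum (q x) (fun ν => lconv (etaK ν m) (f ν) x) / D ≤
          ∑ b, ((⨆ j, dyadicAvg (thirdShift b) j (fun y => lqSum (q y) fun ν => f ν y) x) +
            ∑' j, dyadicAvg (thirdShift b) j (J b j) x) +
          lconv (etaK 0 m) (fun y => lqSum (q y) fun ν => f ν y) x := by
  have hm0 : 0 ≤ m := (Nat.cast_nonneg n).trans hm.le
  have hq0 : ∀ x, 0 < q x := fun x => zero_lt_one.trans_le (hq x)
  set κ := ENNReal.ofReal (2 ^ (-(m - n)))
  have hκ : κ < 1 := ofReal_two_rpow_neg_lt_one (sub_pos.2 hm)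
  set S := ∑' k : ℕ, κ ^ k
  have hS1 : 1 ≤ S := one_le_tsum_pow κ
  have hSt : S ≠ ∞ := tsum_pow_ne_top hκ
  set E := ENNReal.ofReal (Real.exp (K + 1))
  have hE1 : 1 ≤ E := ENNReal.one_le_ofReal.2 (Real.one_le_exp (by linarith [(hosc 0).nonneg]))
  set c := ENNReal.ofReal (8 ^ m)
  have hc1 : 1 ≤ c := ENNReal.one_le_ofReal.2 (Real.one_le_rpow (by norm_num) hm0)
  have hSE : S ≤ E * S ^ 3 :=
    (le_self_pow₀ hS1 (by simp)).trans (le_mul_of_one_le_left' hE1)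
  have hct : c ≠ ∞ := by simp [c]
  have hEt : E ≠ ∞ := by simp [E]
  refine ⟨c * (E * S ^ 3), one_le_mul hc1 (hS1.trans hSE), by finiteness, fun f hf => ?_⟩
  choose J hJ hJG hJle using fun b : Fin n → Bool =>
    (hosc (thirdShift b)).exists_lqSum_sum_antidiagonal_le hqm hq hκ hf
  refine ⟨J, hJ, hJG, fun x => ENNReal.div_le_of_le_mul' ?_⟩
  set G : Rn n → ℝ≥0∞ := fun y => lqSum (q y) fun ν => f ν y
  set B := lconv (etaK 0 m) G x
  have hkernel : ∀ ν, lconv (etaK ν m) (f ν) x ≤ c *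
      (∑ b : Fin n → Bool, ∑ jk ∈ Finset.HasAntidiagonal.antidiagonal ν,
        κ ^ jk.2 * dyadicAvg (thirdShift b) jk.1 (f ν) x + κ ^ ν * B) := fun ν => by
    rw [Finset.sum_comm]
    simp only [← Finset.mul_sum]
    refine (lconv_etaK_le hm0 ν (hf ν) x).trans ?_
    gcongr
    exact lintegral_mono fun y => mul_le_mul_right (le_lqSum (hq0 y) (fun ν => f ν y) ν) _
  have hdecay : lqSum (q x) (fun ν => κ ^ ν * B) ≤ S * B :=
    (lqSum_le_tsum (hq x) _).trans_eq ENNReal.tsum_mul_right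
  refine (lqSum_mono (hq0 x) hkernel).trans ?_
  rw [lqSum_const_mul (hq0 x), mul_assoc, mul_add, Finset.mul_sum]
  gcongr
  refine (lqSum_add_le (hq x) _ _).trans (add_le_add ((lqSum_sum_le _ (hq x) _).trans ?_)
    (hdecay.trans (mul_le_mul_left hSE _)))
  exact Finset.sum_le_sum fun b _ => hJle b x

theorem LogExponent.exists_lintegral_lqSum_lconv_rpow_le {P q : Rn n → ℝ} {Pinf K m : ℝ}
    (hP : LogExponent P Pinf) (hqm : Measurable q) (hosc : ∀ α, CellOsc α q K)
    (hq : ∀ x, 1 ≤ q x) (hm : (n : ℝ) < m) :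
    ∃ C : ℝ≥0∞, C ≠ ∞ ∧ ∀ f : ℕ → Rn n → ℝ≥0∞, (∀ ν, Measurable (f ν)) →
      ∫⁻ x, lqSum (q x) (fun ν => f ν x) ^ P x ≤ 1 →
        ∫⁻ x, lqSum (q x) (fun ν => lconv (etaK ν m) (f ν) x) ^ P x ≤ C := by
  have hP1 : ∀ x, 1 ≤ P x := fun x => (hP.one_lt x).le
  have hP0 : ∀ x, 0 ≤ P x := fun x => zero_le_one.trans (hP1 x)
  obtain ⟨b, hPb⟩ := hP.bddAbove
  have hb0 : 0 ≤ b := (hP0 0).trans (hPb 0)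
  choose C₁ hC₁t hC₁ using fun i : Fin n → Bool =>
    hP.exists_lintegral_tsum_dyadicAvg_rpow_le (thirdShift i)
  choose C₂ hC₂t hC₂ using fun i : Fin n → Bool =>
    hP.exists_lintegral_iSup_dyadicAvg_rpow_le (thirdShift i)
  obtain ⟨C₃, hC₃t, hC₃⟩ := hP.exists_lintegral_lconv_etaK_zero_rpow_le hm
  obtain ⟨D, hD1, hDt, hD⟩ := exists_lqSum_lconv_etaK_le hqm hosc hq hm
  have hsum : ∑ i, 2 ^ b * (C₂ i + C₁ i) ≠ ∞ :=
    ENNReal.sum_ne_top.2 fun i _ => by have := hC₁t i; have := hC₂t i; finiteness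
  set N : ℝ≥0∞ := (Fintype.card (Fin n → Bool) : ℝ≥0∞)
  refine ⟨D ^ b * (2 ^ b * (N ^ b * (∑ i, 2 ^ b * (C₂ i + C₁ i)) + C₃)), by finiteness,
    fun f hf hf1 => ?_⟩
  obtain ⟨J, hJ, hJG, hle⟩ := hD f hf
  set G : Rn n → ℝ≥0∞ := fun y => lqSum (q y) fun ν => f ν y
  have hG : Measurable G := measurable_lqSum hqm hf
  set A : (Fin n → Bool) → Rn n → ℝ≥0∞ := fun i x => ⨆ j, dyadicAvg (thirdShift i) j G x
  have hA : ∀ i, Measurable (A i) := fun i => Measurable.iSup fun j => measurable_dyadicAvg _ j hG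
  set T : (Fin n → Bool) → Rn n → ℝ≥0∞ := fun i x => ∑' j, dyadicAvg (thirdShift i) j (J i j) x
  have hT : ∀ i, Measurable (T i) := fun i =>
    Measurable.tsum fun j => measurable_dyadicAvg _ j (hJ i j)
  have hJ1 : ∀ i, ∫⁻ x, (∑' j, J i j x) ^ P x ≤ 1 := fun i =>
    (lintegral_mono fun x => ENNReal.rpow_le_rpow (hJG i x) (hP0 x)).trans hf1
  refine lintegral_rpow_le_of_div hP0 hPb hb0 hD1 hDt ?_
  calc ∫⁻ x, (lqSum (q x) (fun ν => lconv (etaK ν m) (f ν) x) / D) ^ P x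
      ≤ ∫⁻ x, (∑ i, (A i x + T i x) + lconv (etaK 0 m) G x) ^ P x :=
        lintegral_mono fun x => ENNReal.rpow_le_rpow (hle x) (hP0 x)
    _ ≤ 2 ^ b * (N ^ b * (∑ i, 2 ^ b * ((∫⁻ x, A i x ^ P x) + ∫⁻ x, T i x ^ P x)) +
          ∫⁻ x, lconv (etaK 0 m) G x ^ P x) :=
        lintegral_sum_add_add_rpow_le hP.measurable hP1 hPb hA hT
          (measurable_lconv (measurable_etaK 0 m) hG)
    _ ≤ 2 ^ b * (N ^ b * (∑ i, 2 ^ b * (C₂ i + C₁ i)) + C₃) := by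
        gcongr with i
        exacts [hC₂ i G hG hf1, hC₁ i (J i) (hJ i) (hJ1 i), hC₃ G hG hf1]

/-! ### Norms of indicators of balls -/

lemma LogExponent.conjExponent {P : Rn n → ℝ} {Pinf : ℝ} (hP : LogExponent P Pinf) :
    LogExponent (fun x => (P x).conjExponent) Pinf.conjExponent := by
  obtain ⟨a, ha, haP⟩ := hP.exists_one_lt_le
  obtain ⟨b, hPb⟩ := hP.bddAbove
  obtain ⟨c, hc, hloc⟩ := hP.locLogHolder
  obtain ⟨d, hdec⟩ := hP.exists_logDecay
  have hb : 1 < b := (hP.one_lt 0).trans_le (hPb 0)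
  have hdiff : ∀ {a s t : ℝ}, 1 < a → a ≤ s → a ≤ t → ∀ {e l : ℝ}, |s - t| ≤ e / l →
      |s.conjExponent - t.conjExponent| ≤ e / (a - 1) ^ 2 / l := fun ha hs ht e l h => by
    rw [div_right_comm]
    exact (abs_conjExponent_sub_le ha hs ht).trans (by gcongr)
  refine ⟨⟨_, one_lt_conjExponent hb, fun x => conjExponent_le_conjExponent (hP.one_lt x) (hPb x)⟩,
    ⟨_, fun x => conjExponent_le_conjExponent ha (haP x)⟩, one_lt_conjExponent hP.one_lt_inf,
    ⟨c / (a - 1) ^ 2, ?_, fun x y => hdiff ha (haP x) (haP y) (hloc x y)⟩,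
    ⟨d / (a ⊓ Pinf - 1) ^ 2, fun x => hdiff (lt_inf_iff.2 ⟨ha, hP.one_lt_inf⟩)
      (inf_le_left.trans (haP x)) inf_le_right (hdec x)⟩⟩
  have : 0 < a - 1 := sub_pos.2 ha
  positivity

/-- A quantity comparable with the norm of the indicator of `B_r(x)` in `L^{P(·)}`: it is
`r^{n/P(x)}` for `r ≤ 1` and `r^{n/P_∞}` for `r ≥ 1`. -/
def ballScale (P : Rn n → ℝ) (Pinf : ℝ) (x : Rn n) (r : ℝ) : ℝ :=
  r ^ (n / P x : ℝ) * max 1 r ^ (n / Pinf - n / P x : ℝ)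

section BallScale

variable {P : Rn n → ℝ} {Pinf : ℝ} {x : Rn n} {r : ℝ}

lemma ballScale_of_le_one (h : r ≤ 1) : ballScale P Pinf x r = r ^ (n / P x : ℝ) := by
  rw [ballScale, max_eq_left h, Real.one_rpow, mul_one]

lemma ballScale_of_one_le (h : 1 ≤ r) : ballScale P Pinf x r = r ^ (n / Pinf : ℝ) := by
  rw [ballScale, max_eq_right h, ← Real.rpow_add (by linarith), add_sub_cancel]

lemma ballScale_pos (P : Rn n → ℝ) (Pinf : ℝ) (x : Rn n) (hr : 0 < r) :
    0 < ballScale P Pinf x r := by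
  have : 0 < max 1 r := by positivity
  unfold ballScale
  positivity

lemma ballScale_mul_ballScale_conjExponent (hP : 1 < P x) (hPinf : 1 < Pinf) (hr : 0 < r) :
    ballScale P Pinf x r * ballScale (fun x => (P x).conjExponent) Pinf.conjExponent x r =
      r ^ (n : ℝ) := by
  have hdiv : ∀ {s : ℝ}, 1 < s → (n / s + n / s.conjExponent : ℝ) = n := fun {s} hs => by
    have : s - 1 ≠ 0 := by linarith
    rw [Real.conjExponent]
    field_simp
    ring
  rcases le_total r 1 with h | h
  · rw [ballScale_of_le_one h, ballScale_of_le_one h, ← Real.rpow_add hr, hdiv hP]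
  · rw [ballScale_of_one_le h, ballScale_of_one_le h, ← Real.rpow_add hr, hdiv hPinf]

lemma volume_ball_mul_rpow_neg (x : Rn n) (hr : 0 < r) :
    ENNReal.ofReal (r ^ (-n : ℝ)) * volume (Metric.ball x r) =
      volume (Metric.ball (0 : Rn n) 1) := by
  rw [Measure.addHaar_ball_of_pos volume x hr, ← mul_assoc, ← ENNReal.ofReal_mul (by positivity),
    finrank_euclideanSpace_fin, ← Real.rpow_natCast, ← Real.rpow_add hr, neg_add_cancel,
    Real.rpow_zero, ENNReal.ofReal_one, one_mul]

lemma LocLogHolder.exists_abs_sub_mul_neg_log_le (hP : LocLogHolder P) :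
    ∃ K, ∀ (x y : Rn n) (r : ℝ), 0 < r → y ∈ Metric.ball x r →
      |P y - P x| * -Real.log r ≤ K := by
  obtain ⟨c, hc, h⟩ := hP
  refine ⟨c, fun x y r hr hy => ?_⟩
  rcases eq_or_ne y x with rfl | hyx
  · simpa using hc.le
  have hinv : r⁻¹ ≤ (dist y x)⁻¹ := inv_anti₀ (dist_pos.2 hyx) (Metric.mem_ball.1 hy).le
  have hlog : -Real.log r ≤ Real.log (Real.exp 1 + (dist y x)⁻¹) := by
    rw [← Real.log_inv]
    exact Real.log_le_log (by positivity) (by linarith [Real.exp_pos 1])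
  exact (mul_le_mul_of_nonneg_left hlog (abs_nonneg _)).trans ((le_div_iff₀ (zero_lt_one.trans_le
    (one_le_log_exp_add (inv_nonneg.2 dist_nonneg)))).1 (h y x))

lemma ofReal_inv_ballScale_rpow_le_of_le_one {K : ℝ} {y : Rn n} (hPx : 1 ≤ P x) (hr : 0 < r)
    (hr1 : r ≤ 1) (h : |P y - P x| * -Real.log r ≤ K) :
    ENNReal.ofReal (ballScale P Pinf x r)⁻¹ ^ P y ≤
      ENNReal.ofReal (Real.exp (n * K)) * ENNReal.ofReal (r ^ (-n : ℝ)) := by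
  have hlog : 0 ≤ -Real.log r := neg_nonneg.2 (Real.log_nonpos hr.le hr1)
  have hsplit : -(n / P x : ℝ) * P y = -(n / P x) * (P y - P x) + -n := by
    field_simp
    ring
  have hexp : Real.log r * (-(n / P x) * (P y - P x)) ≤ n * K :=
    calc Real.log r * (-(n / P x) * (P y - P x)) = n / P x * ((P y - P x) * -Real.log r) := by ring
      _ ≤ n / P x * (|P y - P x| * -Real.log r) := by
          gcongr
          exact le_abs_self _
      _ ≤ n * K := by
          gcongr
          exact div_le_self (Nat.cast_nonneg n) hPx
  rw [ballScale_of_le_one hr1, ENNReal.ofReal_rpow_of_pos (by positivity),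
    ← ENNReal.ofReal_mul (by positivity), ← Real.rpow_neg hr.le, ← Real.rpow_mul hr.le, hsplit,
    Real.rpow_add hr]
  refine ENNReal.ofReal_le_ofReal ?_
  gcongr
  rw [Real.rpow_def_of_pos hr]
  exact Real.exp_le_exp.2 hexp

lemma LogDecay.setLIntegral_ball_inv_ballScale_rpow_le {c : ℝ} (hdec : LogDecay P Pinf c)
    (hP1 : ∀ y, 1 ≤ P y) (hPinf : 0 < Pinf) (hr : 1 ≤ r) :
    ∫⁻ y in Metric.ball x r, ENNReal.ofReal (ballScale P Pinf x r)⁻¹ ^ P y ≤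
      ENNReal.ofReal (Real.exp ((n + 1) * c)) * volume (Metric.ball (0 : Rn n) 1) +
        ∫⁻ y : Rn n, decayW (n + 1) y := by
  have hr0 : 0 < r := zero_lt_one.trans_le hr
  set t := ENNReal.ofReal (ballScale P Pinf x r)⁻¹ with ht
  rw [ballScale_of_one_le hr] at ht
  have ht1 : t ≤ 1 := by
    rw [ht, ENNReal.ofReal_le_one]
    exact inv_le_one_of_one_le₀ (Real.one_le_rpow hr (by positivity))
  have htinf : t ^ Pinf = ENNReal.ofReal (r ^ (-n : ℝ)) := by
    rw [ht, ENNReal.ofReal_rpow_of_pos (by positivity), ← Real.rpow_neg hr0.le,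
      ← Real.rpow_mul hr0.le, neg_mul, div_mul_cancel₀ _ hPinf.ne']
  calc ∫⁻ y in Metric.ball x r, t ^ P y
      ≤ ∫⁻ y in Metric.ball x r, ENNReal.ofReal (Real.exp ((n + 1) * c)) * t ^ Pinf +
        decayW (n + 1) y := lintegral_mono fun y => rpow_le_mul_rpow_add_decayW ht1
          (by positivity) (hP1 y) hPinf.le (hdec.abs_sub_mul_log_self_le y)
    _ = ENNReal.ofReal (Real.exp ((n + 1) * c)) * volume (Metric.ball (0 : Rn n) 1) +
        ∫⁻ y in Metric.ball x r, decayW (n + 1) y := by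
        rw [lintegral_add_left measurable_const, setLIntegral_const, mul_assoc, htinf,
          volume_ball_mul_rpow_neg x hr0]
    _ ≤ _ := by
        gcongr
        exact Measure.restrict_le_self

lemma LogExponent.exists_setLIntegral_ball_inv_ballScale_rpow_le (hP : LogExponent P Pinf) :
    ∃ C : ℝ≥0∞, C ≠ ∞ ∧ ∀ (x : Rn n) (r : ℝ), 0 < r →
      ∫⁻ y in Metric.ball x r, ENNReal.ofReal (ballScale P Pinf x r)⁻¹ ^ P y ≤ C := by
  obtain ⟨K, hK⟩ := hP.locLogHolder.exists_abs_sub_mul_neg_log_le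
  obtain ⟨c, hc⟩ := hP.exists_logDecay
  set Ω := volume (Metric.ball (0 : Rn n) 1) with hΩ
  have hΩ_ne_top : Ω ≠ ∞ := measure_ball_lt_top.ne
  set W := ∫⁻ x : Rn n, decayW (n + 1) x
  have hW : W ≠ ∞ := (lintegral_decayW_lt_top (by linarith)).ne
  refine ⟨ENNReal.ofReal (Real.exp (n * K)) * Ω +
    (ENNReal.ofReal (Real.exp ((n + 1) * c)) * Ω + W), by finiteness, fun x r hr => ?_⟩
  rcases le_total r 1 with hr1 | hr1
  · refine le_trans ?_ le_self_add
    rw [hΩ, ← volume_ball_mul_rpow_neg x hr, ← mul_assoc, ← setLIntegral_const]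
    exact setLIntegral_mono' measurableSet_ball fun y hy =>
      ofReal_inv_ballScale_rpow_le_of_le_one (hP.one_lt x).le hr hr1 (hK x y r hr hy)
  · exact (hc.setLIntegral_ball_inv_ballScale_rpow_le (fun y => (hP.one_lt y).le)
      (zero_lt_one.trans hP.one_lt_inf) hr1).trans le_add_self

lemma LogExponent.exists_setLIntegral_ball_le (hP : LogExponent P Pinf) :
    ∃ C : ℝ≥0∞, C ≠ ∞ ∧ ∀ (G : Rn n → ℝ≥0∞) (Λ : ℝ≥0∞) (x : Rn n) (r : ℝ), Measurable G → Λ ≠ 0 →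
      Λ ≠ ∞ → 0 < r → ∫⁻ y in Metric.ball x r, (G y / Λ) ^ P y ≤ 1 →
      ∫⁻ y in Metric.ball x r, G y ≤
        C * (Λ * ENNReal.ofReal (r ^ (n : ℝ) * (ballScale P Pinf x r)⁻¹)) := by
  obtain ⟨C, hC, hCf⟩ := hP.conjExponent.exists_setLIntegral_ball_inv_ballScale_rpow_le
  refine ⟨1 + C, by finiteness, fun G Λ x r hG hΛ0 hΛt hr h => ?_⟩
  set ψ := ballScale (fun x => (P x).conjExponent) Pinf.conjExponent x r
  have hψ0 : 0 < ψ := ballScale_pos _ _ _ hr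
  have hscale : r ^ (n : ℝ) * (ballScale P Pinf x r)⁻¹ = ψ := by
    rw [← ballScale_mul_ballScale_conjExponent (hP.one_lt x) hP.one_lt_inf hr, mul_comm,
      inv_mul_cancel_left₀ (ballScale_pos P Pinf x hr).ne']
  rw [hscale]
  have hψinv : ENNReal.ofReal ψ⁻¹ * ENNReal.ofReal ψ = 1 := by
    rw [← ENNReal.ofReal_mul (inv_nonneg.2 hψ0.le), inv_mul_cancel₀ hψ0.ne', ENNReal.ofReal_one]
  have hGP : Measurable fun y => (G y / Λ) ^ P y := (hG.div_const Λ).pow hP.measurable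
  calc ∫⁻ y in Metric.ball x r, G y
      ≤ ∫⁻ y in Metric.ball x r, (Λ * ENNReal.ofReal ψ) *
        ((G y / Λ) ^ P y + ENNReal.ofReal ψ⁻¹ ^ (P y).conjExponent) := by
        refine lintegral_mono fun y => ?_
        calc G y = (ENNReal.ofReal ψ⁻¹ * ENNReal.ofReal ψ) * (Λ * (G y / Λ)) := by
              rw [hψinv, one_mul, ENNReal.mul_div_cancel hΛ0 hΛt]
          _ = (Λ * ENNReal.ofReal ψ) * ((G y / Λ) * ENNReal.ofReal ψ⁻¹) := by ring
          _ ≤ _ := by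
              gcongr
              exact mul_le_rpow_add_rpow _ _ (Real.HolderConjugate.conjExponent (hP.one_lt y))
    _ = (Λ * ENNReal.ofReal ψ) * ((∫⁻ y in Metric.ball x r, (G y / Λ) ^ P y) +
        ∫⁻ y in Metric.ball x r, ENNReal.ofReal ψ⁻¹ ^ (P y).conjExponent) := by
        rw [lintegral_const_mul' _ _ (ENNReal.mul_ne_top hΛt (by simp)), lintegral_add_left hGP]
    _ ≤ (Λ * ENNReal.ofReal ψ) * (1 + C) := by
        gcongr
        exact hCf x r hr
    _ = _ := mul_comm _ _

end BallScale

/-! ### Tails of convolutions -/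

section KernelSum

variable {s m t ρ : ℝ}

lemma rpow_mul_one_add_rpow_neg_le (hm : 0 ≤ m) (ht : 0 < t) :
    t ^ s * (1 + t) ^ (-m) ≤ t ^ (-(m - s)) := by
  calc t ^ s * (1 + t) ^ (-m) ≤ t ^ s * t ^ (-m) := by
        gcongr ?_ * ?_
        exact Real.rpow_le_rpow_of_nonpos ht (by linarith) (by linarith)
    _ = t ^ (-(m - s)) := by
        rw [← Real.rpow_add ht]
        congr 1
        ring

lemma rpow_mul_one_add_rpow_neg_le_self (hs : 1 ≤ s) (hm : 0 ≤ m) (ht : 0 < t) (ht1 : t ≤ 1) :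
    t ^ s * (1 + t) ^ (-m) ≤ t := by
  calc t ^ s * (1 + t) ^ (-m) ≤ t ^ (1 : ℝ) * 1 := by
        gcongr ?_ * ?_
        · exact Real.rpow_le_rpow_of_exponent_ge ht ht1 hs
        · exact Real.rpow_le_one_of_one_le_of_nonpos (by linarith) (by linarith)
    _ = t := by rw [Real.rpow_one, mul_one]

lemma tsum_two_pow_mul_rpow_mul_le (hm : 0 ≤ m) (hρ : 0 < ρ) :
    ∑' ν : ℕ, ENNReal.ofReal ((2 ^ ν * ρ) ^ s * (1 + 2 ^ ν * ρ) ^ (-m)) ≤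
      (∑' k : ℕ, ENNReal.ofReal (2 ^ (-(m - s))) ^ k) * ENNReal.ofReal (ρ ^ (-(m - s))) := by
  rw [← ENNReal.tsum_mul_right]
  refine ENNReal.tsum_le_tsum fun ν => ?_
  rw [← ENNReal.ofReal_pow (by positivity), Real.rpow_pow_comm zero_le_two,
    ← ENNReal.ofReal_mul (by positivity), ← Real.mul_rpow (by positivity) hρ.le]
  exact ENNReal.ofReal_le_ofReal (rpow_mul_one_add_rpow_neg_le hm (by positivity))

lemma sum_range_two_pow_mul_rpow_mul_le {N : ℕ} (hs : 1 ≤ s) (hm : 0 ≤ m) (hρ : 0 < ρ)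
    (hN : 2 ^ N * ρ ≤ 1) :
    ∑ ν ∈ Finset.range (N + 1), ENNReal.ofReal ((2 ^ ν * ρ) ^ s * (1 + 2 ^ ν * ρ) ^ (-m)) ≤ 2 := by
  calc ∑ ν ∈ Finset.range (N + 1), ENNReal.ofReal ((2 ^ ν * ρ) ^ s * (1 + 2 ^ ν * ρ) ^ (-m))
      ≤ ∑ ν ∈ Finset.range (N + 1), ENNReal.ofReal (2 ^ ν * ρ) := by
        refine Finset.sum_le_sum fun ν hν => ENNReal.ofReal_le_ofReal
          (rpow_mul_one_add_rpow_neg_le_self hs hm (by positivity) (le_trans ?_ hN))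
        gcongr
        exacts [one_le_two, Nat.lt_succ_iff.1 (Finset.mem_range.1 hν)]
    _ = ENNReal.ofReal ((2 ^ (N + 1) - 1) * ρ) := by
        rw [← ENNReal.ofReal_sum_of_nonneg fun _ _ => by positivity, ← Finset.sum_mul,
          geom_sum_eq (by norm_num)]
        norm_num
    _ ≤ ENNReal.ofReal 2 := ENNReal.ofReal_le_ofReal (by rw [pow_succ]; linarith)
    _ = 2 := ENNReal.ofReal_ofNat 2

lemma exists_tsum_two_pow_mul_rpow_mul_le (hs : 1 ≤ s) (hsm : s < m) :
    ∃ C : ℝ≥0∞, C ≠ ∞ ∧ ∀ ρ : ℝ, 0 < ρ →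
      ∑' ν : ℕ, ENNReal.ofReal ((2 ^ ν * ρ) ^ s * (1 + 2 ^ ν * ρ) ^ (-m)) ≤
        C * ENNReal.ofReal (max 1 ρ ^ (-(m - s))) := by
  have hm : 0 ≤ m := by linarith
  set S := ∑' k : ℕ, ENNReal.ofReal (2 ^ (-(m - s))) ^ k
  have hS : S ≠ ∞ := tsum_pow_ne_top (ofReal_two_rpow_neg_lt_one (sub_pos.2 hsm))
  refine ⟨2 + S, by finiteness, fun ρ hρ => ?_⟩
  rcases le_total 1 ρ with h | h
  · rw [max_eq_right h]
    exact (tsum_two_pow_mul_rpow_mul_le hm hρ).trans (mul_le_mul_left le_add_self _)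
  · obtain ⟨N, hN, hN'⟩ := exists_nat_pow_near ((one_le_inv₀ hρ).2 h) (one_lt_two (α := ℝ))
    have hN1 : 2 ^ N * ρ ≤ 1 := by rwa [← le_inv_mul_iff₀' hρ, mul_one]
    have hN2 : 1 ≤ 2 ^ (N + 1) * ρ := ((inv_lt_iff_one_lt_mul₀ hρ).1 hN').le
    rw [max_eq_left h, Real.one_rpow, ENNReal.ofReal_one, mul_one,
      ← ENNReal.summable.sum_add_tsum_nat_add' (k := N + 1)]
    gcongr
    · exact sum_range_two_pow_mul_rpow_mul_le hs hm hρ hN1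
    · simp only [pow_add (2 : ℝ) _ (N + 1), mul_assoc]
      refine (tsum_two_pow_mul_rpow_mul_le hm (by positivity)).trans (mul_le_of_le_one_right' ?_)
      exact ENNReal.ofReal_le_one.2 (Real.rpow_le_one_of_one_le_of_nonpos hN2 (by linarith))

end KernelSum

lemma etaK_eq_ofReal_mul (ν : ℕ) (m : ℝ) {z : Rn n} (hz : 0 < ‖z‖) :
    etaK ν m z = ENNReal.ofReal (‖z‖ ^ (-n : ℝ)) *
      ENNReal.ofReal ((2 ^ ν * ‖z‖) ^ (n : ℝ) * (1 + 2 ^ ν * ‖z‖) ^ (-m)) := by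
  rw [etaK, ← ENNReal.ofReal_mul (by positivity)]
  congr 1
  rw [Real.mul_rpow (by positivity) hz.le, Real.rpow_neg hz.le, pow_mul, Real.rpow_natCast,
    Real.rpow_natCast]
  field_simp

lemma exists_tsum_etaK_le (hn : n ≠ 0) {m : ℝ} (hm : (n : ℝ) < m) :
    ∃ C : ℝ≥0∞, C ≠ ∞ ∧ ∀ z : Rn n, 0 < ‖z‖ →
      ∑' ν, etaK ν m z ≤ C * ENNReal.ofReal (‖z‖ ^ (-n : ℝ) * max 1 ‖z‖ ^ (-(m - n))) := by
  obtain ⟨C, hC, hle⟩ := exists_tsum_two_pow_mul_rpow_mul_le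
    (by exact_mod_cast Nat.one_le_iff_ne_zero.2 hn) hm
  refine ⟨C, hC, fun z hz => ?_⟩
  simp only [etaK_eq_ofReal_mul _ m hz]
  rw [ENNReal.tsum_mul_left, ENNReal.ofReal_mul (by positivity), mul_left_comm]
  gcongr
  exact hle _ hz

lemma lqSum_lconv_etaK_indicator_le {q : Rn n → ℝ} {f : ℕ → Rn n → ℝ≥0∞}
    (hf : ∀ ν, Measurable (f ν)) (hq : ∀ x, 1 ≤ q x) (m : ℝ) {s : Set (Rn n)}
    (hs : MeasurableSet s) (y : Rn n) :
    lqSum (q y) (fun ν => lconv (etaK ν m) (s.indicator (f ν)) y) ≤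
      ∫⁻ z in s, (∑' ν, etaK ν m (y - z)) * lqSum (q z) fun ν => f ν z := by
  have hlconv : ∀ ν, lconv (etaK ν m) (s.indicator (f ν)) y =
      ∫⁻ z in s, etaK ν m (y - z) * f ν z := fun ν => by
    rw [lconv, ← lintegral_indicator hs]
    simp only [Set.indicator_mul_right]
  have hmeas : ∀ ν, Measurable fun z => etaK ν m (y - z) * f ν z := fun ν =>
    ((measurable_etaK ν m).comp (measurable_const.sub measurable_id)).mul (hf ν)
  calc lqSum (q y) (fun ν => lconv (etaK ν m) (s.indicator (f ν)) y)
      ≤ ∑' ν, ∫⁻ z in s, etaK ν m (y - z) * f ν z := by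
        simpa only [hlconv] using lqSum_le_tsum (hq y) _
    _ = ∫⁻ z in s, ∑' ν, etaK ν m (y - z) * f ν z :=
        (lintegral_tsum fun ν => (hmeas ν).aemeasurable).symm
    _ ≤ ∫⁻ z in s, (∑' ν, etaK ν m (y - z)) * lqSum (q z) fun ν => f ν z := by
        refine lintegral_mono fun z => ?_
        rw [← ENNReal.tsum_mul_right]
        gcongr with ν
        exact le_lqSum (zero_lt_one.trans_le (hq z)) (fun ν => f ν z) ν

lemma compl_ball_subset_iUnion_shell {X : Type*} [PseudoMetricSpace X] (x : X) {r : ℝ}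
    (hr : 0 < r) :
    (Metric.ball x (2 * r))ᶜ ⊆
      ⋃ k : ℕ, Metric.ball x (2 ^ (k + 2) * r) \ Metric.ball x (2 ^ (k + 1) * r) := by
  intro z hz
  rw [Set.mem_compl_iff, Metric.mem_ball, not_lt] at hz
  obtain ⟨k, hk, hk'⟩ := exists_nat_pow_near ((one_le_div (by positivity)).2 hz)
    (one_lt_two (α := ℝ))
  rw [le_div_iff₀ (by positivity), ← mul_assoc, ← pow_succ] at hk
  rw [div_lt_iff₀ (by positivity), ← mul_assoc, ← pow_succ] at hk'
  exact Set.mem_iUnion.2 ⟨k, hk', hk.not_gt⟩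

lemma two_pow_mul_le_norm_sub {E : Type*} [SeminormedAddCommGroup E] {x y z : E} {r : ℝ} {k : ℕ}
    (hy : y ∈ Metric.ball x r) (hz : z ∉ Metric.ball x (2 ^ (k + 1) * r)) :
    2 ^ k * r ≤ ‖y - z‖ := by
  have hr : 0 < r := dist_nonneg.trans_lt hy
  have hyx : dist y x < r := hy
  have hzx : 2 ^ (k + 1) * r ≤ dist z x := by simpa using hz
  have hkr : r ≤ 2 ^ k * r := le_mul_of_one_le_left hr.le (one_le_pow₀ one_le_two)
  rw [← dist_eq_norm, dist_comm]
  rw [pow_succ] at hzx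
  linarith [dist_triangle z y x]

lemma exists_lqSum_lconv_etaK_indicator_compl_ball_le_tsum (hn : n ≠ 0) {m : ℝ} (hm : (n : ℝ) < m) :
    ∃ C : ℝ≥0∞, C ≠ ∞ ∧ ∀ (q : Rn n → ℝ) (f : ℕ → Rn n → ℝ≥0∞) (x : Rn n) (r : ℝ),
      (∀ x, 1 ≤ q x) → (∀ ν, Measurable (f ν)) → 0 < r → ∀ y ∈ Metric.ball x r,
        lqSum (q y) (fun ν =>
            lconv (etaK ν m) ((Metric.ball x (2 * r))ᶜ.indicator (f ν)) y) ≤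
          ∑' k : ℕ, C * ENNReal.ofReal ((2 ^ k * r) ^ (-n : ℝ) * max 1 (2 ^ k * r) ^ (-(m - n))) *
            ∫⁻ z in Metric.ball x (2 ^ (k + 2) * r), lqSum (q z) fun ν => f ν z := by
  obtain ⟨C, hC, hCz⟩ := exists_tsum_etaK_le hn hm
  refine ⟨C, hC, fun q f x r hq hf hr y hy => ?_⟩
  set G : Rn n → ℝ≥0∞ := fun z => lqSum (q z) fun ν => f ν z
  set c : ℕ → ℝ≥0∞ := fun k =>
    C * ENNReal.ofReal ((2 ^ k * r) ^ (-n : ℝ) * max 1 (2 ^ k * r) ^ (-(m - n)))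
  have hkernel : ∀ k, ∀ z ∉ Metric.ball x (2 ^ (k + 1) * r),
      ∑' ν, etaK ν m (y - z) ≤ c k := fun k z hz => by
    have hk0 : 0 < 2 ^ k * r := by positivity
    have hk : 2 ^ k * r ≤ ‖y - z‖ := two_pow_mul_le_norm_sub hy hz
    refine (hCz _ (hk0.trans_le hk)).trans ?_
    simp only [c]
    gcongr C * ENNReal.ofReal (?_ * ?_)
    · exact Real.rpow_le_rpow_of_nonpos hk0 hk (by simp)
    · exact Real.rpow_le_rpow_of_nonpos (by positivity) (max_le_max le_rfl hk) (by linarith)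
  calc lqSum (q y) (fun ν => lconv (etaK ν m) ((Metric.ball x (2 * r))ᶜ.indicator (f ν)) y)
      ≤ ∫⁻ z in (Metric.ball x (2 * r))ᶜ, (∑' ν, etaK ν m (y - z)) * G z :=
        lqSum_lconv_etaK_indicator_le hf hq m measurableSet_ball.compl y
    _ ≤ ∑' k : ℕ, ∫⁻ z in Metric.ball x (2 ^ (k + 2) * r) \ Metric.ball x (2 ^ (k + 1) * r),
          (∑' ν, etaK ν m (y - z)) * G z :=
        (lintegral_mono_set (compl_ball_subset_iUnion_shell x hr)).trans (lintegral_iUnion_le _ _)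
    _ ≤ ∑' k : ℕ, ∫⁻ z in Metric.ball x (2 ^ (k + 2) * r), c k * G z :=
        ENNReal.tsum_le_tsum fun k => (setLIntegral_mono'
          (measurableSet_ball.diff measurableSet_ball) fun z hz =>
            mul_le_mul_left (hkernel k z hz.2) _).trans (lintegral_mono_set Set.sdiff_subset)
    _ = _ := tsum_congr fun k => lintegral_const_mul' _ _ (by finiteness)

section TailScale

variable {δ r ρ : ℝ}

lemma rpow_neg_mul_max_one_rpow_le {a τ lam : ℝ} (hδa : δ ≤ a) (hδτ : δ ≤ a - τ) (hr : 0 < r)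
    (hlam : 1 ≤ lam) :
    (lam * r) ^ (-a) * max 1 (lam * r) ^ τ ≤ lam ^ (-δ) * (r ^ (-a) * max 1 r ^ τ) := by
  have hlam0 : 0 < lam := zero_lt_one.trans_le hlam
  have hsplit : ∀ ρ : ℝ, 0 < ρ → ρ ^ (-a) * max 1 ρ ^ τ =
      ρ ^ (-δ) * (min 1 ρ ^ (-(a - δ)) * max 1 ρ ^ (-(a - δ - τ))) := fun ρ hρ => by
    have hmin : 0 < min 1 ρ := lt_min one_pos hρ
    have hmax : 0 < max 1 ρ := lt_max_of_lt_left one_pos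
    have hmul : ρ ^ (-(a - δ)) = min 1 ρ ^ (-(a - δ)) * max 1 ρ ^ (-(a - δ)) := by
      rw [← Real.mul_rpow hmin.le hmax.le, min_mul_max, one_mul]
    rw [show -a = -δ + -(a - δ) by ring, Real.rpow_add hρ, hmul,
      show -(a - δ - τ) = -(a - δ) + τ by ring, Real.rpow_add hmax]
    ring
  have hle : r ≤ lam * r := le_mul_of_one_le_left hr.le hlam
  rw [hsplit _ (by positivity), hsplit r hr, Real.mul_rpow hlam0.le hr.le, mul_assoc]
  gcongr _ * (_ * (?_ * ?_))
  · exact Real.rpow_le_rpow_of_nonpos (lt_min one_pos hr) (min_le_min le_rfl hle) (by linarith)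
  · exact Real.rpow_le_rpow_of_nonpos (by positivity) (max_le_max le_rfl hle) (by linarith)

lemma rpow_neg_mul_max_one_rpow_neg_mul_le {s m : ℝ} (hs : s ≤ m) (hρ : 0 < ρ) :
    ρ ^ (-s) * max 1 ρ ^ (-(m - s)) * (4 * ρ) ^ s ≤ 4 ^ m * max 1 (4 * ρ) ^ (-(m - s)) := by
  have hmax : max 1 (4 * ρ) ≤ 4 * max 1 ρ :=
    max_le (by linarith [le_max_left 1 ρ]) (by gcongr; exact le_max_right _ _)
  calc ρ ^ (-s) * max 1 ρ ^ (-(m - s)) * (4 * ρ) ^ s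
      = 4 ^ m * (4 * max 1 ρ) ^ (-(m - s)) := by
        rw [Real.mul_rpow (by norm_num) hρ.le, Real.mul_rpow (by norm_num) (by positivity),
          Real.rpow_neg hρ.le, neg_sub]
        field_simp
        rw [← Real.rpow_add (by norm_num), add_sub_cancel]
    _ ≤ 4 ^ m * max 1 (4 * ρ) ^ (-(m - s)) := by
        gcongr _ * ?_
        exact Real.rpow_le_rpow_of_nonpos (by positivity) hmax (by linarith)

lemma rpow_mul_inv_ballScale (P : Rn n → ℝ) (Pinf v : ℝ) (x : Rn n) (hr : 0 < r) :
    r ^ (n * (1 / P x - v) : ℝ) * (ballScale P Pinf x r)⁻¹ =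
      r ^ (-(n * v) : ℝ) * max 1 r ^ (n / P x - n / Pinf : ℝ) := by
  have hm : 0 < max 1 r := by positivity
  rw [ballScale, mul_inv, ← Real.rpow_neg hr.le, ← Real.rpow_neg hm.le, ← mul_assoc,
    ← Real.rpow_add hr]
  congr 2 <;> ring

lemma shell_scale_le (P : Rn n → ℝ) {Pinf v m : ℝ} (x : Rn n) (hm : (n : ℝ) ≤ m) (hδ : 0 ≤ δ)
    (hv : δ ≤ n * v) (hσ : n * (1 / P x - v) - n / Pinf ≤ m - n - δ) (hr : 0 < r) (k : ℕ) :
    (2 ^ k * r) ^ (-n : ℝ) * max 1 (2 ^ k * r) ^ (-(m - n)) *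
      ((2 ^ (k + 2) * r) ^ (n * (1 / P x - v) : ℝ) *
        ((2 ^ (k + 2) * r) ^ (n : ℝ) * (ballScale P Pinf x (2 ^ (k + 2) * r))⁻¹)) ≤
      4 ^ m * (2 ^ (-δ)) ^ k * (r ^ (n * (1 / P x - v) : ℝ) * (ballScale P Pinf x r)⁻¹) := by
  have hR : 2 ^ (k + 2) * r = 4 * (2 ^ k * r) := by ring
  have hR0 : 0 < 4 * (2 ^ k * r) := by positivity
  set R := 4 * (2 ^ k * r)
  set σ : ℝ := n / P x - n / Pinf
  rw [hR, mul_left_comm (R ^ _), rpow_mul_inv_ballScale P Pinf v x hr,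
    rpow_mul_inv_ballScale P Pinf v x hR0]
  calc _ = (2 ^ k * r) ^ (-n : ℝ) * max 1 (2 ^ k * r) ^ (-(m - n)) * R ^ (n : ℝ) *
        (R ^ (-(n * v) : ℝ) * max 1 R ^ σ) := by ring
    _ ≤ 4 ^ m * max 1 R ^ (-(m - n)) * (R ^ (-(n * v) : ℝ) * max 1 R ^ σ) := by
        gcongr ?_ * _
        exact rpow_neg_mul_max_one_rpow_neg_mul_le hm (by positivity)
    _ = 4 ^ m * ((2 ^ (k + 2) * r) ^ (-(n * v) : ℝ) *
        max 1 (2 ^ (k + 2) * r) ^ (-(m - n) + σ)) := by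
        rw [hR, Real.rpow_add (by positivity)]
        ring
    _ ≤ 4 ^ m * ((2 ^ (k + 2)) ^ (-δ) * (r ^ (-(n * v) : ℝ) * max 1 r ^ (-(m - n) + σ))) := by
        gcongr _ * ?_
        refine rpow_neg_mul_max_one_rpow_le hv ?_ hr (one_le_pow₀ one_le_two)
        have : n * (1 / P x - v) - n / Pinf = σ - n * v := by ring
        linarith
    _ ≤ 4 ^ m * ((2 ^ k) ^ (-δ) * (r ^ (-(n * v) : ℝ) * max 1 r ^ σ)) := by
        gcongr _ * (?_ * (_ * ?_))
        · exact Real.rpow_le_rpow_of_nonpos (by positivity)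
            (pow_le_pow_right₀ one_le_two (by lia)) (by linarith)
        · exact Real.rpow_le_rpow_of_exponent_le (le_max_left _ _) (by linarith)
    _ = _ := by rw [Real.rpow_pow_comm zero_le_two, mul_assoc]

end TailScale

/-- The modular form of `‖G‖ ≤ Λ` for the Morrey norm with exponents `P` and `u = 1 / v`: on each
ball `B_r(x)` the `P(·)`-modular of `G / (Λ r^{n(1/P(x) - v(x))})` is at most `1`. -/
def MorreyBound (P v : Rn n → ℝ) (Λ : ℝ≥0∞) (G : Rn n → ℝ≥0∞) : Prop :=
  ∀ (x : Rn n) (r : ℝ), 0 < r →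
    ∫⁻ y in Metric.ball x r,
      (G y / (Λ * ENNReal.ofReal (r ^ (n * (1 / P x - v x) : ℝ)))) ^ P y ≤ 1

lemma LogExponent.exists_setLIntegral_ball_le_of_morreyBound {P : Rn n → ℝ} {Pinf : ℝ}
    (hP : LogExponent P Pinf) :
    ∃ C : ℝ≥0∞, C ≠ ∞ ∧ ∀ (v : Rn n → ℝ) (G : Rn n → ℝ≥0∞) (Λ : ℝ≥0∞), Measurable G → Λ ≠ 0 →
      Λ ≠ ∞ → MorreyBound P v Λ G → ∀ (x : Rn n) (r : ℝ), 0 < r →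
        ∫⁻ y in Metric.ball x r, G y ≤ C * Λ * ENNReal.ofReal (r ^ (n * (1 / P x - v x) : ℝ) *
          (r ^ (n : ℝ) * (ballScale P Pinf x r)⁻¹)) := by
  obtain ⟨C, hC, hle⟩ := hP.exists_setLIntegral_ball_le
  refine ⟨C, hC, fun v G Λ hG hΛ0 hΛt hGΛ x r hr => ?_⟩
  have hr0 : ENNReal.ofReal (r ^ (n * (1 / P x - v x) : ℝ)) ≠ 0 :=
    (ENNReal.ofReal_pos.2 (by positivity)).ne'
  refine (hle G _ x r hG (mul_ne_zero hΛ0 hr0) (by finiteness) hr (hGΛ x r hr)).trans_eq ?_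
  rw [ENNReal.ofReal_mul (p := r ^ (n * (1 / P x - v x) : ℝ)) (by positivity), mul_assoc C Λ,
    mul_assoc Λ]

lemma LogExponent.exists_lqSum_lconv_etaK_indicator_compl_ball_le {P : Rn n → ℝ} {Pinf m δ : ℝ}
    (hP : LogExponent P Pinf) (hn : n ≠ 0) (hm : (n : ℝ) < m) (hδ : 0 < δ) :
    ∃ C : ℝ≥0∞, C ≠ ∞ ∧ ∀ (q v : Rn n → ℝ) (f : ℕ → Rn n → ℝ≥0∞) (Λ : ℝ≥0∞),
      Measurable q → (∀ x, 1 ≤ q x) → (∀ ν, Measurable (f ν)) → (∀ x, δ ≤ n * v x) →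
      (∀ x, n * (1 / P x - v x) - n / Pinf ≤ m - n - δ) → Λ ≠ 0 → Λ ≠ ∞ →
      MorreyBound P v Λ (fun y => lqSum (q y) fun ν => f ν y) → ∀ (x : Rn n) (r : ℝ), 0 < r →
        ∀ y ∈ Metric.ball x r,
          lqSum (q y) (fun ν =>
              lconv (etaK ν m) ((Metric.ball x (2 * r))ᶜ.indicator (f ν)) y) ≤
            C * Λ * ENNReal.ofReal
              (r ^ (n * (1 / P x - v x) : ℝ) * (ballScale P Pinf x r)⁻¹) := by
  obtain ⟨C₁, hC₁, hshell⟩ := exists_lqSum_lconv_etaK_indicator_compl_ball_le_tsum hn hm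
  obtain ⟨C₂, hC₂, hball⟩ := hP.exists_setLIntegral_ball_le_of_morreyBound
  set d := ENNReal.ofReal (2 ^ (-δ))
  have hd : ∑' k : ℕ, d ^ k ≠ ∞ := tsum_pow_ne_top (ofReal_two_rpow_neg_lt_one hδ)
  refine ⟨C₁ * C₂ * ENNReal.ofReal (4 ^ m) * ∑' k : ℕ, d ^ k, by finiteness,
    fun q v f Λ hqm hq hf hv hσ hΛ0 hΛt hG x r hr y hy => ?_⟩
  set X := r ^ (n * (1 / P x - v x) : ℝ) * (ballScale P Pinf x r)⁻¹
  set A : ℕ → ℝ := fun k => (2 ^ k * r) ^ (-n : ℝ) * max 1 (2 ^ k * r) ^ (-(m - n))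
  have hA : ∀ k, 0 ≤ A k := fun k => by positivity
  have hterm : ∀ k : ℕ, C₁ * ENNReal.ofReal (A k) *
      ∫⁻ z in Metric.ball x (2 ^ (k + 2) * r), lqSum (q z) (fun ν => f ν z) ≤
        C₁ * C₂ * ENNReal.ofReal (4 ^ m) * Λ * ENNReal.ofReal X * d ^ k := fun k => by
    set R : ℝ := 2 ^ (k + 2) * r
    calc C₁ * ENNReal.ofReal (A k) * ∫⁻ z in Metric.ball x R, lqSum (q z) (fun ν => f ν z)
        ≤ C₁ * ENNReal.ofReal (A k) * (C₂ * Λ * ENNReal.ofReal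
          (R ^ (n * (1 / P x - v x) : ℝ) * (R ^ (n : ℝ) * (ballScale P Pinf x R)⁻¹))) := by
          gcongr
          exact hball v _ Λ (measurable_lqSum hqm hf) hΛ0 hΛt hG x R (by positivity)
      _ = C₁ * C₂ * Λ * ENNReal.ofReal (A k *
          (R ^ (n * (1 / P x - v x) : ℝ) * (R ^ (n : ℝ) * (ballScale P Pinf x R)⁻¹))) := by
          rw [ENNReal.ofReal_mul (hA k)]
          ring
      _ ≤ C₁ * C₂ * Λ * ENNReal.ofReal (4 ^ m * (2 ^ (-δ)) ^ k * X) := by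
          gcongr _ * ENNReal.ofReal ?_
          exact shell_scale_le P x hm.le hδ.le (hv x) (hσ x) hr k
      _ = _ := by
          rw [ENNReal.ofReal_mul (by positivity), ENNReal.ofReal_mul (by positivity),
            ENNReal.ofReal_pow (by positivity)]
          ring
  calc _ ≤ ∑' k : ℕ, C₁ * C₂ * ENNReal.ofReal (4 ^ m) * Λ * ENNReal.ofReal X * d ^ k :=
        (hshell q f x r hq hf hr y hy).trans (ENNReal.tsum_le_tsum hterm)
    _ = _ := by
        rw [ENNReal.tsum_mul_left]
        ring

/-! ### Morrey norms -/

lemma lintegral_div_rpow_le_one {β : Type*} [MeasurableSpace β] {μ : Measure β} {P : β → ℝ}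
    (hP : ∀ x, 1 ≤ P x) {C : ℝ≥0∞} (hC : 1 ≤ C) (hCt : C ≠ ∞) {g : β → ℝ≥0∞}
    (h : ∫⁻ x, g x ^ P x ∂μ ≤ C) : ∫⁻ x, (g x / C) ^ P x ∂μ ≤ 1 := by
  have hC0 : C ≠ 0 := (zero_lt_one.trans_le hC).ne'
  calc ∫⁻ x, (g x / C) ^ P x ∂μ ≤ ∫⁻ x, C⁻¹ * g x ^ P x ∂μ := by
        refine lintegral_mono fun x => ?_
        rw [ENNReal.div_rpow_of_nonneg _ _ (zero_le_one.trans (hP x)), div_eq_mul_inv, mul_comm]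
        gcongr
        simpa using ENNReal.rpow_le_rpow_of_exponent_le hC (hP x)
    _ = C⁻¹ * ∫⁻ x, g x ^ P x ∂μ := lintegral_const_mul' _ _ (ENNReal.inv_ne_top.2 hC0)
    _ ≤ C⁻¹ * C := by gcongr
    _ = 1 := ENNReal.inv_mul_cancel hC0 hCt

lemma lconv_div (f g : Rn n → ℝ≥0∞) {c : ℝ≥0∞} (hc : c ≠ 0) (x : Rn n) :
    lconv f (fun y => g y / c) x = lconv f g x / c := by
  simp only [lconv, div_eq_mul_inv, ← mul_assoc]
  rw [lintegral_mul_const' _ _ (ENNReal.inv_ne_top.2 hc)]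

lemma lconv_indicator_add_compl {f g : Rn n → ℝ≥0∞} (hf : Measurable f) (hg : Measurable g)
    {s : Set (Rn n)} (hs : MeasurableSet s) (x : Rn n) :
    lconv f (s.indicator g) x + lconv f (sᶜ.indicator g) x = lconv f g x := by
  have hmeas : Measurable fun y => f (x - y) * s.indicator g y :=
    (hf.comp (measurable_const.sub measurable_id)).mul (hg.indicator hs)
  simp only [lconv]
  rw [← lintegral_add_left hmeas]
  simp only [← mul_add]
  exact lintegral_congr fun y => by rw [← Pi.add_apply, Set.indicator_self_add_compl]

lemma lqSum_div {r : ℝ} (hr : 0 < r) (a : ℕ → ℝ≥0∞) (c : ℝ≥0∞) :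
    lqSum r (fun ν => a ν / c) = lqSum r a / c := by
  simp only [div_eq_mul_inv, mul_comm _ c⁻¹, lqSum_const_mul hr]

lemma lqSum_indicator {β : Type*} {q : β → ℝ} (f : ℕ → β → ℝ≥0∞) {x : β} (hq : 0 < q x)
    (s : Set β) : lqSum (q x) (fun ν => s.indicator (f ν) x) =
      s.indicator (fun x => lqSum (q x) fun ν => f ν x) x := by
  by_cases hx : x ∈ s <;> simp [lqSum, hx, hq]

lemma LogExponent.exists_lintegral_lqSum_lconv_indicator_div_rpow_le {P q : Rn n → ℝ}
    {Pinf K m : ℝ} (hP : LogExponent P Pinf) (hqm : Measurable q) (hosc : ∀ α, CellOsc α q K)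
    (hq : ∀ x, 1 ≤ q x) (hm : (n : ℝ) < m) :
    ∃ C : ℝ≥0∞, C ≠ ∞ ∧ ∀ (f : ℕ → Rn n → ℝ≥0∞) (s : Set (Rn n)) (Λ : ℝ≥0∞),
      (∀ ν, Measurable (f ν)) → MeasurableSet s → Λ ≠ 0 →
      ∫⁻ x in s, (lqSum (q x) (fun ν => f ν x) / Λ) ^ P x ≤ 1 →
        ∫⁻ x, (lqSum (q x) (fun ν => lconv (etaK ν m) (s.indicator (f ν)) x) / Λ) ^ P x ≤ C := by
  obtain ⟨C, hC, hle⟩ := hP.exists_lintegral_lqSum_lconv_rpow_le hqm hosc hq hm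
  refine ⟨C, hC, fun f s Λ hf hs hΛ h => ?_⟩
  have hq0 : ∀ x, 0 < q x := fun x => zero_lt_one.trans_le (hq x)
  have hnorm : ∫⁻ x, lqSum (q x) (fun ν => s.indicator (f ν) x / Λ) ^ P x ≤ 1 := by
    refine le_of_eq_of_le ?_ h
    rw [← lintegral_indicator hs]
    refine lintegral_congr fun x => ?_
    rw [lqSum_div (hq0 x), lqSum_indicator f (hq0 x)]
    by_cases hx : x ∈ s <;> simp [hx, zero_lt_one.trans (hP.one_lt x)]
  refine le_of_eq_of_le (lintegral_congr fun x => ?_)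
    (hle (fun ν x => s.indicator (f ν) x / Λ) (fun ν => ((hf ν).indicator hs).div_const Λ) hnorm)
  rw [← lqSum_div (hq0 x)]
  simp only [lconv_div _ _ hΛ]

lemma ofReal_two_mul_rpow_le {r e : ℝ} {d : ℕ} (hr : 0 < r) (he : e ≤ d) :
    ENNReal.ofReal ((2 * r) ^ e) ≤ 2 ^ d * ENNReal.ofReal (r ^ e) := by
  rw [Real.mul_rpow zero_le_two hr.le, ENNReal.ofReal_mul (by positivity)]
  gcongr
  calc ENNReal.ofReal (2 ^ e) ≤ ENNReal.ofReal (2 ^ (d : ℝ)) := by gcongr; exact one_le_two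
    _ = 2 ^ d := by rw [Real.rpow_natCast, ENNReal.ofReal_pow zero_le_two, ENNReal.ofReal_ofNat]

lemma lqSum_lconv_le_add {q : Rn n → ℝ} {f : ℕ → Rn n → ℝ≥0∞} (hf : ∀ ν, Measurable (f ν)) (m : ℝ)
    {s : Set (Rn n)} (hs : MeasurableSet s) {y : Rn n} (hq : 1 ≤ q y) :
    lqSum (q y) (fun ν => lconv (etaK ν m) (f ν) y) ≤
      lqSum (q y) (fun ν => lconv (etaK ν m) (s.indicator (f ν)) y) +
        lqSum (q y) (fun ν => lconv (etaK ν m) (sᶜ.indicator (f ν)) y) := by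
  simp only [← fun ν => lconv_indicator_add_compl (measurable_etaK ν m) (hf ν) hs y]
  exact lqSum_add_le hq _ _

lemma LogExponent.exists_setLIntegral_ball_rpow_le_of_le_add {P : Rn n → ℝ} {Pinf : ℝ}
    (hP : LogExponent P Pinf) :
    ∃ A B : ℝ≥0∞, A ≠ ∞ ∧ B ≠ ∞ ∧ ∀ (x : Rn n) (r : ℝ), 0 < r → ∀ F F₁ : Rn n → ℝ≥0∞,
      Measurable F₁ →
      (∀ y ∈ Metric.ball x r, F y ≤ F₁ y + ENNReal.ofReal (ballScale P Pinf x r)⁻¹) →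
        ∫⁻ y in Metric.ball x r, F y ^ P y ≤ A * ((∫⁻ y, F₁ y ^ P y) + B) := by
  obtain ⟨b, hPb⟩ := hP.bddAbove
  obtain ⟨B, hB, hscale⟩ := hP.exists_setLIntegral_ball_inv_ballScale_rpow_le
  have hP1 : ∀ x, 1 ≤ P x := fun x => (hP.one_lt x).le
  have : 0 ≤ b := (zero_le_one.trans (hP1 0)).trans (hPb 0)
  refine ⟨2 ^ b, B, by finiteness, hB, fun x r hr F F₁ hF₁ hF => ?_⟩
  set ψ := ENNReal.ofReal (ballScale P Pinf x r)⁻¹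
  calc ∫⁻ y in Metric.ball x r, F y ^ P y
      ≤ ∫⁻ y in Metric.ball x r, (F₁ y + ψ) ^ P y :=
        setLIntegral_mono' measurableSet_ball fun y hy =>
          ENNReal.rpow_le_rpow (hF y hy) (zero_le_one.trans (hP1 y))
    _ ≤ 2 ^ b * ((∫⁻ y in Metric.ball x r, F₁ y ^ P y) +
          ∫⁻ y in Metric.ball x r, ψ ^ P y) :=
        lintegral_add_rpow_le hP.measurable hP1 hPb hF₁ measurable_const
    _ ≤ 2 ^ b * ((∫⁻ y, F₁ y ^ P y) + B) := by
        gcongr 2 ^ b * (?_ + ?_)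
        exacts [setLIntegral_le_lintegral _ _, hscale x r hr]

lemma LogExponent.exists_setLIntegral_ball_lqSum_lconv_div_rpow_le {P q : Rn n → ℝ}
    {Pinf K m δ : ℝ} (hP : LogExponent P Pinf) (hqm : Measurable q) (hosc : ∀ α, CellOsc α q K)
    (hq : ∀ x, 1 ≤ q x) (hn : n ≠ 0) (hm : (n : ℝ) < m) (hδ : 0 < δ) :
    ∃ C D : ℝ≥0∞, C ≠ ∞ ∧ D ≠ 0 ∧ D ≠ ∞ ∧ ∀ (v : Rn n → ℝ) (f : ℕ → Rn n → ℝ≥0∞) (Λ : ℝ≥0∞),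
      (∀ ν, Measurable (f ν)) → (∀ x, δ ≤ n * v x) →
      (∀ x, n * (1 / P x - v x) - n / Pinf ≤ m - n - δ) → Λ ≠ 0 → Λ ≠ ∞ →
        MorreyBound P v Λ (fun x => lqSum (q x) fun ν => f ν x) → ∀ (x : Rn n) (r : ℝ), 0 < r →
          ∫⁻ y in Metric.ball x r, (lqSum (q y) (fun ν => lconv (etaK ν m) (f ν) y) /
            (D * (Λ * ENNReal.ofReal (r ^ (n * (1 / P x - v x) : ℝ))))) ^ P y ≤ C := by
  obtain ⟨C₁, hC₁, hlocal⟩ :=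
    hP.exists_lintegral_lqSum_lconv_indicator_div_rpow_le hqm hosc hq hm
  obtain ⟨C₂, hC₂, htail⟩ := hP.exists_lqSum_lconv_etaK_indicator_compl_ball_le hn hm hδ
  obtain ⟨A, B, hA, hB, hadd⟩ := hP.exists_setLIntegral_ball_rpow_le_of_le_add
  refine ⟨A * (C₁ + B), 2 ^ n + C₂, by finiteness, by simp, by finiteness,
    fun v f Λ hf hv hσ hΛ0 hΛt hG x r hr => ?_⟩
  set e : ℝ := n * (1 / P x - v x)
  have he : e ≤ n := by
    have : n * (1 / P x) ≤ n := mul_le_of_le_one_right n.cast_nonneg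
      ((div_le_one₀ (zero_lt_one.trans (hP.one_lt x))).2 (hP.one_lt x).le)
    linarith [hv x, mul_sub (n : ℝ) (1 / P x) (v x)]
  set B₂ := Metric.ball x (2 * r)
  set M := (2 ^ n + C₂) * (Λ * ENNReal.ofReal (r ^ e))
  have hlocal_le : ∫⁻ y, (lqSum (q y) (fun ν => lconv (etaK ν m) (B₂.indicator (f ν)) y) / M) ^ P y
      ≤ C₁ := by
    refine (lintegral_mono fun y => ?_).trans (hlocal f B₂ (Λ * ENNReal.ofReal ((2 * r) ^ e)) hf
      measurableSet_ball (mul_ne_zero hΛ0 (ENNReal.ofReal_pos.2 (by positivity)).ne')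
      (hG x (2 * r) (by positivity)))
    refine ENNReal.rpow_le_rpow (ENNReal.div_le_div_left ?_ _) (zero_le_one.trans (hP.one_lt y).le)
    calc Λ * ENNReal.ofReal ((2 * r) ^ e) ≤ Λ * (2 ^ n * ENNReal.ofReal (r ^ e)) :=
          mul_le_mul_right (ofReal_two_mul_rpow_le hr he) _
      _ ≤ M := (mul_left_comm _ _ _).trans_le (mul_le_mul_left le_self_add _)
  refine (hadd x r hr _ _ ((measurable_lqSum hqm fun ν => measurable_lconv (measurable_etaK ν m)
    ((hf ν).indicator (s := B₂) measurableSet_ball)).div_const M) fun y hy => ?_).trans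
      (mul_le_mul_right (add_le_add_left hlocal_le _) _)
  refine (ENNReal.div_le_div_right
    (lqSum_lconv_le_add hf m (s := B₂) measurableSet_ball (hq y)) M).trans ?_
  rw [ENNReal.add_div]
  refine add_le_add_right (ENNReal.div_le_of_le_mul' ?_) _
  refine (htail q v f Λ hqm hq hf hv hσ hΛ0 hΛt hG x r hr y hy).trans ?_
  rw [ENNReal.ofReal_mul (by positivity), ← mul_assoc, mul_assoc C₂]
  exact mul_le_mul_left (mul_le_mul_left le_add_self _) _

theorem LogExponent.exists_morreyBound_lqSum_lconv {P q : Rn n → ℝ} {Pinf K m δ : ℝ}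
    (hP : LogExponent P Pinf) (hqm : Measurable q) (hosc : ∀ α, CellOsc α q K)
    (hq : ∀ x, 1 ≤ q x) (hn : n ≠ 0) (hm : (n : ℝ) < m) (hδ : 0 < δ) :
    ∃ C : ℝ≥0∞, C ≠ 0 ∧ C ≠ ∞ ∧ ∀ (v : Rn n → ℝ) (f : ℕ → Rn n → ℝ≥0∞) (Λ : ℝ≥0∞),
      (∀ ν, Measurable (f ν)) → (∀ x, δ ≤ n * v x) →
      (∀ x, n * (1 / P x - v x) - n / Pinf ≤ m - n - δ) → Λ ≠ 0 → Λ ≠ ∞ →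
        MorreyBound P v Λ (fun x => lqSum (q x) fun ν => f ν x) →
          MorreyBound P v (C * Λ)
            (fun x => lqSum (q x) fun ν => lconv (etaK ν m) (f ν) x) := by
  obtain ⟨C, D, hC, hD0, hDt, hle⟩ :=
    hP.exists_setLIntegral_ball_lqSum_lconv_div_rpow_le hqm hosc hq hn hm hδ
  have hC1 : 1 + C ≠ ∞ := by finiteness
  refine ⟨D * (1 + C), mul_ne_zero hD0 (by simp), by finiteness,
    fun v f Λ hf hv hσ hΛ0 hΛt hG x r hr => ?_⟩
  refine le_of_eq_of_le (lintegral_congr fun y => ?_) (lintegral_div_rpow_le_one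
    (fun y => (hP.one_lt y).le) le_self_add hC1
      ((hle v f Λ hf hv hσ hΛ0 hΛt hG x r hr).trans le_add_self))
  congr 1
  simp only [div_eq_mul_inv (G := ℝ≥0∞)]
  rw [mul_assoc (lqSum _ _), ← ENNReal.mul_inv (.inr hC1) (.inr (by simp))]
  congr 2
  ring

/-! ### Exponents given through their reciprocals -/

lemma abs_inv_sub_inv_le {β s t : ℝ} (hβ : 0 < β) (hs : β ≤ s) (ht : β ≤ t) :
    |s⁻¹ - t⁻¹| ≤ |s - t| / β ^ 2 := by
  have hs0 : 0 < s := hβ.trans_le hs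
  have ht0 : 0 < t := hβ.trans_le ht
  rw [inv_sub_inv hs0.ne' ht0.ne', abs_div, abs_sub_comm, abs_of_pos (mul_pos hs0 ht0), sq]
  gcongr

section Inv

variable {g : Rn n → ℝ} {gInf c β : ℝ}

lemma LocLogHolder.inv (h : LocLogHolder g) (hβ : 0 < β) (hg : ∀ x, β ≤ g x) :
    LocLogHolder fun x => (g x)⁻¹ := by
  obtain ⟨c, hc, h⟩ := h
  refine ⟨c / β ^ 2, by positivity, fun x y => (abs_inv_sub_inv_le hβ (hg x) (hg y)).trans ?_⟩
  rw [div_right_comm]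
  gcongr
  exact h x y

lemma LogDecay.inv (h : LogDecay g gInf c) (hβ : 0 < β) (hg : ∀ x, β ≤ g x) (hInf : β ≤ gInf) :
    LogDecay (fun x => (g x)⁻¹) gInf⁻¹ (c / β ^ 2) := by
  refine fun x => (abs_inv_sub_inv_le hβ (hg x) hInf).trans ?_
  rw [div_right_comm]
  gcongr
  exact h x

lemma LogDecay.abs_sub_le (h : LogDecay g gInf c) (x : Rn n) : |g x - gInf| ≤ c := by
  have hlog := one_le_log_exp_add (norm_nonneg x)
  exact (le_mul_of_one_le_right (abs_nonneg _) hlog).trans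
    ((le_div_iff₀ (zero_lt_one.trans_le hlog)).1 (h x))

lemma LogDecay.tendsto (h : LogDecay g gInf c) :
    Filter.Tendsto g (Bornology.cobounded (Rn n)) (nhds gInf) := by
  rw [tendsto_iff_dist_tendsto_zero]
  refine squeeze_zero (fun x => dist_nonneg) h (Filter.Tendsto.const_div_atTop ?_ c)
  exact Real.tendsto_log_atTop.comp
    (Filter.tendsto_atTop_add_const_left _ _ tendsto_norm_cobounded_atTop)

lemma LogDecay.mem_of_isClosed (h : LogDecay g gInf c) (hn : n ≠ 0) {s : Set ℝ}
    (hs : IsClosed s) (hg : ∀ x, g x ∈ s) : gInf ∈ s := by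
  have : Nonempty (Fin n) := Fin.pos_iff_nonempty.1 (Nat.pos_of_ne_zero hn)
  exact hs.mem_of_tendsto h.tendsto (.of_forall hg)

end Inv

section IsPLogWith

variable {p u : Rn n → ℝ≥0∞} {pinvInf : ℝ}

lemma IsPLogWith.inv_toReal_mem_Icc (hp : IsPLogWith p pinvInf) (x : Rn n) :
    (p x)⁻¹.toReal ∈ Set.Icc (essSup p volume)⁻¹.toReal (essInf p volume)⁻¹.toReal := by
  have hA : (essInf p volume)⁻¹ ≠ ∞ := ENNReal.inv_ne_top.2 hp.1.2.2.ne'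
  set I := Set.Icc (essSup p volume)⁻¹.toReal (essInf p volume)⁻¹.toReal
  have hae : ∀ᵐ x, (p x)⁻¹.toReal ∈ I := by
    filter_upwards [ae_essInf_le (f := p), ENNReal.ae_le_essSup p] with y hle hge
    have hinv : (p y)⁻¹ ≤ (essInf p volume)⁻¹ := ENNReal.inv_le_inv.2 hle
    exact ⟨ENNReal.toReal_mono (ne_top_of_le_ne_top hA hinv) (ENNReal.inv_le_inv.2 hge),
      ENNReal.toReal_mono hA hinv⟩
  have hclosed : IsClosed {x | (p x)⁻¹.toReal ∈ I} := isClosed_Icc.preimage hp.2.1.continuous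
  exact hclosed.closure_subset (Measure.dense_of_ae hae x)

lemma IsPLogWith.toReal_inv_essSup_pos (hp : IsPLogWith p pinvInf) (hsup : essSup p volume < ∞) :
    0 < (essSup p volume)⁻¹.toReal :=
  ENNReal.toReal_pos (ENNReal.inv_ne_zero.2 hsup.ne)
    (ENNReal.inv_ne_top.2 (hp.1.2.2.trans_le Filter.liminf_le_limsup).ne')

lemma IsPLogWith.locLogHolder_toReal (hp : IsPLogWith p pinvInf) (hsup : essSup p volume < ∞) :
    LocLogHolder fun x => (p x).toReal := by
  simpa only [ENNReal.toReal_inv, inv_inv] using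
    hp.2.1.inv (hp.toReal_inv_essSup_pos hsup) fun x => (hp.inv_toReal_mem_Icc x).1

lemma IsPLogWith.exists_logDecay_toReal (hp : IsPLogWith p pinvInf) (hn : n ≠ 0)
    (hsup : essSup p volume < ∞) : ∃ c, LogDecay (fun x => (p x).toReal) pinvInf⁻¹ c := by
  obtain ⟨c, -, hc⟩ := hp.2.2
  have hInf := hc.mem_of_isClosed hn isClosed_Icc hp.inv_toReal_mem_Icc
  have h := hc.inv (hp.toReal_inv_essSup_pos hsup) (fun x => (hp.inv_toReal_mem_Icc x).1) hInf.1
  exact ⟨_, by simpa only [ENNReal.toReal_inv, inv_inv] using h⟩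

lemma IsPLogWith.toReal_essInf_le (hp : IsPLogWith p pinvInf) (hsup : essSup p volume < ∞)
    (x : Rn n) : (essInf p volume).toReal ≤ (p x).toReal := by
  have h := inv_anti₀ ((hp.toReal_inv_essSup_pos hsup).trans_le (hp.inv_toReal_mem_Icc x).1)
    (hp.inv_toReal_mem_Icc x).2
  simpa only [ENNReal.toReal_inv, inv_inv] using h

lemma IsPLogWith.toReal_le_essSup (hp : IsPLogWith p pinvInf) (hsup : essSup p volume < ∞)
    (x : Rn n) : (p x).toReal ≤ (essSup p volume).toReal := by
  have h := inv_anti₀ (hp.toReal_inv_essSup_pos hsup) (hp.inv_toReal_mem_Icc x).1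
  simpa only [ENNReal.toReal_inv, inv_inv] using h

lemma IsPLogWith.logExponent (hp : IsPLogWith p pinvInf) (hn : n ≠ 0)
    (hinf : 1 < essInf p volume) (hsup : essSup p volume < ∞) :
    LogExponent (fun x => (p x).toReal) pinvInf⁻¹ := by
  have hinf_top : essInf p volume ≠ ∞ := (lt_of_le_of_lt Filter.liminf_le_limsup hsup).ne
  have hinf' : 1 < (essInf p volume).toReal := by
    simpa using (ENNReal.toReal_lt_toReal one_ne_top hinf_top).2 hinf
  obtain ⟨c, -, hc⟩ := hp.2.2
  have hInf := hc.mem_of_isClosed hn isClosed_Icc hp.inv_toReal_mem_Icc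
  refine ⟨⟨_, hinf', hp.toReal_essInf_le hsup⟩, ⟨_, hp.toReal_le_essSup hsup⟩, ?_,
    hp.locLogHolder_toReal hsup, hp.exists_logDecay_toReal hn hsup⟩
  refine (one_lt_inv₀ ((hp.toReal_inv_essSup_pos hsup).trans_le hInf.1)).2 (hInf.2.trans_lt ?_)
  rw [ENNReal.toReal_inv]
  exact inv_lt_one_of_one_lt₀ hinf'

lemma cpu_le_of_logDecay {c : ℝ} (h : LogDecay (fun x => (p x)⁻¹.toReal) pinvInf c) :
    cpu p u pinvInf ≤ c := by
  refine max_le ((abs_nonneg _).trans (h.abs_sub_le 0)) (sub_le_iff_le_add.2 (ciSup_le fun x => ?_))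
  linarith [le_of_abs_le (h.abs_sub_le x), (u x)⁻¹.toReal_nonneg]

lemma inv_toReal_sub_sub_le_cpu {c : ℝ} (h : LogDecay (fun x => (p x)⁻¹.toReal) pinvInf c)
    (x : Rn n) : (p x)⁻¹.toReal - (u x)⁻¹.toReal - pinvInf ≤ cpu p u pinvInf := by
  have hbdd : BddAbove (Set.range fun x => (p x)⁻¹.toReal - (u x)⁻¹.toReal) := by
    refine ⟨pinvInf + c, Set.forall_mem_range.2 fun y => ?_⟩
    linarith [le_of_abs_le (h.abs_sub_le y), (u y)⁻¹.toReal_nonneg]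
  exact (sub_le_sub_right (le_ciSup hbdd x) _).trans (le_max_right _ _)

end IsPLogWith

/-! ### From modulars to norms -/

section Norm

variable {p u : Rn n → ℝ≥0∞}

lemma modularVE_indicator_div (hp : ∀ x, 0 < (p x).toReal) (g : Rn n → ℝ≥0∞) (Λ : ℝ≥0∞)
    {s : Set (Rn n)} (hs : MeasurableSet s) :
    modularVE p (fun x => s.indicator g x / Λ) = ∫⁻ x in s, (g x / Λ) ^ (p x).toReal := by
  rw [modularVE, ← lintegral_indicator hs]
  refine lintegral_congr fun x => ?_
  have hpt : p x ≠ ∞ := (ENNReal.toReal_pos_iff.1 (hp x)).2.ne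
  by_cases hx : x ∈ s <;> simp [phiVE, hpt, hx, hp x]

lemma modularVE_div_le_one_of_vLpNorm_lt (hp : ∀ x, 0 < (p x).toReal) {g : Rn n → ℝ≥0∞}
    {Λ : ℝ≥0∞} (h : vLpNorm p g < Λ) : modularVE p (fun x => g x / Λ) ≤ 1 := by
  obtain ⟨Λ', hΛ', hlt⟩ := sInf_lt_iff.1 h
  refine le_trans (lintegral_mono fun x => ?_) hΛ'
  simp only [phiVE, if_neg (ENNReal.toReal_pos_iff.1 (hp x)).2.ne]
  exact ENNReal.rpow_le_rpow (ENNReal.div_le_div_left hlt.le _) (hp x).le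

lemma ofReal_rpow_mul_ofReal_rpow_neg {r : ℝ} (hr : 0 < r) (a : ℝ) :
    ENNReal.ofReal (r ^ a) * ENNReal.ofReal (r ^ (-a)) = 1 := by
  rw [← ENNReal.ofReal_mul (by positivity), ← Real.rpow_add hr, add_neg_cancel, Real.rpow_zero,
    ENNReal.ofReal_one]

lemma morreyBound_toReal_iff (hp : ∀ x, 0 < (p x).toReal) {g : Rn n → ℝ≥0∞} {Λ : ℝ≥0∞} :
    MorreyBound (fun x => (p x).toReal) (fun x => (u x)⁻¹.toReal) Λ g ↔
      ∀ x r, 0 < r → modularVE p (fun y => (Metric.ball x r).indicator g y /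
        (Λ * ENNReal.ofReal (r ^ (-(n * ((u x)⁻¹.toReal - (p x)⁻¹.toReal)) : ℝ)))) ≤ 1 := by
  refine forall₃_congr fun x r _ => ?_
  rw [modularVE_indicator_div hp g _ Metric.isOpen_ball.measurableSet, ← mul_neg, neg_sub,
    ENNReal.toReal_inv (p x), one_div]

lemma morreyBound_of_morreyNorm_lt (hp : ∀ x, 0 < (p x).toReal) {g : Rn n → ℝ≥0∞} {Λ : ℝ≥0∞}
    (h : morreyNorm p u g < Λ) :
    MorreyBound (fun x => (p x).toReal) (fun x => (u x)⁻¹.toReal) Λ g := by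
  refine (morreyBound_toReal_iff hp).2 fun x r hr => modularVE_div_le_one_of_vLpNorm_lt hp ?_
  have hlt : ENNReal.ofReal (r ^ (n * ((u x)⁻¹.toReal - (p x)⁻¹.toReal) : ℝ)) *
      vLpNorm p ((Metric.ball x r).indicator g) < Λ := by
    refine lt_of_le_of_lt ?_ h
    exact le_iSup_of_le x (le_iSup_of_le r (le_iSup_of_le hr le_rfl))
  set e : ℝ := n * ((u x)⁻¹.toReal - (p x)⁻¹.toReal)
  calc vLpNorm p ((Metric.ball x r).indicator g)
      = ENNReal.ofReal (r ^ e) * vLpNorm p ((Metric.ball x r).indicator g) *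
          ENNReal.ofReal (r ^ (-e)) := by
        rw [mul_right_comm, ofReal_rpow_mul_ofReal_rpow_neg hr, one_mul]
    _ < Λ * ENNReal.ofReal (r ^ (-e)) :=
        ENNReal.mul_lt_mul_left (ENNReal.ofReal_pos.2 (by positivity)).ne' (by simp) hlt

lemma morreyNorm_le_of_morreyBound (hp : ∀ x, 0 < (p x).toReal) {g : Rn n → ℝ≥0∞} {Λ : ℝ≥0∞}
    (h : MorreyBound (fun x => (p x).toReal) (fun x => (u x)⁻¹.toReal) Λ g) :
    morreyNorm p u g ≤ Λ := by
  refine iSup_le fun x => iSup₂_le fun r hr => ?_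
  refine (mul_le_mul_right (sInf_le (a := Λ * _) ((morreyBound_toReal_iff hp).1 h x r hr))
    _).trans_eq ?_
  rw [mul_left_comm, ofReal_rpow_mul_ofReal_rpow_neg hr, mul_one]

lemma morreyNorm_le_mul_of_forall_morreyBound (hp : ∀ x, 0 < (p x).toReal) {C : ℝ≥0∞}
    (hC0 : C ≠ 0) (hCt : C ≠ ∞) {g G : Rn n → ℝ≥0∞}
    (h : ∀ Λ : ℝ≥0∞, Λ ≠ 0 → Λ ≠ ∞ →
      MorreyBound (fun x => (p x).toReal) (fun x => (u x)⁻¹.toReal) Λ g →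
        MorreyBound (fun x => (p x).toReal) (fun x => (u x)⁻¹.toReal) (C * Λ) G) :
    morreyNorm p u G ≤ C * morreyNorm p u g := by
  refine (ENNReal.div_le_iff' hC0 hCt).1 (le_of_forall_gt_imp_ge_of_dense fun Λ hΛ => ?_)
  rcases eq_or_ne Λ ∞ with rfl | hΛt
  · exact le_top
  exact (ENNReal.div_le_iff' hC0 hCt).2 (morreyNorm_le_of_morreyBound hp
    (h Λ (pos_of_gt hΛ).ne' hΛt (morreyBound_of_morreyNorm_lt hp hΛ)))

end Norm

lemma lqNorm_eq_lqSum {q : ℝ≥0∞} (hq : 0 < q.toReal) (a : ℕ → ℝ≥0∞) :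
    lqNorm q a = lqSum q.toReal a :=
  if_neg (ENNReal.toReal_pos_iff.1 hq).2.ne

lemma lconv_etaK_of_zero (ν : ℕ) (m : ℝ) (f : Rn 0 → ℝ≥0∞) : lconv (etaK ν m) f = f := by
  funext x
  rw [lconv, volume_euclideanSpace_eq_dirac, lintegral_dirac, Subsingleton.elim x 0]
  simp [etaK]

theorem statement3_general {p q u : Rn n → ℝ≥0∞} {pinvInf m : ℝ} (hp : IsPLogWith p pinvInf)
    (hq : IsPLog q) (hu : ∀ x, 0 < u x) (hpm : 1 < essInf p (volume : Measure (Rn n)))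
    (hpp : essSup p (volume : Measure (Rn n)) < ∞) (husup : (⨆ x : Rn n, u x) < ∞)
    (hqm : 1 ≤ essInf q (volume : Measure (Rn n)))
    (hqp : essSup q (volume : Measure (Rn n)) < ∞) (hm : n * (1 + cpu p u pinvInf) < m) :
    ∃ c : ℝ, 0 < c ∧ ∀ f : ℕ → Rn n → ℝ≥0∞, (∀ ν, Measurable (f ν)) →
      morreySeqNorm p u q (fun ν => lconv (etaK ν m) (f ν)) ≤
        ENNReal.ofReal c * morreySeqNorm p u q f := by
  rcases eq_or_ne n 0 with rfl | hn
  · exact ⟨1, one_pos, fun f _ => by simp [lconv_etaK_of_zero]⟩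
  obtain ⟨c, -, hpdec⟩ := hp.2.2
  obtain ⟨qinvInf, hq⟩ := hq
  have hP := hp.logExponent hn hpm hpp
  have hP0 : ∀ x, 0 < (p x).toReal := fun x => zero_lt_one.trans (hP.one_lt x)
  obtain ⟨_, hqdec⟩ := hq.exists_logDecay_toReal hn hqp
  obtain ⟨K, hosc⟩ := exists_cellOsc (hq.locLogHolder_toReal hqp) hqdec
  have hq1 : ∀ x, 1 ≤ (q x).toReal := fun x => by
    simpa using (ENNReal.toReal_mono (lt_of_le_of_lt Filter.liminf_le_limsup hqp).ne hqm).trans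
      (hq.toReal_essInf_le hqp x)
  have hU : 0 < n * (⨆ x, u x)⁻¹.toReal := mul_pos (by positivity) (ENNReal.toReal_pos
    (ENNReal.inv_ne_zero.2 husup.ne) (ENNReal.inv_ne_top.2 ((hu 0).trans_le (le_iSup u 0)).ne'))
  have hcpu : 0 ≤ n * cpu p u pinvInf := mul_nonneg n.cast_nonneg (le_max_left _ _)
  have hnm : n < m := by linarith [mul_one_add (n : ℝ) (cpu p u pinvInf)]
  set δ := min (n * (⨆ x, u x)⁻¹.toReal) (m - n * (1 + cpu p u pinvInf))
  have hv : ∀ x, δ ≤ n * (u x)⁻¹.toReal := fun x => (min_le_left _ _).trans <| by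
    gcongr
    exacts [ENNReal.inv_ne_top.2 (hu x).ne', le_iSup u x]
  have hσ : ∀ x, n * (1 / (p x).toReal - (u x)⁻¹.toReal) - n / pinvInf⁻¹ ≤ m - n - δ := fun x => by
    have h := mul_le_mul_of_nonneg_left (inv_toReal_sub_sub_le_cpu (u := u) hpdec x)
      (n.cast_nonneg (α := ℝ))
    rw [ENNReal.toReal_inv (p x)] at h
    rw [div_inv_eq_mul, one_div]
    linarith [min_le_right (n * (⨆ x, u x)⁻¹.toReal) (m - n * (1 + cpu p u pinvInf))]
  obtain ⟨C, hC0, hCt, H⟩ := hP.exists_morreyBound_lqSum_lconv hq.1.1.ennreal_toReal hosc hq1 hn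
    hnm (lt_min hU (sub_pos.2 hm))
  refine ⟨C.toReal, ENNReal.toReal_pos hC0 hCt, fun f hf => ?_⟩
  simp only [morreySeqNorm, lqNorm_eq_lqSum (zero_lt_one.trans_le (hq1 _))]
  rw [ENNReal.ofReal_toReal hCt]
  exact morreyNorm_le_mul_of_forall_morreyBound hP0 hC0 hCt fun Λ => H _ f Λ hf hv hσ

/-- the convolution inequality in variable exponent Morrey spaces,
with the alternative condition `m > n(1 + c_∞(1/p))`. -/
theorem statement3 (n : ℕ) (p q u : Rn n → ℝ≥0∞) (pinvInf cInf : ℝ)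
    (hp : IsPLogWith p pinvInf) (hq : IsPLog q) (hu : IsVarExp u)
    (hcInf : 0 < cInf)
    (hdecay : LogDecay (fun x => (p x)⁻¹.toReal) pinvInf cInf)
    (hpm : 1 < essInf p (volume : Measure (Rn n)))
    (hpu : ∀ᵐ x : Rn n ∂(volume : Measure (Rn n)), p x ≤ u x)
    (husup : (⨆ x : Rn n, u x) < ∞)
    (hqm : 1 < essInf q (volume : Measure (Rn n)))
    (hqp : essSup q (volume : Measure (Rn n)) < ∞)
    (m : ℝ) (hm : (n : ℝ) * (1 + cInf) < m) :
    ∃ c : ℝ, 0 < c ∧ ∀ f : ℕ → Rn n → ℝ≥0∞, (∀ ν, Measurable (f ν)) →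
      morreySeqNorm p u q (fun ν => lconv (etaK ν m) (f ν)) ≤
        ENNReal.ofReal c * morreySeqNorm p u q f := by
  have hpp : essSup p (volume : Measure (Rn n)) < ∞ :=
    (essSup_le_of_ae_le _ (hpu.mono fun x hx => hx.trans (le_iSup u x))).trans_lt husup
  refine statement3_general hp hq hu.2.1 hpm hpp husup hqm.le hqp (lt_of_le_of_lt ?_ hm)
  gcongr
  exact cpu_le_of_logDecay hdecay

end
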